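/- Let F be a number field with ring of integers O_F. Let Ξ_f be a finite set of maximal ideals of O_F, Ξ_∞ a set of real embeddings of F, S a finite set of maximal ideals of O_F, and I a nonzero ideal of O_F not contained in any member of Ξ_f. Then there exist a maximal ideal 𝔮 of O_F with 𝔮 ∉ S ∪ Ξ_f and an element α ∈ Fˣ such that I·𝔮 = α·O_F, α is a square of a unit at every 𝔭 ∈ Ξ_f, σ(α) < 0 for every real embedding σ ∈ Ξ_∞, and σ(α) > 0 for every real embedding σ of F not in Ξ_∞. -/

import Mathlib

/-!
Let `𝔪 = ∏_{𝔭 ∈ Ξf} 𝔭 ^ e`, where `e` is so large that `4 ∉ 𝔭 ^ e` for every `𝔭`. By Hensel's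
lemma every integer congruent to `1` modulo `𝔪` is the square of a unit at each `𝔭 ∈ Ξf`. As `I`
is prime to `𝔪`, it contains some `β ≡ 1` modulo `𝔪` with the prescribed signs at the real places;
write `(β) = I 𝔯`. The narrow ray class of `𝔯` modulo `𝔪` contains infinitely many primes, so
there is a prime `𝔮 ∉ S` in it: `(α₁) 𝔮 = (β₁) 𝔯` with `α₁` and `β₁` totally positive and
congruent to `1` modulo `𝔪`. Then `α = β β₁ / α₁` generates `I 𝔮` and has the required local
behaviour.

The substance is Dirichlet's theorem for narrow ray classes, for which smooth weights replace
class field theory and Hecke's functional equation.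

* Counting. The sum of a smooth compactly supported function over a translate of a lattice,
  dilated by `T`, equals its integral up to `O(T ^ (-k))` for every `k`, after normalization. The
  totally positive units congruent to `1` modulo `𝔪` have a full lattice of logarithms, and a
  smooth partition of unity for that lattice replaces a fundamental domain. Hence the smoothed
  number of ideals of norm about `exp X` in a narrow ray class is `κ exp X + O(exp (-X))`, with
  `κ` independent of the class.
* Nonvanishing. Let `A_χ` be the twist of the counting function by a character `χ ≠ 1`. Its
  smoothed sums decay exponentially in `X`, and their Laplace transform at `1` is a positive
  multiple of `L(1, χ)`. If it vanished, the smoothed sums of `A_χ * A_1` would decay as well, and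
  so would those of `f = A_χ * A_1 * A_χ̄ * A_1`. But the coefficients of `f` are nonnegative, and
  its value at the powers `q ^ i` of a suitable integer `q` is at least a constant times `1 / i`,
  which contradicts the exponential decay.
* Conclusion. Near `1` the `L`-function of `χ ≠ 1` continues analytically, as the quotient of the
  Laplace transform of the smoothed sums by that of the weight, and it does not vanish at `1`. So
  its logarithmic derivative stays bounded as `s → 1⁺`, while that of the trivial character does
  not, and by orthogonality of characters the von Mangoldt function restricted to any class has
  divergent sum `∑ Λ_c(n) / n`. Proper prime powers contribute a convergent sum, and infinitely
  many primes remain.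
-/

open NumberField IsDedekindDomain
open scoped nonZeroDivisors

noncomputable section

namespace PrincipalizationLemma

variable (F : Type*) [Field F] [NumberField F]

/-- `α ∈ Fˣ` is the square of a unit at the finite place `𝔭`, i.e. its image in the
completion `F_𝔭` lies in `(O_𝔭ˣ)²`. -/
def IsUnitSquareAt (α : F) (𝔭 : HeightOneSpectrum (𝓞 F)) : Prop :=
  ∃ y : (𝔭.adicCompletionIntegers F)ˣ,
    (((y : 𝔭.adicCompletionIntegers F) : 𝔭.adicCompletion F)) ^ 2
      = algebraMap F (𝔭.adicCompletion F) α

/-! ### Smooth lattice sums -/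

section LatticeSum

open MeasureTheory Module
open scoped ContDiff

lemma card_Icc_ceil_floor_le (x : ℝ) {r : ℝ} (hr : 0 ≤ r) :
    ((Finset.Icc ⌈x - r⌉ ⌊x + r⌋).card : ℝ) ≤ 2 * r + 1 := by
  have h : ((Finset.Icc ⌈x - r⌉ ⌊x + r⌋).card : ℤ) ≤ max (⌊x + r⌋ + 1 - ⌈x - r⌉) 0 := by
    rw [Int.card_Icc]
    omega
  have h' : ((Finset.Icc ⌈x - r⌉ ⌊x + r⌋).card : ℝ) ≤ max ((⌊x + r⌋ : ℝ) + 1 - ⌈x - r⌉) 0 := by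
    exact_mod_cast h
  refine h'.trans (max_le ?_ (by positivity))
  linarith [Int.floor_le (x + r), Int.le_ceil (x - r)]

lemma abs_sub_le_of_periodic_of_hasDerivAt {f f' : ℝ → ℝ} {B : ℝ} (hf : f.Periodic 1)
    (hf' : ∀ s, HasDerivAt f (f' s) s) (hB : ∀ s s', |f' s - f' s'| ≤ B) (s : ℝ) :
    |f s - f 0| ≤ B := by
  obtain ⟨s₀, -, hs₀⟩ := exists_hasDerivAt_eq_zero one_pos
    (fun s _ => (hf' s).continuousAt.continuousWithinAt) (by simpa using (hf 0).symm)
    fun s _ => hf' s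
  have hf'B (x : ℝ) : ‖f' x‖ ≤ B := by simpa [hs₀] using hB x s₀
  obtain ⟨y, ⟨hy0, hy1⟩, hy⟩ := hf.exists_mem_Ico₀ one_pos s
  have hmv := convex_univ.norm_image_sub_le_of_norm_hasDerivWithin_le (𝕜 := ℝ)
    (fun x _ => (hf' x).hasDerivWithinAt) (fun x _ => hf'B x) (Set.mem_univ 0) (Set.mem_univ y)
  rw [sub_zero, Real.norm_of_nonneg hy0] at hmv
  rw [hy]
  exact hmv.trans (mul_le_of_le_one_right ((norm_nonneg _).trans (hf'B 0)) hy1.le)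

variable {E ι : Type*} [NormedAddCommGroup E] [NormedSpace ℝ E] (b : Basis ι ℝ E)

/-- The sum of `Φ ((v + t) / T)` over the points `v` of the lattice spanned by `b`: a smoothed count
of the lattice points in a large translated body. -/
def latticeSum (Φ : E → ℝ) (T : ℝ) (t : E) : ℝ :=
  ∑' v : Submodule.span ℤ (Set.range b), Φ (T⁻¹ • ((v : E) + t))

lemma latticeSum_add_lattice (Φ : E → ℝ) (T : ℝ) (t : E) (w : Submodule.span ℤ (Set.range b)) :
    latticeSum b Φ T (t + w) = latticeSum b Φ T t := by
  rw [latticeSum, latticeSum, ← (Equiv.addRight w).tsum_eq fun v => Φ (T⁻¹ • ((v : E) + t))]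
  refine tsum_congr fun v => ?_
  simp only [Equiv.coe_addRight, Submodule.coe_add]
  rw [add_assoc, add_comm (w : E)]

lemma periodic_latticeSum (Φ : E → ℝ) (T : ℝ) (t : E) (i : ι) :
    (fun s : ℝ => latticeSum b Φ T (t + s • b i)).Periodic 1 := fun s => by
  simpa [add_smul, add_assoc] using
    latticeSum_add_lattice b Φ T (t + s • b i) ⟨b i, Submodule.subset_span ⟨i, rfl⟩⟩

variable [FiniteDimensional ℝ E]

lemma exists_abs_repr_le : ∃ c : ℝ, 0 ≤ c ∧ ∀ (x : E) (i : ι), |b.repr x i| ≤ c * ‖x‖ := by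
  have := FiniteDimensional.fintypeBasisIndex b
  let f : E →L[ℝ] (ι → ℝ) := LinearMap.toContinuousLinearMap b.equivFun.toLinearMap
  refine ⟨‖f‖, norm_nonneg _, fun x i => ?_⟩
  simpa [f] using (norm_le_pi_norm (f x) i).trans (f.le_opNorm x)

lemma exists_lattice_card_le : ∃ K : ℝ, 0 ≤ K ∧ ∀ R : ℝ, 0 ≤ R → ∀ t : E,
    ∃ s : Finset (Submodule.span ℤ (Set.range b)),
      (∀ v : Submodule.span ℤ (Set.range b), ‖(v : E) + t‖ ≤ R → v ∈ s) ∧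
        (s.card : ℝ) ≤ K * (R + 1) ^ finrank ℝ E := by
  classical
  have := FiniteDimensional.fintypeBasisIndex b
  obtain ⟨c, hc0, hc⟩ := exists_abs_repr_le b
  let e := (b.restrictScalars ℤ).equivFun
  refine ⟨(2 * c + 1) ^ finrank ℝ E, by positivity, fun R hR t => ?_⟩
  let B (i : ι) : Finset ℤ := Finset.Icc ⌈-(b.repr t i) - c * R⌉ ⌊-(b.repr t i) + c * R⌋
  refine ⟨(Fintype.piFinset B).map e.symm.toEquiv.toEmbedding, fun v hv => ?_, ?_⟩
  · refine Finset.mem_map.2 ⟨e v, Fintype.mem_piFinset.2 fun i => ?_, by simp⟩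
    have he : ((e v i : ℤ) : ℝ) = b.repr (v : E) i := by
      simpa [e] using b.restrictScalars_repr_apply ℤ v i
    have hi := (hc ((v : E) + t) i).trans (mul_le_mul_of_nonneg_left hv hc0)
    rw [map_add, Finsupp.add_apply, ← he, abs_le] at hi
    simp only [B, Finset.mem_Icc, Int.ceil_le, Int.le_floor]
    constructor <;> linarith [hi.1, hi.2]
  · calc _ = ∏ i, ((B i).card : ℝ) := by simp
      _ ≤ ∏ _i : ι, (2 * c + 1) * (R + 1) := by
        refine Finset.prod_le_prod (fun _ _ => by positivity) fun i _ => ?_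
        exact (card_Icc_ceil_floor_le _ (by positivity)).trans (by nlinarith)
      _ = (2 * c + 1) ^ finrank ℝ E * (R + 1) ^ finrank ℝ E := by
        rw [Finset.prod_const, Finset.card_univ, ← finrank_eq_card_basis b, mul_pow]

lemma exists_finset_of_lattice {Φ : E → ℝ} (hΦ : HasCompactSupport Φ) {T : ℝ} (hT : 0 < T) (t : E)
    (r : ℝ) :
    ∃ s : Finset (Submodule.span ℤ (Set.range b)), ∀ t', ‖t' - t‖ ≤ r → ∀ v ∉ s,
      Φ (T⁻¹ • ((v : E) + t')) = 0 := by
  obtain ⟨R, hR0, hR⟩ := hΦ.exists_pos_le_norm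
  obtain ⟨K, -, hK⟩ := exists_lattice_card_le b
  obtain ⟨s, hs, -⟩ := hK (T * R + |r|) (by positivity) t
  refine ⟨s, fun t' ht' v => Not.imp_symm fun h => hs v ?_⟩
  have hlt : ‖(v : E) + t'‖ < T * R := by
    contrapose! h
    exact hR _ (by rwa [norm_smul, norm_inv, Real.norm_of_nonneg hT.le, le_inv_mul_iff₀ hT])
  calc ‖(v : E) + t‖ = ‖((v : E) + t') - (t' - t)‖ := by congr 1; abel
    _ ≤ T * R + |r| := (norm_sub_le _ _).trans (add_le_add hlt.le (ht'.trans (le_abs_self r)))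

lemma latticeSum_eventuallyEq_sum {Φ : E → ℝ} (hΦ : HasCompactSupport Φ) {T : ℝ} (hT : 0 < T)
    (t : E) :
    ∃ s : Finset (Submodule.span ℤ (Set.range b)), ∀ s' ⊇ s,
      latticeSum b Φ T =ᶠ[nhds t] fun t' => ∑ v ∈ s', Φ (T⁻¹ • ((v : E) + t')) := by
  obtain ⟨s, hs⟩ := exists_finset_of_lattice b hΦ hT t 1
  refine ⟨s, fun s' hss' => ?_⟩
  filter_upwards [Metric.closedBall_mem_nhds t one_pos] with t' ht'
  exact tsum_eq_sum fun v hv => hs t' (mem_closedBall_iff_norm.1 ht') v fun h => hv (hss' h)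

lemma continuous_latticeSum {Φ : E → ℝ} (hc : Continuous Φ) (hΦ : HasCompactSupport Φ)
    {T : ℝ} (hT : 0 < T) : Continuous (latticeSum b Φ T) := by
  refine continuous_iff_continuousAt.2 fun t => ?_
  obtain ⟨s, hs⟩ := latticeSum_eventuallyEq_sum b hΦ hT t
  exact ContinuousAt.congr (by fun_prop) (hs s subset_rfl).symm

lemma exists_latticeSum_le {Φ : E → ℝ} (hc : Continuous Φ) (hΦ : HasCompactSupport Φ) :
    ∃ C : ℝ, ∀ T : ℝ, 1 ≤ T → ∀ t, |latticeSum b Φ T t| ≤ C * T ^ finrank ℝ E := by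
  obtain ⟨R, hR0, hR⟩ := hΦ.exists_pos_le_norm
  obtain ⟨K, hK0, hK⟩ := exists_lattice_card_le b
  obtain ⟨M, hM⟩ := hc.bounded_above_of_compact_support hΦ
  have hM0 : 0 ≤ M := (norm_nonneg _).trans (hM 0)
  refine ⟨K * (R + 1) ^ finrank ℝ E * M, fun T hT t => ?_⟩
  have hT0 : 0 < T := one_pos.trans_le hT
  obtain ⟨s, hs, hcard⟩ := hK (T * R) (by positivity) t
  have hzero : ∀ v ∉ s, Φ (T⁻¹ • ((v : E) + t)) = 0 := fun v hv => by
    refine hR _ ?_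
    rw [norm_smul, norm_inv, Real.norm_of_nonneg hT0.le, le_inv_mul_iff₀ hT0]
    exact (not_le.1 fun h => hv (hs v h)).le
  calc |latticeSum b Φ T t| = |∑ v ∈ s, Φ (T⁻¹ • ((v : E) + t))| := by
        rw [latticeSum, tsum_eq_sum hzero]
    _ ≤ ∑ _v ∈ s, M := (Finset.abs_sum_le_sum_abs _ _).trans (Finset.sum_le_sum fun v _ => hM _)
    _ = s.card * M := by rw [Finset.sum_const, nsmul_eq_mul]
    _ ≤ K * (T * R + 1) ^ finrank ℝ E * M := by gcongr
    _ ≤ K * (T * (R + 1)) ^ finrank ℝ E * M := by gcongr; linarith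
    _ = K * (R + 1) ^ finrank ℝ E * M * T ^ finrank ℝ E := by rw [mul_pow]; ring

lemma hasDerivAt_latticeSum {Φ : E → ℝ} (hc : ContDiff ℝ 1 Φ) (hΦ : HasCompactSupport Φ)
    {T : ℝ} (hT : 0 < T) (t w : E) (s : ℝ) :
    HasDerivAt (fun s : ℝ => latticeSum b Φ T (t + s • w))
      (T⁻¹ * latticeSum b (fun x => fderiv ℝ Φ x w) T (t + s • w)) s := by
  classical
  obtain ⟨A, hA⟩ := latticeSum_eventuallyEq_sum b hΦ hT (t + s • w)
  obtain ⟨A', hA'⟩ :=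
    latticeSum_eventuallyEq_sum b (hΦ.fderiv_apply (𝕜 := ℝ) w) hT (t + s • w)
  have hline : ContinuousAt (fun s : ℝ => t + s • w) s := by fun_prop
  refine HasDerivAt.congr_of_eventuallyEq ?_
    (hline.eventually (hA (A ∪ A') Finset.subset_union_left))
  rw [(hA' (A ∪ A') Finset.subset_union_right).eq_of_nhds, Finset.mul_sum]
  refine HasDerivAt.fun_sum fun v _ => ?_
  have hinner : HasDerivAt (fun s : ℝ => T⁻¹ • ((v : E) + (t + s • w))) (T⁻¹ • w) s := by
    simpa only [id, one_smul] using
      ((((hasDerivAt_id s).smul_const w).const_add t).const_add (v : E)).fun_const_smul T⁻¹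
  have hcomp := (hc.differentiable one_ne_zero _).hasFDerivAt.comp_hasDerivAt s hinner
  rwa [map_smul, smul_eq_mul] at hcomp

lemma exists_latticeSum_sub_le (i : ι) (k : ℕ) : ∀ {Φ : E → ℝ}, ContDiff ℝ ∞ Φ →
    HasCompactSupport Φ → ∃ C : ℝ, ∀ T : ℝ, 1 ≤ T → ∀ (t : E) (s : ℝ),
      |latticeSum b Φ T (t + s • b i) - latticeSum b Φ T t| ≤
        C * T ^ finrank ℝ E * (T⁻¹) ^ k := by
  induction k with
  | zero =>
    intro Φ hc hΦ
    obtain ⟨C, hC⟩ := exists_latticeSum_le b hc.continuous hΦ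
    refine ⟨C + C, fun T hT t s => (abs_sub _ _).trans ?_⟩
    rw [pow_zero, mul_one, add_mul]
    exact add_le_add (hC T hT _) (hC T hT _)
  | succ k ih =>
    intro Φ hc hΦ
    have hc' : ContDiff ℝ ∞ (fun x => fderiv ℝ Φ x (b i)) :=
      (hc.fderiv_right (m := ∞) (by simp)).clm_apply contDiff_const
    obtain ⟨C, hC⟩ := ih hc' (hΦ.fderiv_apply (𝕜 := ℝ) (b i))
    refine ⟨C, fun T hT t s => ?_⟩
    have hT0 : 0 < T := one_pos.trans_le hT
    have hderiv := hasDerivAt_latticeSum b (hc.of_le (by exact_mod_cast le_top)) hΦ hT0 t (b i)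
    have hosc := abs_sub_le_of_periodic_of_hasDerivAt (periodic_latticeSum b Φ T t i) hderiv
      (B := C * T ^ finrank ℝ E * (T⁻¹) ^ (k + 1)) (fun s s' => ?_) s
    · simpa using hosc
    · have hs := hC T hT (t + s' • b i) (s - s')
      rw [add_assoc, ← add_smul, add_sub_cancel] at hs
      rw [← mul_sub, abs_mul, abs_of_pos (inv_pos.2 hT0), pow_succ, ← mul_assoc, mul_comm]
      gcongr

lemma exists_latticeSum_osc_le (k : ℕ) {Φ : E → ℝ} (hc : ContDiff ℝ ∞ Φ)
    (hΦ : HasCompactSupport Φ) : ∃ C : ℝ, ∀ T : ℝ, 1 ≤ T → ∀ (t t' : E),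
      |latticeSum b Φ T t' - latticeSum b Φ T t| ≤ C * T ^ finrank ℝ E * (T⁻¹) ^ k := by
  classical
  have := FiniteDimensional.fintypeBasisIndex b
  choose C hC using fun i => exists_latticeSum_sub_le b i k hc hΦ
  refine ⟨∑ i, C i, fun T hT t t' => ?_⟩
  have key (s : Finset ι) (c : ι → ℝ) :
      |latticeSum b Φ T (t + ∑ i ∈ s, c i • b i) - latticeSum b Φ T t| ≤
        (∑ i ∈ s, C i) * T ^ finrank ℝ E * (T⁻¹) ^ k := by
    induction s using Finset.induction_on with
    | empty => simp
    | insert i s his ih =>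
      rw [Finset.sum_insert his, Finset.sum_insert his, add_mul, add_mul, add_comm (c i • b i),
        ← add_assoc]
      exact (abs_sub_le _ _ _).trans (add_le_add (hC i T hT _ (c i)) ih)
  simpa only [b.sum_repr, add_sub_cancel] using key Finset.univ (b.repr (t' - t))

variable [MeasurableSpace E] [BorelSpace E] (μ : Measure E) [μ.IsAddHaarMeasure]

lemma integral_latticeSum {Φ : E → ℝ} (hc : Continuous Φ) (hΦ : HasCompactSupport Φ)
    {T : ℝ} (hT : 0 < T) :
    ∫ t in ZSpan.fundamentalDomain b, latticeSum b Φ T t ∂μ = T ^ finrank ℝ E * ∫ x, Φ x ∂μ := by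
  have hinteg : Integrable (fun x => Φ (T⁻¹ • x)) μ :=
    (hc.comp (continuous_const_smul _)).integrable_of_hasCompactSupport
      (hΦ.comp_homeomorph (Homeomorph.smulOfNeZero T⁻¹ (inv_ne_zero hT.ne')))
  have := FiniteDimensional.fintypeBasisIndex b
  have : VAddInvariantMeasure (Submodule.span ℤ (Set.range b)) E μ :=
    ⟨fun c s _ => measure_preimage_add μ (c : E) s⟩
  -- only finitely many lattice translates of the bounded domain meet the support
  obtain ⟨r, hr⟩ := (ZSpan.fundamentalDomain_isBounded b).exists_norm_le
  obtain ⟨A, hA⟩ := exists_finset_of_lattice b hΦ hT (0 : E) r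
  have hA' : ∀ t ∈ ZSpan.fundamentalDomain b, ∀ v ∉ A, Φ (T⁻¹ • ((v : E) + t)) = 0 :=
    fun t ht => hA t (by simpa using hr t ht)
  calc ∫ t in ZSpan.fundamentalDomain b, latticeSum b Φ T t ∂μ
      = ∫ t in ZSpan.fundamentalDomain b, ∑ v ∈ A, Φ (T⁻¹ • ((v : E) + t)) ∂μ :=
        setIntegral_congr_fun (ZSpan.fundamentalDomain_measurableSet b)
          fun t ht => tsum_eq_sum (hA' t ht)
    _ = ∑ v ∈ A, ∫ t in ZSpan.fundamentalDomain b, Φ (T⁻¹ • ((v : E) + t)) ∂μ :=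
        integral_finsetSum _ fun v _ => (hinteg.comp_add_left (v : E)).integrableOn
    _ = ∑' v : Submodule.span ℤ (Set.range b),
          ∫ t in ZSpan.fundamentalDomain b, Φ (T⁻¹ • ((v : E) + t)) ∂μ :=
        (tsum_eq_sum fun v hv =>
          setIntegral_eq_zero_of_forall_eq_zero fun t ht => hA' t ht v hv).symm
    _ = ∫ x, Φ (T⁻¹ • x) ∂μ := ((ZSpan.isAddFundamentalDomain b μ).integral_eq_tsum'' _ hinteg).symm
    _ = T ^ finrank ℝ E * ∫ x, Φ x ∂μ := by
        rw [Measure.integral_comp_inv_smul, smul_eq_mul, abs_of_pos (by positivity)]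

theorem exists_latticeSum_sub_integral_le (k : ℕ) {Φ : E → ℝ} (hc : ContDiff ℝ ∞ Φ)
    (hΦ : HasCompactSupport Φ) : ∃ C : ℝ, ∀ T : ℝ, 1 ≤ T → ∀ (t : E),
      |latticeSum b Φ T t -
        T ^ finrank ℝ E * (∫ x, Φ x ∂μ) / μ.real (ZSpan.fundamentalDomain b)| ≤
        C * (T⁻¹) ^ k := by
  obtain ⟨C, hC⟩ := exists_latticeSum_osc_le b (k + finrank ℝ E) hc hΦ
  refine ⟨C, fun T hT t => ?_⟩
  have hT0 : 0 < T := one_pos.trans_le hT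
  have := FiniteDimensional.fintypeBasisIndex b
  set D := ZSpan.fundamentalDomain b
  have hD : Bornology.IsBounded D := ZSpan.fundamentalDomain_isBounded b
  have hinteg : IntegrableOn (latticeSum b Φ T) D μ :=
    ((continuous_latticeSum b hc.continuous hΦ hT0).continuousOn.integrableOn_compact
      hD.isCompact_closure).mono_set subset_closure
  have hclose (t' : E) : latticeSum b Φ T t' ∈
      Metric.closedBall (latticeSum b Φ T t) (C * (T⁻¹) ^ k) := by
    refine mem_closedBall_iff_norm.2 ((hC T hT t t').trans_eq ?_)
    rw [pow_add, inv_pow T (finrank ℝ E)]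
    field_simp
  have havg := (convex_closedBall _ _).set_average_mem Metric.isClosed_closedBall
    (ZSpan.measure_fundamentalDomain_ne_zero b) hD.measure_lt_top.ne
    (Filter.Eventually.of_forall hclose) hinteg
  rw [setAverage_eq, integral_latticeSum b μ hc.continuous hΦ hT0, mem_closedBall_iff_norm'] at havg
  rwa [div_eq_inv_mul]

end LatticeSum

/-! ### Smoothed sums of arithmetic functions -/

section SmoothSum

open MeasureTheory ArithmeticFunction

/-- A continuous nonnegative weight on the real line, supported in `[-R, R]` and positive at `0`;
it is used to count the integers `n` for which `log n` is close to a given real number. -/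
structure IsWeight (g : ℝ → ℝ) (R : ℝ) : Prop where
  cont : Continuous g
  nonneg : ∀ u, 0 ≤ g u
  supp : ∀ u, R < |u| → g u = 0
  pos : 0 < g 0
  R_nonneg : 0 ≤ R

/-- The smoothed sum `∑ a(n) g(log n - X)` of an arithmetic function, which sees the integers `n` of
size about `exp X`. -/
def smoothSum (a : ArithmeticFunction ℂ) (g : ℝ → ℝ) (X : ℝ) : ℂ :=
  ∑' n : ℕ, a n * (g (Real.log n - X) : ℂ)

/-- The additive convolution of two weights. -/
def weightConv (g h : ℝ → ℝ) (v : ℝ) : ℝ := ∫ u, g u * h (v - u)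

variable {g h : ℝ → ℝ} {R R' : ℝ}

lemma IsWeight.hasCompactSupport (hg : IsWeight g R) : HasCompactSupport g :=
  HasCompactSupport.intro (isCompact_Icc (a := -R) (b := R)) fun u hu =>
    hg.supp u (not_le.1 fun h => hu (abs_le.1 h))

lemma IsWeight.apply_log_sub_eq_zero_of_lt (hg : IsWeight g R) {N n : ℕ} {X : ℝ}
    (hN : Real.exp (X + R) ≤ N) (hn : N < n) : g (Real.log n - X) = 0 := by
  have hlog : X + R < Real.log n := by
    rw [Real.lt_log_iff_exp_lt (by exact_mod_cast hn.pos)]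
    exact hN.trans_lt (by exact_mod_cast hn)
  exact hg.supp _ (lt_abs.2 (Or.inl (by linarith)))

lemma IsWeight.apply_log_sub_eq_zero_of_lt_neg (hg : IsWeight g R) {X : ℝ} (hX : X < -R) (n : ℕ) :
    g (Real.log n - X) = 0 :=
  hg.supp _ (lt_abs.2 (Or.inl (by linarith [Real.log_natCast_nonneg n])))

lemma smoothSum_eq_zero (a : ArithmeticFunction ℂ) (hg : IsWeight g R) {X : ℝ} (hX : X < -R) :
    smoothSum a g X = 0 := by
  simp only [smoothSum, hg.apply_log_sub_eq_zero_of_lt_neg hX, Complex.ofReal_zero, mul_zero,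
    tsum_zero]

lemma smoothSum_eq_sum (a : ArithmeticFunction ℂ) (hg : IsWeight g R) {N : ℕ} {X : ℝ}
    (hN : Real.exp (X + R) ≤ N) :
    smoothSum a g X = ∑ n ∈ Finset.Ioc 0 N, a n * (g (Real.log n - X) : ℂ) := by
  refine tsum_eq_sum fun n hn => ?_
  rcases n.eq_zero_or_pos with rfl | hn0
  · rw [ArithmeticFunction.map_zero, zero_mul]
  · have hNn : N < n := by
      rw [Finset.mem_Ioc] at hn
      omega
    rw [hg.apply_log_sub_eq_zero_of_lt hN hNn, Complex.ofReal_zero, mul_zero]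

lemma continuous_smoothSum (a : ArithmeticFunction ℂ) (hg : IsWeight g R) :
    Continuous (smoothSum a g) := by
  refine continuous_iff_continuousAt.2 fun X => ?_
  obtain ⟨N, hN⟩ := exists_nat_ge (Real.exp (X + 1 + R))
  have hsum : smoothSum a g =ᶠ[nhds X]
      fun Y => ∑ n ∈ Finset.Ioc 0 N, a n * (g (Real.log n - Y) : ℂ) := by
    filter_upwards [Iio_mem_nhds (lt_add_one X)] with Y hY
    exact smoothSum_eq_sum a hg (le_trans (by gcongr; exact hY.le) hN)
  refine ContinuousAt.congr ?_ hsum.symm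
  have := hg.cont
  fun_prop

lemma smoothSum_conj {a a' : ArithmeticFunction ℂ} (h : ∀ n, a' n = starRingEnd ℂ (a n))
    (g : ℝ → ℝ) (X : ℝ) : smoothSum a' g X = starRingEnd ℂ (smoothSum a g X) := by
  simp only [smoothSum, Complex.conj_tsum, h, map_mul, Complex.conj_ofReal]

lemma IsWeight.conv (hg : IsWeight g R) (hh : IsWeight h R') :
    IsWeight (weightConv g h) (R + R') where
  cont := by
    have hconv : weightConv g h = convolution g h (ContinuousLinearMap.mul ℝ ℝ) volume := by
      ext v
      simp [weightConv, convolution]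
    rw [hconv]
    exact hh.hasCompactSupport.continuous_convolution_right _ hg.cont.locallyIntegrable hh.cont
  nonneg v := integral_nonneg fun u => mul_nonneg (hg.nonneg u) (hh.nonneg _)
  supp v hv := by
    refine integral_eq_zero_of_ae (Filter.Eventually.of_forall fun u => ?_)
    rcases lt_or_ge R |u| with hu | hu
    · simp [hg.supp u hu]
    · simp [hh.supp (v - u) (by linarith [abs_sub_abs_le_abs_sub v u])]
  pos := by
    have hcont : Continuous fun u => g u * h (0 - u) := by
      have := hg.cont
      have := hh.cont
      fun_prop
    refine hcont.integral_pos_of_hasCompactSupport_nonneg_nonzero hg.hasCompactSupport.mul_right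
      (fun u => mul_nonneg (hg.nonneg u) (hh.nonneg _)) (x := 0) ?_
    simpa using (mul_pos hg.pos hh.pos).ne'
  R_nonneg := add_nonneg hg.R_nonneg hh.R_nonneg

lemma smoothSum_mul_smoothSum_eq_sum (a b : ArithmeticFunction ℂ) (hg : IsWeight g R)
    (hh : IsWeight h R') {N : ℕ} {Y : ℝ} (hN : Real.exp (Y + (R + R')) ≤ N) (X : ℝ) :
    smoothSum a g X * smoothSum b h (Y - X) =
      ∑ n ∈ Finset.Ioc 0 N, ∑ m ∈ Finset.Ioc 0 N,
        a n * b m * ((g (Real.log n - X) * h (Real.log m - Y + X) : ℝ) : ℂ) := by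
  rcases lt_or_ge X (-R) with hX | hX
  · simp [smoothSum_eq_zero a hg hX, hg.apply_log_sub_eq_zero_of_lt_neg hX]
  rcases lt_or_ge (Y - X) (-R') with hX' | hX'
  · simp [smoothSum_eq_zero b hh hX', sub_add, hh.apply_log_sub_eq_zero_of_lt_neg hX']
  rw [smoothSum_eq_sum a hg (N := N)
      ((Real.exp_le_exp.2 (by linarith [hg.R_nonneg, hh.R_nonneg])).trans hN),
    smoothSum_eq_sum b hh (N := N)
      ((Real.exp_le_exp.2 (by linarith [hg.R_nonneg, hh.R_nonneg])).trans hN), Finset.sum_mul_sum]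
  refine Finset.sum_congr rfl fun n _ => Finset.sum_congr rfl fun m _ => ?_
  rw [sub_add]
  push_cast
  ring

lemma IsWeight.integrable_mul (hg : IsWeight g R) (hh : IsWeight h R') (u v : ℝ) :
    Integrable fun X => g (u - X) * h (v + X) := by
  refine Continuous.integrable_of_hasCompactSupport ?_
    (hg.hasCompactSupport.comp_homeomorph (Homeomorph.subLeft u)).mul_right
  have := hg.cont
  have := hh.cont
  fun_prop

lemma integral_weight_mul_weight (g h : ℝ → ℝ) (u v : ℝ) :
    ∫ X, g (u - X) * h (v + X) = weightConv g h (u + v) := by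
  rw [weightConv, ← integral_sub_left_eq_self _ volume u]
  refine integral_congr_ae (Filter.Eventually.of_forall fun X => ?_)
  ring_nf

lemma sum_Ioc_mul_mul_eq_sum_sum (a b : ArithmeticFunction ℂ) {N : ℕ} {G : ℕ → ℂ}
    (hG : ∀ n, N < n → G n = 0) :
    ∑ n ∈ Finset.Ioc 0 N, (a * b) n * G n =
      ∑ n ∈ Finset.Ioc 0 N, ∑ m ∈ Finset.Ioc 0 N, a n * b m * G (n * m) := by
  calc ∑ n ∈ Finset.Ioc 0 N, (a * b) n * G n
      = ∑ n ∈ Finset.Ioc 0 N, ∑ x ∈ Finset.Ioc 0 N ×ˢ Finset.Ioc 0 N with x.1 * x.2 = n,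
          a x.1 * b x.2 * G (x.1 * x.2) := by
        refine Finset.sum_congr rfl fun n hn => ?_
        rw [Finset.mem_Ioc] at hn
        rw [mul_apply, Finset.sum_mul,
          Nat.divisorsAntidiagonal_eq_prod_filter_of_le hn.1.ne' hn.2]
        exact Finset.sum_congr rfl fun x hx => by rw [(Finset.mem_filter.1 hx).2]
    _ = ∑ x ∈ Finset.Ioc 0 N ×ˢ Finset.Ioc 0 N, a x.1 * b x.2 * G (x.1 * x.2) := by
        simp_rw [Finset.sum_filter]
        rw [Finset.sum_comm]
        refine Finset.sum_congr rfl fun x hx => ?_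
        simp only [Finset.mem_product, Finset.mem_Ioc] at hx
        rw [Finset.sum_ite_eq]
        refine ite_eq_left_iff.2 fun hxN => ?_
        rw [hG _ (not_le.1 fun h =>
          hxN (Finset.mem_Ioc.2 ⟨Nat.mul_pos hx.1.1 hx.2.1, h⟩)), mul_zero]
    _ = _ := Finset.sum_product _ _ _

lemma integral_smoothSum_mul_smoothSum (a b : ArithmeticFunction ℂ) (hg : IsWeight g R)
    (hh : IsWeight h R') (Y : ℝ) :
    ∫ X, smoothSum a g X * smoothSum b h (Y - X) = smoothSum (a * b) (weightConv g h) Y := by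
  obtain ⟨N, hN⟩ := exists_nat_ge (Real.exp (Y + (R + R')))
  have hint (n m : ℕ) : Integrable fun X : ℝ =>
      a n * b m * ((g (Real.log n - X) * h (Real.log m - Y + X) : ℝ) : ℂ) :=
    (hg.integrable_mul hh _ _).ofReal.const_mul _
  have hterm (n : ℕ) (hn : n ∈ Finset.Ioc 0 N) (m : ℕ) (hm : m ∈ Finset.Ioc 0 N) :
      ∫ X : ℝ, a n * b m * ((g (Real.log n - X) * h (Real.log m - Y + X) : ℝ) : ℂ) =
        a n * b m * (weightConv g h (Real.log (n * m : ℕ) - Y) : ℂ) := by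
    rw [integral_const_mul, integral_complex_ofReal, integral_weight_mul_weight, Nat.cast_mul,
      Real.log_mul (by exact_mod_cast (Finset.mem_Ioc.1 hn).1.ne')
        (by exact_mod_cast (Finset.mem_Ioc.1 hm).1.ne'), add_sub_assoc]
  simp_rw [smoothSum_mul_smoothSum_eq_sum a b hg hh hN]
  rw [integral_finsetSum _ fun n _ => integrable_finsetSum _ fun m _ => hint n m,
    smoothSum_eq_sum (a * b) (hg.conv hh) hN,
    sum_Ioc_mul_mul_eq_sum_sum a b fun n hn => by
      rw [(hg.conv hh).apply_log_sub_eq_zero_of_lt hN hn, Complex.ofReal_zero]]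
  refine Finset.sum_congr rfl fun n hn => ?_
  rw [integral_finsetSum _ fun m _ => hint n m]
  exact Finset.sum_congr rfl (hterm n hn)

lemma integrable_exp_neg_mul_abs {c : ℝ} (hc : 0 < c) :
    Integrable fun X : ℝ => Real.exp (-c * |X|) := by
  refine Integrable.of_integral_ne_zero ?_
  rw [integral_comp_abs (f := fun X => Real.exp (-c * X)), integral_exp_mul_Ioi (neg_lt_zero.2 hc)]
  simp [hc.ne']

/-- The function `T` decays at least like `exp (-c |X|)`. -/
def HasExpDecay {V : Type*} [Norm V] (T : ℝ → V) (c : ℝ) : Prop :=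
  ∃ B : ℝ, ∀ X, ‖T X‖ ≤ B * Real.exp (-c * |X|)

variable {T E : ℝ → ℂ} {c : ℝ}

lemma HasExpDecay.sum_mul {ι : Type*} [Fintype ι] {T : ι → ℝ → ℝ} (hT : ∀ i, HasExpDecay (T i) c)
    (w : ι → ℂ) : HasExpDecay (fun X => ∑ i, w i * (T i X : ℂ)) c := by
  choose B hB using hT
  refine ⟨∑ i, ‖w i‖ * B i, fun X => ?_⟩
  rw [Finset.sum_mul]
  refine norm_sum_le_of_le _ fun i _ => ?_
  rw [norm_mul, Complex.norm_real, mul_assoc]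
  exact mul_le_mul_of_nonneg_left (hB i X) (norm_nonneg _)

lemma HasExpDecay.integrable (hT : HasExpDecay T c) (hc : 0 < c) (hcont : Continuous T) :
    Integrable T := by
  obtain ⟨B, hB⟩ := hT
  exact ((integrable_exp_neg_mul_abs hc).const_mul B).mono' hcont.aestronglyMeasurable
    (Filter.Eventually.of_forall hB)

lemma HasExpDecay.conv (hT : HasExpDecay T c) (hE : HasExpDecay E c) (hc : 0 < c) :
    HasExpDecay (fun Y => ∫ X, T X * E (Y - X)) (c / 2) := by
  obtain ⟨C, hT⟩ := hT
  obtain ⟨C', hE⟩ := hE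
  have hC : 0 ≤ C := by simpa using (norm_nonneg _).trans (hT 0)
  have hC' : 0 ≤ C' := by simpa using (norm_nonneg _).trans (hE 0)
  refine ⟨C * C' * ∫ X, Real.exp (-(c / 2) * |X|), fun Y => ?_⟩
  have hexp (X : ℝ) : -c * |X| + -c * |Y - X| ≤ -(c / 2) * |Y| + -(c / 2) * |X| := by
    have htri : |Y| ≤ |X| + |Y - X| := by simpa using abs_add_le X (Y - X)
    nlinarith [abs_nonneg (Y - X)]
  have hbound (X : ℝ) : ‖T X * E (Y - X)‖ ≤
      C * C' * Real.exp (-(c / 2) * |Y|) * Real.exp (-(c / 2) * |X|) :=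
    calc ‖T X * E (Y - X)‖ ≤ (C * Real.exp (-c * |X|)) * (C' * Real.exp (-c * |Y - X|)) := by
          rw [norm_mul]
          exact mul_le_mul (hT X) (hE _) (norm_nonneg _) (by positivity)
      _ = C * C' * Real.exp (-c * |X| + -c * |Y - X|) := by rw [Real.exp_add]; ring
      _ ≤ C * C' * Real.exp (-(c / 2) * |Y| + -(c / 2) * |X|) :=
          mul_le_mul_of_nonneg_left (Real.exp_le_exp.2 (hexp X)) (mul_nonneg hC hC')
      _ = C * C' * Real.exp (-(c / 2) * |Y|) * Real.exp (-(c / 2) * |X|) := by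
          rw [Real.exp_add]; ring
  refine (norm_integral_le_of_norm_le ((integrable_exp_neg_mul_abs (half_pos hc)).const_mul _)
    (Filter.Eventually.of_forall hbound)).trans_eq ?_
  rw [integral_const_mul]
  ring

lemma HasExpDecay.smoothSum_mul {a b : ArithmeticFunction ℂ} (hg : IsWeight g R)
    (hh : IsWeight h R') (ha : HasExpDecay (smoothSum a g) c) (hb : HasExpDecay (smoothSum b h) c)
    (hc : 0 < c) : HasExpDecay (smoothSum (a * b) (weightConv g h)) (c / 2) := by
  simpa only [integral_smoothSum_mul_smoothSum a b hg hh] using ha.conv hb hc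

lemma HasExpDecay.smoothSum_mul_exp_neg {a : ArithmeticFunction ℂ} (hg : IsWeight g R)
    (ha : HasExpDecay (smoothSum a g) c) :
    HasExpDecay (fun X => smoothSum a g X * (Real.exp (-X) : ℂ)) c := by
  obtain ⟨B, hB⟩ := ha
  have hB0 : 0 ≤ B := by simpa using (norm_nonneg _).trans (hB 0)
  refine ⟨B * Real.exp R, fun X => ?_⟩
  beta_reduce
  rcases lt_or_ge X (-R) with hX | hX
  · rw [smoothSum_eq_zero a hg hX, zero_mul, norm_zero]
    positivity
  · rw [norm_mul, Complex.norm_real, Real.norm_of_nonneg (Real.exp_nonneg _), mul_right_comm]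
    exact mul_le_mul (hB X) (Real.exp_le_exp.2 (by linarith)) (Real.exp_nonneg _) (by positivity)

lemma continuous_smoothSum_mul_exp_neg (a : ArithmeticFunction ℂ) (hg : IsWeight g R) :
    Continuous fun X => smoothSum a g X * (Real.exp (-X) : ℂ) := by
  have := continuous_smoothSum a hg
  fun_prop

lemma integrable_smoothSum_mul_smoothSum (a b : ArithmeticFunction ℂ) (hg : IsWeight g R)
    (hh : IsWeight h R') (Y : ℝ) : Integrable fun X => smoothSum a g X * smoothSum b h (Y - X) := by
  refine Continuous.integrable_of_hasCompactSupport ?_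
    (HasCompactSupport.intro (isCompact_Icc (a := -R) (b := Y + R')) fun X hX => ?_)
  · have := continuous_smoothSum a hg
    have := continuous_smoothSum b hh
    fun_prop
  · rcases not_and_or.1 hX with hX | hX
    · rw [smoothSum_eq_zero a hg (not_le.1 hX), zero_mul]
    · rw [smoothSum_eq_zero b hh (by linarith), mul_zero]

/-- The main term `m exp Y` of `b` contributes `m exp Y ∫ A(X) exp (-X) dX = 0` to the convolution
of the smoothed sums `A` and `B` of `a` and `b`. -/
lemma hasExpDecay_smoothSum_mul {a b : ArithmeticFunction ℂ} (hg : IsWeight g R)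
    (hh : IsWeight h R') (m : ℂ) (hc : 0 < c) (ha : HasExpDecay (smoothSum a g) c)
    (hb : HasExpDecay (fun X => smoothSum b h X - m * Real.exp X) c)
    (hzero : ∫ X, smoothSum a g X * Real.exp (-X) = 0) :
    HasExpDecay (smoothSum (a * b) (weightConv g h)) (c / 2) := by
  convert ha.conv hb hc using 1
  ext Y
  calc smoothSum (a * b) (weightConv g h) Y
      = (∫ X, smoothSum a g X * smoothSum b h (Y - X)) -
          m * Real.exp Y * ∫ X, smoothSum a g X * Real.exp (-X) := by
        rw [integral_smoothSum_mul_smoothSum a b hg hh, hzero, mul_zero, sub_zero]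
    _ = ∫ X, (smoothSum a g X * smoothSum b h (Y - X) -
          m * Real.exp Y * (smoothSum a g X * Real.exp (-X))) := by
        rw [integral_sub (integrable_smoothSum_mul_smoothSum a b hg hh Y)
          (((ha.smoothSum_mul_exp_neg hg).integrable hc
            (continuous_smoothSum_mul_exp_neg a hg)).const_mul _),
          integral_const_mul]
    _ = ∫ X, smoothSum a g X * (smoothSum b h (Y - X) - m * Real.exp (Y - X)) := by
        congr 1 with X
        rw [sub_eq_add_neg Y X, Real.exp_add]
        push_cast
        ring

end SmoothSum

/-! ### Twists by characters of a class group -/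

section Twist

open ArithmeticFunction

variable {Γ : Type*} [AddCommGroup Γ] [Fintype Γ]

/-- The family `A` of arithmetic functions counts the ideals of each class of a class group `Γ`, and
`L` is the von Mangoldt function restricted to each class. The last two fields express the
factorization into primes and the convergence of the associated Dirichlet series. -/
structure IsClassSystem (A L : Γ → ArithmeticFunction ℝ) : Prop where
  A_nonneg : ∀ c n, 0 ≤ A c n
  L_nonneg : ∀ c n, 0 ≤ L c n
  A_zero_one : A 0 1 = 1
  A_one : ∀ c, c ≠ 0 → A c 1 = 0
  log_eq : ∀ c n, A c n * Real.log n = ∑ c', (L c' * A (c - c')) n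
  summable : ∀ c, ∀ s : ℝ, 1 < s → Summable fun n : ℕ => A c n / (n : ℝ) ^ s

/-- The twist `∑ χ(c) a_c` of a family of arithmetic functions by a character. The group of classes
and its character group are written additively, so `χ = 0` is the trivial character. -/
def twist (a : Γ → ArithmeticFunction ℝ) (χ : AddChar Γ ℂ) : ArithmeticFunction ℂ :=
  ⟨fun n => ∑ c, χ c * (a c n : ℂ), by simp⟩

lemma twist_apply (a : Γ → ArithmeticFunction ℝ) (χ : AddChar Γ ℂ) (n : ℕ) :
    twist a χ n = ∑ c, χ c * (a c n : ℂ) := rfl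

lemma twist_zero_apply (a : Γ → ArithmeticFunction ℝ) (n : ℕ) :
    twist a 0 n = ((∑ c, a c n : ℝ) : ℂ) := by
  simp [twist_apply]

lemma twist_inv (a : Γ → ArithmeticFunction ℝ) (χ : AddChar Γ ℂ) (n : ℕ) :
    twist a χ⁻¹ n = starRingEnd ℂ (twist a χ n) := by
  simp only [twist_apply, map_sum, map_mul, Complex.conj_ofReal, AddChar.inv_apply,
    AddChar.map_neg_eq_conj]

variable {A L : Γ → ArithmeticFunction ℝ}

lemma IsClassSystem.twist_log (h : IsClassSystem A L) (χ : AddChar Γ ℂ) (n : ℕ) :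
    twist A χ n * (Real.log n : ℂ) = (twist L χ * twist A χ) n := by
  have hlog (c : Γ) : (A c n : ℂ) * (Real.log n : ℂ) =
      ∑ c', ∑ x ∈ n.divisorsAntidiagonal, (L c' x.1 : ℂ) * (A (c - c') x.2 : ℂ) := by
    have := h.log_eq c n
    simp only [mul_apply] at this
    exact_mod_cast this
  calc twist A χ n * (Real.log n : ℂ)
      = ∑ c', ∑ c, ∑ x ∈ n.divisorsAntidiagonal,
          χ c * ((L c' x.1 : ℂ) * (A (c - c') x.2 : ℂ)) := by
        simp only [twist_apply, Finset.sum_mul, mul_assoc, hlog, Finset.mul_sum]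
        exact Finset.sum_comm
    _ = ∑ c', ∑ c, ∑ x ∈ n.divisorsAntidiagonal,
          χ c' * (L c' x.1 : ℂ) * (χ c * (A c x.2 : ℂ)) := by
        refine Finset.sum_congr rfl fun c' _ => ?_
        rw [← Equiv.sum_comp (Equiv.addRight c')]
        refine Finset.sum_congr rfl fun c _ => Finset.sum_congr rfl fun x _ => ?_
        simp only [Equiv.coe_addRight, add_sub_cancel_right, AddChar.map_add_eq_mul]
        ring
    _ = (twist L χ * twist A χ) n := by
        simp only [mul_apply, twist_apply, Finset.sum_mul_sum]
        rw [Finset.sum_comm (s := n.divisorsAntidiagonal)]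
        exact Finset.sum_congr rfl fun c' _ => Finset.sum_comm

lemma IsClassSystem.twist_one (h : IsClassSystem A L) (χ : AddChar Γ ℂ) : twist A χ 1 = 1 := by
  rw [twist_apply, Finset.sum_eq_single_of_mem 0 (Finset.mem_univ _) fun c _ hc => by
    rw [h.A_one c hc, Complex.ofReal_zero, mul_zero], h.A_zero_one, AddChar.map_zero_eq_one,
    Complex.ofReal_one, mul_one]

lemma IsClassSystem.L_one (h : IsClassSystem A L) (c : Γ) : L c 1 = 0 := by
  have hlog := h.log_eq c 1
  rw [Finset.sum_eq_single_of_mem c (Finset.mem_univ _) fun c' _ hc => by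
    simp [h.A_one (c - c') (sub_ne_zero.2 hc.symm)]] at hlog
  simpa [h.A_zero_one] using hlog.symm

variable {g : ℝ → ℝ} {R κ : ℝ}

lemma smoothSum_twist (A : Γ → ArithmeticFunction ℝ) (hg : IsWeight g R)
    (χ : AddChar Γ ℂ) (X : ℝ) : smoothSum (twist A χ) g X =
      ∑ c, χ c * ((∑' n, A c n * g (Real.log n - X) : ℝ) : ℂ) := by
  obtain ⟨N, hN⟩ := exists_nat_ge (Real.exp (X + R))
  have hsum (c : Γ) : Summable fun n => χ c * ((A c n * g (Real.log n - X) : ℝ) : ℂ) := by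
    refine summable_of_ne_finset_zero (s := Finset.range (N + 1)) fun n hn => ?_
    rw [Finset.mem_range, not_lt] at hn
    rw [hg.apply_log_sub_eq_zero_of_lt hN hn, mul_zero, Complex.ofReal_zero, mul_zero]
  simp only [smoothSum, twist_apply, Finset.sum_mul, mul_assoc, ← Complex.ofReal_mul,
    Complex.ofReal_tsum, ← tsum_mul_left]
  exact Summable.tsum_finsetSum fun c _ => hsum c

lemma hasExpDecay_smoothSum_twist (hg : IsWeight g R)
    (hA : ∀ c, HasExpDecay (fun X => ∑' n, A c n * g (Real.log n - X) - κ * Real.exp X) 1)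
    (χ : AddChar Γ ℂ) :
    HasExpDecay (fun X => smoothSum (twist A χ) g X - (∑ c, χ c) * κ * Real.exp X) 1 := by
  convert HasExpDecay.sum_mul hA χ using 2 with X
  rw [smoothSum_twist A hg]
  simp only [Complex.ofReal_sub, Complex.ofReal_mul, mul_sub, Finset.sum_sub_distrib,
    Finset.sum_mul, mul_assoc]

lemma hasExpDecay_smoothSum_twist_of_ne_zero (hg : IsWeight g R)
    (hA : ∀ c, HasExpDecay (fun X => ∑' n, A c n * g (Real.log n - X) - κ * Real.exp X) 1)
    {χ : AddChar Γ ℂ} (hχ : χ ≠ 0) : HasExpDecay (smoothSum (twist A χ) g) 1 := by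
  simpa only [AddChar.sum_eq_zero_iff_ne_zero.2 hχ, zero_mul, sub_zero] using
    hasExpDecay_smoothSum_twist hg hA χ

lemma hasExpDecay_smoothSum_twist_zero (hg : IsWeight g R)
    (hA : ∀ c, HasExpDecay (fun X => ∑' n, A c n * g (Real.log n - X) - κ * Real.exp X) 1) :
    HasExpDecay (fun X => smoothSum (twist A 0) g X -
      (Fintype.card Γ * κ : ℂ) * Real.exp X) 1 := by
  simpa using hasExpDecay_smoothSum_twist hg hA 0

end Twist

/-! ### Nonvanishing at `1` -/

section Nonvanishing

open ArithmeticFunction Filter ComplexOrder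

lemma mul_log_of_mul_log {a b p r : ArithmeticFunction ℂ}
    (ha : ∀ n, a n * (Real.log n : ℂ) = (p * a) n) (hb : ∀ n, b n * (Real.log n : ℂ) = (r * b) n)
    (n : ℕ) : (a * b) n * (Real.log n : ℂ) = ((p + r) * (a * b)) n := by
  have hleibniz : (p + r) * (a * b) = (p * a) * b + a * (r * b) := by ring
  rw [hleibniz, ArithmeticFunction.add_apply, mul_apply, mul_apply, mul_apply,
    ← Finset.sum_add_distrib, Finset.sum_mul]
  refine Finset.sum_congr rfl fun x hx => ?_
  obtain ⟨hxn, hn⟩ := Nat.mem_divisorsAntidiagonal.1 hx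
  rw [← hxn, mul_ne_zero_iff] at hn
  rw [← ha, ← hb, ← hxn, Nat.cast_mul,
    Real.log_mul (Nat.cast_ne_zero.2 hn.1) (Nat.cast_ne_zero.2 hn.2)]
  push_cast
  ring

lemma nonneg_of_mul_log {f P : ArithmeticFunction ℂ}
    (hf : ∀ n, f n * (Real.log n : ℂ) = (P * f) n) (hP : ∀ n, 0 ≤ P n) (hP1 : P 1 = 0)
    (hf1 : f 1 = 1) (n : ℕ) : 0 ≤ f n := by
  induction n using Nat.strong_induction_on with
  | _ n ih =>
    rcases Nat.lt_or_ge n 2 with hn | hn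
    · interval_cases n
      · simp
      · simp [hf1]
    · have hlog : 0 < Real.log n := Real.log_pos (by exact_mod_cast hn)
      have hmul : 0 ≤ f n * (Real.log n : ℂ) := by
        rw [hf, mul_apply]
        refine Finset.sum_nonneg fun x hx => ?_
        rcases eq_or_ne x.1 1 with hx1 | hx1
        · rw [hx1, hP1, zero_mul]
        · refine mul_nonneg (hP _) (ih _ ?_)
          obtain ⟨hxn, hn0⟩ := Nat.mem_divisorsAntidiagonal.1 hx
          rw [← hxn, mul_ne_zero_iff] at hn0
          rw [← hxn]
          exact lt_mul_left (Nat.pos_of_ne_zero hn0.2) (by omega)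
      exact le_of_mul_le_mul_right (by rwa [zero_mul]) (Complex.zero_lt_real.2 hlog)

lemma le_mul_log_of_mul_log {f P : ArithmeticFunction ℂ}
    (hf : ∀ n, f n * (Real.log n : ℂ) = (P * f) n) (hP : ∀ n, 0 ≤ P n) (hf0 : ∀ n, 0 ≤ f n)
    (hf1 : f 1 = 1) (n : ℕ) : P n ≤ f n * (Real.log n : ℂ) := by
  rcases eq_or_ne n 0 with rfl | hn
  · simp
  rw [hf, mul_apply]
  simpa only [hf1, mul_one] using Finset.single_le_sum (f := fun x : ℕ × ℕ => P x.1 * f x.2)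
    (fun x _ => mul_nonneg (hP x.1) (hf0 x.2))
    (show (n, 1) ∈ n.divisorsAntidiagonal from Nat.mem_divisorsAntidiagonal.2 ⟨mul_one n, hn⟩)

variable {g : ℝ → ℝ} {R c : ℝ}

lemma re_mul_le_norm_smoothSum {f : ArithmeticFunction ℂ} (hf : ∀ n, 0 ≤ f n) (hg : IsWeight g R)
    {n : ℕ} (hn : n ≠ 0) : (f n).re * g 0 ≤ ‖smoothSum f g (Real.log n)‖ := by
  obtain ⟨N, hN⟩ := exists_nat_ge (max (Real.exp (Real.log n + R)) n)
  have hterm : f n * (g 0 : ℂ) ≤ smoothSum f g (Real.log n) := by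
    rw [smoothSum_eq_sum f hg (le_of_max_le_left hN)]
    have hmem : n ∈ Finset.Ioc 0 N :=
      Finset.mem_Ioc.2 ⟨Nat.pos_of_ne_zero hn, by exact_mod_cast le_of_max_le_right hN⟩
    simpa only [sub_self] using Finset.single_le_sum
      (f := fun m : ℕ => f m * (g (Real.log m - Real.log n) : ℂ))
      (fun m _ => mul_nonneg (hf m) (Complex.zero_le_real.2 (hg.nonneg _))) hmem
  calc (f n).re * g 0 = (f n * (g 0 : ℂ)).re := (Complex.re_mul_ofReal _ _).symm
    _ ≤ (smoothSum f g (Real.log n)).re := (Complex.le_def.1 hterm).1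
    _ ≤ ‖smoothSum f g (Real.log n)‖ := Complex.re_le_norm _

lemma not_hasExpDecay_smoothSum {f : ArithmeticFunction ℂ} (hf : ∀ n, 0 ≤ f n)
    (hg : IsWeight g R) (hc : 0 < c) {q : ℕ} (hq : 2 ≤ q) {δ : ℝ} (hδ : 0 < δ)
    (hfq : ∀ i : ℕ, 1 ≤ i → (δ : ℂ) ≤ f (q ^ i) * (Real.log (q ^ i : ℕ) : ℂ)) :
    ¬ HasExpDecay (smoothSum f g) c := by
  rintro ⟨B, hB⟩
  have hlogq : 0 < Real.log q := Real.log_pos (by exact_mod_cast hq)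
  have hlower (i : ℕ) (hi : 1 ≤ i) :
      δ * g 0 ≤ B * ((i * Real.log q) ^ (1 : ℝ) * Real.exp (-c * (i * Real.log q))) := by
    have hlog : Real.log (q ^ i : ℕ) = i * Real.log q := by rw [Nat.cast_pow, Real.log_pow]
    have hpos : 0 < i * Real.log q := mul_pos (by exact_mod_cast hi) hlogq
    have hδi : δ ≤ (f (q ^ i)).re * Real.log (q ^ i : ℕ) := by
      simpa only [Complex.ofReal_re, Complex.re_mul_ofReal] using (Complex.le_def.1 (hfq i hi)).1
    calc δ * g 0 ≤ (f (q ^ i)).re * Real.log (q ^ i : ℕ) * g 0 :=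
          mul_le_mul_of_nonneg_right hδi hg.pos.le
      _ = i * Real.log q * ((f (q ^ i)).re * g 0) := by rw [hlog]; ring
      _ ≤ i * Real.log q * (B * Real.exp (-c * (i * Real.log q))) := by
          refine mul_le_mul_of_nonneg_left ((re_mul_le_norm_smoothSum hf hg
            (pow_ne_zero i (by omega))).trans ?_) hpos.le
          rw [hlog]
          simpa only [abs_of_pos hpos] using hB (i * Real.log q)
      _ = _ := by rw [Real.rpow_one]; ring
  have hlim := (((tendsto_rpow_mul_exp_neg_mul_atTop_nhds_zero 1 c hc).comp
    (tendsto_natCast_atTop_atTop.atTop_mul_const hlogq)).const_mul B)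
  rw [mul_zero] at hlim
  exact (mul_pos hδ hg.pos).not_ge
    (ge_of_tendsto hlim (eventually_atTop.2 ⟨1, fun i hi => hlower i hi⟩))

lemma two_add_two_mul_re_nonneg {Γ : Type*} [AddCommGroup Γ] [Finite Γ] (χ : AddChar Γ ℂ) (c : Γ) :
    0 ≤ 2 + 2 * (χ c).re := by
  have hre := Complex.abs_re_le_norm (χ c)
  rw [AddChar.norm_apply] at hre
  linarith [(abs_le.1 hre).1]

variable {Γ : Type*} [AddCommGroup Γ] [Fintype Γ] {A L : Γ → ArithmeticFunction ℝ} {κ : ℝ}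

lemma twist_add_twist_inv_apply (L : Γ → ArithmeticFunction ℝ) (χ : AddChar Γ ℂ) (n : ℕ) :
    ((twist L χ + twist L 0) + (twist L χ⁻¹ + twist L 0)) n =
      ((∑ c, (2 + 2 * (χ c).re) * L c n : ℝ) : ℂ) := by
  simp only [ArithmeticFunction.add_apply, twist_apply, ← Finset.sum_add_distrib]
  push_cast
  refine Finset.sum_congr rfl fun c _ => ?_
  rw [Complex.re_eq_add_conj, AddChar.inv_apply, AddChar.map_neg_eq_conj, Pi.one_apply]
  ring

lemma IsClassSystem.not_hasExpDecay_twist_mul (h : IsClassSystem A L) (χ : AddChar Γ ℂ)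
    (hg : IsWeight g R) (hc : 0 < c) {q : ℕ} (hq : 2 ≤ q) {δ : ℝ} (hδ : 0 < δ)
    (hL : ∀ i : ℕ, 1 ≤ i → δ ≤ L 0 (q ^ i)) :
    ¬ HasExpDecay (smoothSum ((twist A χ * twist A 0) * (twist A χ⁻¹ * twist A 0)) g) c := by
  set f := (twist A χ * twist A 0) * (twist A χ⁻¹ * twist A 0)
  have hderiv := mul_log_of_mul_log
    (mul_log_of_mul_log (h.twist_log χ) (h.twist_log 0))
    (mul_log_of_mul_log (h.twist_log χ⁻¹) (h.twist_log 0))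
  have hterm (n : ℕ) (c : Γ) : 0 ≤ (2 + 2 * (χ c).re) * L c n :=
    mul_nonneg (two_add_two_mul_re_nonneg χ c) (h.L_nonneg c n)
  have hP (n : ℕ) : 0 ≤ ((twist L χ + twist L 0) + (twist L χ⁻¹ + twist L 0)) n := by
    rw [twist_add_twist_inv_apply]
    exact Complex.zero_le_real.2 (Finset.sum_nonneg fun c _ => hterm n c)
  have hf1 : f 1 = 1 := by simp [f, h.twist_one]
  have hf0 (n : ℕ) : 0 ≤ f n :=
    nonneg_of_mul_log hderiv hP (by rw [twist_add_twist_inv_apply]; simp [h.L_one]) hf1 n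
  refine not_hasExpDecay_smoothSum hf0 hg hc hq (mul_pos four_pos hδ) fun i hi => ?_
  refine le_trans ?_ (le_mul_log_of_mul_log hderiv hP hf0 hf1 _)
  rw [twist_add_twist_inv_apply, Complex.real_le_real]
  calc 4 * δ ≤ (2 + 2 * (χ 0).re) * L 0 (q ^ i) := by
        rw [AddChar.map_zero_eq_one, Complex.one_re]
        linarith [hL i hi]
    _ ≤ _ := Finset.single_le_sum (fun c _ => hterm _ c) (Finset.mem_univ 0)

/-- If the integral, a positive multiple of `L(1, χ)`, were zero, then the smoothed sums of
`A_χ * A_0` would decay, and so would those of `(A_χ * A_0) * (A_χ⁻¹ * A_0)`. -/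
theorem IsClassSystem.integral_smoothSum_twist_ne_zero (h : IsClassSystem A L)
    (hg : IsWeight g R)
    (hA : ∀ c, HasExpDecay (fun X => ∑' n, A c n * g (Real.log n - X) - κ * Real.exp X) 1)
    {q : ℕ} (hq : 2 ≤ q) {δ : ℝ} (hδ : 0 < δ) (hL : ∀ i : ℕ, 1 ≤ i → δ ≤ L 0 (q ^ i))
    {χ : AddChar Γ ℂ} (hχ : χ ≠ 0) :
    ∫ X : ℝ, smoothSum (twist A χ) g X * (Real.exp (-X) : ℂ) ≠ 0 := by
  intro hzero
  have hzero' : ∫ X : ℝ, smoothSum (twist A χ⁻¹) g X * (Real.exp (-X) : ℂ) = 0 := by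
    rw [← map_zero (starRingEnd ℂ), ← hzero, ← integral_conj]
    simp only [smoothSum_conj (twist_inv A χ), map_mul, Complex.conj_ofReal]
  have hdecay {ψ : AddChar Γ ℂ} (hψ : ψ ≠ 0)
      (hψ0 : ∫ X : ℝ, smoothSum (twist A ψ) g X * (Real.exp (-X) : ℂ) = 0) :
      HasExpDecay (smoothSum (twist A ψ * twist A 0) (weightConv g g)) (1 / 2) :=
    hasExpDecay_smoothSum_mul hg hg _ one_pos (hasExpDecay_smoothSum_twist_of_ne_zero hg hA hψ)
      (hasExpDecay_smoothSum_twist_zero hg hA) hψ0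
  exact h.not_hasExpDecay_twist_mul χ ((hg.conv hg).conv (hg.conv hg))
    (half_pos (half_pos one_pos)) hq hδ hL
    (HasExpDecay.smoothSum_mul (hg.conv hg) (hg.conv hg) (hdecay hχ hzero)
      (hdecay (inv_ne_one.2 hχ) hzero') (half_pos one_pos))

end Nonvanishing

/-! ### Logarithmic derivatives near `1` -/

section LogDeriv

open MeasureTheory ArithmeticFunction Filter Topology

/-- The two-sided Laplace transform, normalized so that the kernel is `exp (z X)`. -/
def laplace (T : ℝ → ℂ) (z : ℂ) : ℂ := ∫ X : ℝ, T X * Complex.exp (z * X)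

variable {T : ℝ → ℂ} {c : ℝ}

lemma norm_mul_cexp_le {B : ℝ} (hB : ∀ X, ‖T X‖ ≤ B * Real.exp (-c * |X|)) (z : ℂ) (X : ℝ) :
    ‖T X * Complex.exp (z * X)‖ ≤ B * Real.exp (-(c - |z.re|) * |X|) := by
  have hre : (z * X).re ≤ |z.re| * |X| := by
    rw [Complex.re_mul_ofReal, ← abs_mul]
    exact le_abs_self _
  calc ‖T X * Complex.exp (z * X)‖ ≤ B * Real.exp (-c * |X|) * Real.exp (|z.re| * |X|) := by
        rw [norm_mul, Complex.norm_exp]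
        exact mul_le_mul (hB X) (Real.exp_le_exp.2 hre) (Real.exp_nonneg _)
          ((norm_nonneg _).trans (hB X))
    _ = B * Real.exp (-(c - |z.re|) * |X|) := by rw [mul_assoc, ← Real.exp_add]; ring_nf

lemma HasExpDecay.differentiableAt_laplace (hT : HasExpDecay T c) (hcont : Continuous T) {z : ℂ}
    (hz : |z.re| < c) : DifferentiableAt ℂ (laplace T) z := by
  obtain ⟨B, hB⟩ := hT
  obtain ⟨d, hzd, hdc⟩ := exists_between hz
  obtain ⟨e, hde, hec⟩ := exists_between hdc
  have hcd : 0 < e - d := sub_pos.2 hde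
  have hB0 : 0 ≤ B := by simpa using (norm_nonneg _).trans (hB 0)
  have hs : {w : ℂ | |w.re| < d} ∈ 𝓝 z :=
    (isOpen_lt (continuous_abs.comp Complex.continuous_re) continuous_const).mem_nhds hzd
  have hmeas (w : ℂ) : AEStronglyMeasurable (fun X : ℝ => T X * Complex.exp (w * X)) :=
    Continuous.aestronglyMeasurable (by fun_prop)
  have hint : Integrable fun X : ℝ => T X * Complex.exp (z * X) :=
    ((integrable_exp_neg_mul_abs (sub_pos.2 hz)).const_mul B).mono' (hmeas z)
      (Eventually.of_forall (norm_mul_cexp_le hB z))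
  -- the factor `X` of the derivative is absorbed by `exp ((c - e) |X|)`
  have hbound (X : ℝ) (w : ℂ) (hw : |w.re| < d) : ‖X * (T X * Complex.exp (w * X))‖ ≤
      B * (c - e)⁻¹ * Real.exp (-(e - d) * |X|) := by
    have hX : |X| ≤ (c - e)⁻¹ * Real.exp ((c - e) * |X|) := by
      rw [← div_eq_inv_mul, le_div_iff₀ (sub_pos.2 hec)]
      linarith [Real.add_one_le_exp ((c - e) * |X|)]
    rw [norm_mul, Complex.norm_real, Real.norm_eq_abs]
    calc |X| * ‖T X * Complex.exp (w * X)‖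
        ≤ ((c - e)⁻¹ * Real.exp ((c - e) * |X|)) * (B * Real.exp (-(c - d) * |X|)) := by
          refine mul_le_mul hX ((norm_mul_cexp_le hB w X).trans ?_) (norm_nonneg _)
            ((abs_nonneg _).trans hX)
          gcongr
      _ = B * (c - e)⁻¹ * Real.exp (-(e - d) * |X|) := by
          rw [mul_mul_mul_comm, ← Real.exp_add, mul_comm _ B]
          ring_nf
  refine (hasDerivAt_integral_of_dominated_loc_of_deriv_le hs (Eventually.of_forall hmeas) hint
    (F' := fun w X => X * (T X * Complex.exp (w * X))) ?_ (Eventually.of_forall hbound)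
    ((integrable_exp_neg_mul_abs hcd).const_mul _) ?_).2.differentiableAt
  · exact Continuous.aestronglyMeasurable (by fun_prop)
  · refine Eventually.of_forall fun X w _ => ?_
    refine (((hasDerivAt_id w).mul_const (X : ℂ)).cexp.const_mul (T X)).congr_deriv ?_
    simp only [id, one_mul]
    ring

variable {g : ℝ → ℝ} {R : ℝ}

lemma IsWeight.hasExpDecay (hg : IsWeight g R) (c : ℝ) :
    HasExpDecay (fun u => (g u : ℂ)) c := by
  obtain ⟨M, hM⟩ := (hg.cont.bounded_above_of_compact_support hg.hasCompactSupport)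
  refine ⟨M * Real.exp (|c| * R), fun u => ?_⟩
  have hM0 : 0 ≤ M := (norm_nonneg _).trans (hM 0)
  beta_reduce
  rcases lt_or_ge R |u| with hu | hu
  · rw [hg.supp u hu, Complex.ofReal_zero, norm_zero]
    positivity
  · have hexp : 0 ≤ |c| * R + -c * |u| := by
      nlinarith [le_abs_self c, abs_nonneg c, abs_nonneg u]
    rw [Complex.norm_real, mul_assoc, ← Real.exp_add]
    exact (hM u).trans (le_mul_of_one_le_right hM0 (Real.one_le_exp hexp))

lemma apply_mul_weight_mul_cexp_eq (a : ArithmeticFunction ℂ) (g : ℝ → ℝ) (s : ℂ) (n : ℕ) (X : ℝ) :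
    a n * (g (Real.log n - X) : ℂ) * Complex.exp (-s * X) = LSeries.term a s n *
      ((g (Real.log n - X) : ℂ) * Complex.exp (s * (Real.log n - X : ℝ))) := by
  rcases eq_or_ne n 0 with rfl | hn
  · simp
  have hexp : Complex.exp (-s * X) =
      ((n : ℂ) ^ s)⁻¹ * Complex.exp (s * (Real.log n - X : ℝ)) := by
    rw [Complex.cpow_def_of_ne_zero (Nat.cast_ne_zero.2 hn), ← Complex.exp_neg, ← Complex.exp_add,
      Complex.ofReal_sub, Complex.natCast_log]
    ring_nf
  rw [LSeries.term_of_ne_zero hn, hexp]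
  ring

theorem laplace_smoothSum {a : ArithmeticFunction ℂ} (hg : IsWeight g R) {s : ℂ}
    (ha : LSeriesSummable a s) :
    laplace (smoothSum a g) (-s) = LSeries a s * laplace (fun u => (g u : ℂ)) s := by
  set K : ℝ → ℂ := fun u => (g u : ℂ) * Complex.exp (s * u)
  have hK : Integrable K := by
    refine Continuous.integrable_of_hasCompactSupport ?_
      (HasCompactSupport.mul_right (hg.hasCompactSupport.comp_left Complex.ofReal_zero))
    have := hg.cont
    fun_prop
  have hsum := hasSum_integral_of_summable_integral_norm
    (F := fun (n : ℕ) (X : ℝ) => LSeries.term a s n * K (Real.log n - X))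
    (fun n => (hK.comp_sub_left (Real.log n)).const_mul _) (by
      simp only [norm_mul, integral_const_mul]
      simp_rw [integral_sub_left_eq_self (fun u => ‖K u‖) volume]
      exact ha.norm.mul_right _)
  simp only [integral_const_mul, integral_sub_left_eq_self K volume] at hsum
  rw [LSeries, laplace, laplace, ← tsum_mul_right, hsum.tsum_eq]
  congr 1 with X
  simp only [smoothSum, ← tsum_mul_right, apply_mul_weight_mul_cexp_eq, K]

lemma laplace_weight_one_ne_zero (hg : IsWeight g R) : laplace (fun u => (g u : ℂ)) 1 ≠ 0 := by
  have hpos : 0 < ∫ u, g u * Real.exp u := by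
    have := hg.cont
    exact Continuous.integral_pos_of_hasCompactSupport_nonneg_nonzero (by fun_prop)
      hg.hasCompactSupport.mul_right (fun u => mul_nonneg (hg.nonneg u) (Real.exp_nonneg _))
      (x := 0) (by simpa using hg.pos.ne')
  have hreal : laplace (fun u => (g u : ℂ)) 1 = ((∫ u, g u * Real.exp u : ℝ) : ℂ) := by
    rw [laplace, ← integral_complex_ofReal]
    simp
  rw [hreal]
  exact_mod_cast hpos.ne'

theorem exists_analyticAt_eq_LSeries {a : ArithmeticFunction ℂ} (hg : IsWeight g R)
    (hdecay : HasExpDecay (smoothSum a g) 1)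
    (hne : ∫ X : ℝ, smoothSum a g X * (Real.exp (-X) : ℂ) ≠ 0)
    (ha : ∀ s : ℂ, 1 < s.re → LSeriesSummable a s) :
    ∃ F : ℂ → ℂ, AnalyticAt ℂ F 1 ∧ F 1 ≠ 0 ∧
      ∀ᶠ s in 𝓝 1, 1 < s.re → F s = LSeries a s := by
  set T : ℝ → ℂ := fun X => smoothSum a g X * (Real.exp (-X) : ℂ)
  have hlaplace (s : ℂ) : laplace T (1 - s) = laplace (smoothSum a g) (-s) := by
    refine integral_congr_ae (Eventually.of_forall fun X => ?_)
    simp only [T, mul_assoc, Complex.ofReal_exp, ← Complex.exp_add]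
    push_cast
    ring_nf
  have hG (s : ℂ) : DifferentiableAt ℂ (laplace fun u => (g u : ℂ)) s :=
    (hg.hasExpDecay (|s.re| + 1)).differentiableAt_laplace
      (Complex.continuous_ofReal.comp hg.cont) (lt_add_one _)
  have hG1 := laplace_weight_one_ne_zero hg
  have hGne : ∀ᶠ s in 𝓝 1, laplace (fun u => (g u : ℂ)) s ≠ 0 :=
    (hG 1).continuousAt.eventually_ne hG1
  have hstrip : ∀ᶠ s : ℂ in 𝓝 1, |(1 - s).re| < 1 :=
    (isOpen_lt (by fun_prop) continuous_const).mem_nhds (by simp)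
  refine ⟨fun s => laplace T (1 - s) / laplace (fun u => (g u : ℂ)) s, ?_, ?_, ?_⟩
  · refine Complex.analyticAt_iff_eventually_differentiableAt.2 ?_
    filter_upwards [hGne, hstrip] with s hs hs1
    refine DifferentiableAt.div ?_ (hG s) hs
    exact ((hdecay.smoothSum_mul_exp_neg hg).differentiableAt_laplace
      (continuous_smoothSum_mul_exp_neg a hg) hs1).comp s (by fun_prop)
  · refine div_ne_zero ?_ hG1
    simpa [laplace] using hne
  · filter_upwards [hGne] with s hs hs1
    rw [hlaplace, laplace_smoothSum hg (ha s hs1), mul_div_cancel_right₀ _ hs]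

/-- `LSeries ℓ` is minus the logarithmic derivative of `LSeries a`. -/
theorem exists_norm_LSeries_le_of_mul_log {a ℓ : ArithmeticFunction ℂ}
    (ha : ∀ s : ℂ, 1 < s.re → LSeriesSummable a s) (hℓ : ∀ s : ℂ, 1 < s.re → LSeriesSummable ℓ s)
    (hlog : ∀ n, a n * (Real.log n : ℂ) = (ℓ * a) n) {F : ℂ → ℂ} (hF : AnalyticAt ℂ F 1)
    (hF1 : F 1 ≠ 0) (hFa : ∀ᶠ s in 𝓝 1, 1 < s.re → F s = LSeries a s) :
    ∃ K : ℝ, ∀ᶠ s : ℝ in 𝓝[>] 1, ‖LSeries ℓ s‖ ≤ K := by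
  have hlogMul : LSeries.logMul a = ⇑(ℓ * a) := by
    ext n
    rw [LSeries.logMul, ← hlog, ← Complex.natCast_log, mul_comm]
  have habs : LSeries.abscissaOfAbsConv a ≤ (1 : ℝ) :=
    LSeries.abscissaOfAbsConv_le_of_forall_lt_LSeriesSummable fun y hy => ha y (by simpa using hy)
  have hderiv (s : ℂ) (hs : 1 < s.re) : deriv (LSeries a) s = -(LSeries ℓ s * LSeries a s) := by
    rw [LSeries_deriv (habs.trans_lt (by exact_mod_cast hs)), hlogMul,
      LSeries_mul' (hℓ s hs) (ha s hs)]
  have hquot : ∀ᶠ s : ℂ in 𝓝 1, 1 < s.re → LSeries ℓ s = -(deriv F s / F s) := by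
    filter_upwards [hF.continuousAt.eventually_ne hF1, hFa.eventually_nhds] with s hs0 hs hs1
    have hFs : F =ᶠ[𝓝 s] LSeries a := by
      filter_upwards [hs, (isOpen_lt continuous_const Complex.continuous_re).mem_nhds hs1]
        with w hw hw1 using hw hw1
    rw [hFs.deriv_eq, hderiv s hs1, ← hs.self_of_nhds hs1]
    field_simp
  have hcont : ContinuousAt (fun s => ‖-(deriv F s / F s)‖) 1 :=
    (hF.deriv.continuousAt.div hF.continuousAt hF1).neg.norm
  refine ⟨‖-(deriv F 1 / F 1)‖ + 1, ?_⟩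
  have hofReal : Tendsto (fun s : ℝ => (s : ℂ)) (𝓝[>] 1) (𝓝 1) :=
    (Complex.continuous_ofReal.tendsto' 1 1 Complex.ofReal_one).mono_left nhdsWithin_le_nhds
  filter_upwards [hofReal.eventually hquot, hofReal.eventually
    (hcont.eventually_le_const (lt_add_one _)), self_mem_nhdsWithin] with s hs hle hs1
  rw [hs (by simpa using hs1)]
  exact hle

end LogDeriv

/-! ### Dirichlet's theorem for class systems -/

section Dirichlet

open ArithmeticFunction Filter Topology

section DirichletSeries

variable {a : ℕ → ℝ}

lemma LSeries_term_ofReal (ha : a 0 = 0) (s : ℝ) (n : ℕ) :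
    LSeries.term (fun n => (a n : ℂ)) s n = ((a n / (n : ℝ) ^ s : ℝ) : ℂ) := by
  rcases eq_or_ne n 0 with rfl | hn
  · simp [ha]
  · rw [LSeries.term_of_ne_zero hn, Complex.ofReal_div, Complex.ofReal_cpow (Nat.cast_nonneg n),
      Complex.ofReal_natCast]

lemma LSeries_ofReal (ha : a 0 = 0) (s : ℝ) :
    LSeries (fun n => (a n : ℂ)) s = ((∑' n : ℕ, a n / (n : ℝ) ^ s : ℝ) : ℂ) := by
  rw [LSeries, Complex.ofReal_tsum]
  exact tsum_congr (LSeries_term_ofReal ha s)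

lemma lseriesSummable_ofReal_iff (ha : a 0 = 0) {s : ℂ} :
    LSeriesSummable (fun n => (a n : ℂ)) s ↔ Summable fun n : ℕ => a n / (n : ℝ) ^ s.re := by
  rw [LSeriesSummable_iff_of_re_eq_re (s' := (s.re : ℂ)) (Complex.ofReal_re _).symm,
    ← Complex.summable_ofReal, LSeriesSummable]
  exact summable_congr (LSeries_term_ofReal ha s.re)

lemma tsum_div_rpow_le_sum_of_tsum_log_le (ha : ∀ n, 0 ≤ a n) (ha0 : a 0 = 0) {s K : ℝ}
    (hs : 1 < s) (hK : 0 ≤ K) (hsum : Summable fun n : ℕ => a n / (n : ℝ) ^ s)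
    (hlog : Summable fun n : ℕ => a n * Real.log n / (n : ℝ) ^ s)
    (hle : ∑' n : ℕ, a n * Real.log n / (n : ℝ) ^ s ≤ K * ∑' n : ℕ, a n / (n : ℝ) ^ s)
    {N : ℕ} (hN : Real.exp (K + 1) ≤ N) :
    ∑' n : ℕ, a n / (n : ℝ) ^ s ≤ (K + 1) * ∑ n ∈ Finset.range N, a n := by
  set f : ℕ → ℝ := fun n => if n < N then a n else 0
  have hf : HasSum f (∑ n ∈ Finset.range N, a n) := by
    rw [← Finset.sum_congr rfl fun n hn => if_pos (Finset.mem_range.1 hn)]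
    exact hasSum_sum_of_ne_finset_zero fun n hn => if_neg (by simpa using hn)
  -- Beyond `N` the logarithm exceeds `K + 1`.
  have hterm (n : ℕ) : (K + 1) * (a n / (n : ℝ) ^ s) ≤
      a n * Real.log n / (n : ℝ) ^ s + (K + 1) * f n := by
    rcases Nat.eq_zero_or_pos n with rfl | hn
    · simp [f, ha0]
    have hn1 : (1 : ℝ) ≤ n := by exact_mod_cast hn
    have hlogterm : 0 ≤ a n * Real.log n / (n : ℝ) ^ s :=
      div_nonneg (mul_nonneg (ha n) (Real.log_nonneg hn1)) (by positivity)
    rcases lt_or_ge n N with hnN | hnN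
    · have hdiv : a n / (n : ℝ) ^ s ≤ a n :=
        div_le_self (ha n) (Real.one_le_rpow hn1 (by linarith))
      simp only [f, if_pos hnN]
      nlinarith
    · have hlogn : K + 1 ≤ Real.log n := by
        rw [Real.le_log_iff_exp_le (by linarith)]
        exact hN.trans (by exact_mod_cast hnN)
      simp only [f, if_neg (not_lt.2 hnN), mul_zero, add_zero]
      rw [mul_div_right_comm, mul_comm (a n / _)]
      exact mul_le_mul_of_nonneg_right hlogn (div_nonneg (ha n) (by positivity))
  have htsum := (hsum.mul_left (K + 1)).tsum_le_tsum hterm (hlog.add (hf.mul_left (K + 1)).summable)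
  rw [tsum_mul_left, hlog.tsum_add (hf.mul_left (K + 1)).summable, tsum_mul_left,
    hf.tsum_eq] at htsum
  linarith

lemma summable_div_of_eventually_tsum_le (ha : ∀ n, 0 ≤ a n) {C : ℝ}
    (hsum : ∀ s : ℝ, 1 < s → Summable fun n : ℕ => a n / (n : ℝ) ^ s)
    (hC : ∀ᶠ s : ℝ in 𝓝[>] 1, ∑' n : ℕ, a n / (n : ℝ) ^ s ≤ C) :
    Summable fun n : ℕ => a n / n := by
  have hterm (s : ℝ) (n : ℕ) : 0 ≤ a n / (n : ℝ) ^ s := div_nonneg (ha n) (by positivity)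
  refine summable_of_sum_le (c := C) (fun n => by simpa using hterm 1 n) fun t => ?_
  have hlim : Tendsto (fun s : ℝ => ∑ n ∈ t, a n / (n : ℝ) ^ s) (𝓝[>] 1)
      (𝓝 (∑ n ∈ t, a n / n)) := by
    refine tendsto_finsetSum _ fun n _ => ?_
    rcases eq_or_ne n 0 with rfl | hn
    · refine (tendsto_congr' ?_).2 tendsto_const_nhds
      filter_upwards [self_mem_nhdsWithin] with s hs
      rw [Nat.cast_zero, Real.zero_rpow (zero_lt_one.trans hs).ne']
    · have hn' : (n : ℝ) ≠ 0 := Nat.cast_ne_zero.2 hn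
      have hcont : Continuous fun s : ℝ => a n / (n : ℝ) ^ s :=
        continuous_const.div (Real.continuous_const_rpow hn') fun s =>
          (Real.rpow_pos_of_pos (Nat.cast_pos.2 (Nat.pos_of_ne_zero hn)) s).ne'
      exact (hcont.tendsto' 1 _ (by rw [Real.rpow_one])).mono_left nhdsWithin_le_nhds
  refine le_of_tendsto hlim ?_
  filter_upwards [hC, self_mem_nhdsWithin] with s hs hs1
  exact ((hsum s hs1).sum_le_tsum t fun n _ => hterm s n).trans hs

end DirichletSeries

variable {g : ℝ → ℝ} {R κ : ℝ}

lemma tendsto_exp_neg_mul_tsum (hg : IsWeight g R) {a : ArithmeticFunction ℝ}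
    (ha : ∀ n, 0 ≤ a n) (hsum : Summable fun n : ℕ => a n / n) :
    Tendsto (fun X => Real.exp (-X) * ∑' n, a n * g (Real.log n - X)) atTop (𝓝 0) := by
  obtain ⟨M, hM⟩ := hg.cont.bounded_above_of_compact_support hg.hasCompactSupport
  have hM0 : 0 ≤ M := (norm_nonneg _).trans (hM 0)
  simp_rw [← tsum_mul_left]
  rw [← tsum_zero (α := ℝ) (β := ℕ)]
  refine tendsto_tsum_of_dominated_convergence (hsum.mul_left (M * Real.exp R)) (fun n => ?_)
    (Eventually.of_forall fun X n => ?_)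
  · refine (tendsto_congr' ?_).2 tendsto_const_nhds
    filter_upwards [eventually_gt_atTop (Real.log n + R)] with X hX
    rw [hg.supp _ (lt_abs.2 (Or.inr (by linarith))), mul_zero, mul_zero]
  · rcases Nat.eq_zero_or_pos n with rfl | hn
    · simp
    rw [norm_mul, norm_mul, Real.norm_of_nonneg (ha n), Real.norm_of_nonneg (Real.exp_nonneg _)]
    rcases lt_or_ge R |Real.log n - X| with hX | hX
    · rw [hg.supp _ hX, norm_zero, mul_zero, mul_zero]
      exact mul_nonneg (by positivity) (div_nonneg (ha n) (Nat.cast_nonneg n))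
    · have hexp : Real.exp (-X) ≤ Real.exp R / n := by
        rw [← Real.exp_log (Nat.cast_pos.2 hn), ← Real.exp_sub, Real.exp_le_exp]
        linarith [(abs_le.1 hX).2]
      calc Real.exp (-X) * (a n * ‖g (Real.log n - X)‖)
          ≤ Real.exp R / n * (a n * M) := by
            gcongr
            · exact mul_nonneg (ha n) (norm_nonneg _)
            · exact ha n
            · exact hM _
        _ = M * Real.exp R * (a n / n) := by ring

lemma not_summable_div_of_hasExpDecay (hg : IsWeight g R) {a : ArithmeticFunction ℝ}
    (ha : ∀ n, 0 ≤ a n) (hκ : κ ≠ 0)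
    (hdecay : HasExpDecay (fun X => ∑' n, a n * g (Real.log n - X) - κ * Real.exp X) 1) :
    ¬ Summable fun n : ℕ => a n / n := by
  intro hsum
  obtain ⟨B, hB⟩ := hdecay
  have hB0 : 0 ≤ B := by simpa using (norm_nonneg _).trans (hB 0)
  have hzero : Tendsto (fun X => Real.exp (-X) *
      (∑' n, a n * g (Real.log n - X) - κ * Real.exp X)) atTop (𝓝 0) := by
    refine squeeze_zero_norm (fun X => ?_)
      (by simpa using Real.tendsto_exp_neg_atTop_nhds_zero.mul_const B)
    rw [norm_mul, Real.norm_of_nonneg (Real.exp_nonneg _)]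
    refine mul_le_mul_of_nonneg_left ((hB X).trans (mul_le_of_le_one_right hB0 ?_))
      (Real.exp_nonneg _)
    simp
  have hκ' : Tendsto (fun X => Real.exp (-X) *
      (∑' n, a n * g (Real.log n - X) - κ * Real.exp X)) atTop (𝓝 (0 - κ)) := by
    refine ((tendsto_exp_neg_mul_tsum hg ha hsum).sub_const κ).congr fun X => ?_
    rw [mul_sub, mul_left_comm, ← Real.exp_add, neg_add_cancel, Real.exp_zero, mul_one]
  exact hκ (by simpa using tendsto_nhds_unique hzero hκ')

variable {Γ : Type*} [AddCommGroup Γ] [Fintype Γ] {A L : Γ → ArithmeticFunction ℝ}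

section TwistSeries

variable {a : Γ → ArithmeticFunction ℝ} {s : ℂ}

lemma lseriesHasSum_twist (ha : ∀ c, LSeriesSummable (fun n => (a c n : ℂ)) s)
    (χ : AddChar Γ ℂ) :
    LSeriesHasSum (twist a χ) s (∑ c, χ c * LSeries (fun n => (a c n : ℂ)) s) := by
  have htwist : ⇑(twist a χ) = ∑ c, χ c • fun n => (a c n : ℂ) := by
    ext n
    simp [twist_apply]
  rw [htwist]
  exact LSeriesHasSum.sum fun c _ => (ha c).LSeriesHasSum.smul (χ c)

lemma sum_mul_LSeries_twist (ha : ∀ c, LSeriesSummable (fun n => (a c n : ℂ)) s) (c : Γ) :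
    ∑ χ : AddChar Γ ℂ, χ (-c) * LSeries (twist a χ) s =
      Fintype.card Γ * LSeries (fun n => (a c n : ℂ)) s := by
  classical
  have horth (c' : Γ) :
      ∑ χ : AddChar Γ ℂ, χ (-c) * χ c' = if c = c' then ↑(Fintype.card Γ) else 0 := by
    simp only [← AddChar.map_add_eq_mul, AddChar.sum_apply_eq_ite, neg_add_eq_zero]
  simp only [(lseriesHasSum_twist ha _).LSeries_eq, Finset.mul_sum, ← mul_assoc]
  rw [Finset.sum_comm]
  simp only [← Finset.sum_mul, horth, ite_mul, zero_mul, Finset.sum_ite_eq, Finset.mem_univ,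
    if_true]

end TwistSeries

namespace IsClassSystem

lemma lseriesSummable_A (h : IsClassSystem A L) (c : Γ) {s : ℂ} (hs : 1 < s.re) :
    LSeriesSummable (fun n => (A c n : ℂ)) s :=
  (lseriesSummable_ofReal_iff ArithmeticFunction.map_zero).2 (h.summable c s.re hs)

lemma L_le_mul_log (h : IsClassSystem A L) (c : Γ) (n : ℕ) : L c n ≤ A c n * Real.log n := by
  rcases eq_or_ne n 0 with rfl | hn
  · simp
  have hterm (c' : Γ) (x : ℕ × ℕ) : 0 ≤ L c' x.1 * A (c - c') x.2 :=
    mul_nonneg (h.L_nonneg _ _) (h.A_nonneg _ _)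
  calc L c n = L c n * A (c - c) 1 := by rw [sub_self, h.A_zero_one, mul_one]
    _ ≤ (L c * A (c - c)) n := by
      rw [mul_apply]
      exact Finset.single_le_sum (f := fun x : ℕ × ℕ => L c x.1 * A (c - c) x.2)
        (fun x _ => hterm c x)
        (show (n, 1) ∈ n.divisorsAntidiagonal from
          Nat.mem_divisorsAntidiagonal.2 ⟨mul_one n, hn⟩)
    _ ≤ ∑ c', (L c' * A (c - c')) n :=
      Finset.single_le_sum (f := fun c' => (L c' * A (c - c')) n)
        (fun c' _ => by rw [mul_apply]; exact Finset.sum_nonneg fun x _ => hterm c' x)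
        (Finset.mem_univ c)
    _ = A c n * Real.log n := (h.log_eq c n).symm

lemma lseriesSummable_L (h : IsClassSystem A L) (c : Γ) {s : ℂ} (hs : 1 < s.re) :
    LSeriesSummable (fun n => (L c n : ℂ)) s := by
  have habs : LSeries.abscissaOfAbsConv (fun n => (A c n : ℂ)) ≤ (1 : ℝ) :=
    LSeries.abscissaOfAbsConv_le_of_forall_lt_LSeriesSummable
      fun y hy => h.lseriesSummable_A c (by simpa using hy)
  have hlog : LSeriesSummable (LSeries.logMul fun n => (A c n : ℂ)) s :=
    LSeriesSummable_logMul_of_lt_re (habs.trans_lt (by exact_mod_cast hs))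
  refine Summable.of_norm_bounded hlog.norm fun n => LSeries.norm_term_le _ ?_
  rw [LSeries.logMul, ← Complex.natCast_log, ← Complex.ofReal_mul, Complex.norm_real,
    Complex.norm_real, Real.norm_of_nonneg (h.L_nonneg c n), mul_comm]
  exact (h.L_le_mul_log c n).trans (le_abs_self _)

lemma lseriesSummable_twist_A (h : IsClassSystem A L) (χ : AddChar Γ ℂ) {s : ℂ} (hs : 1 < s.re) :
    LSeriesSummable (twist A χ) s :=
  (lseriesHasSum_twist (fun c => h.lseriesSummable_A c hs) χ).LSeriesSummable

lemma lseriesSummable_twist_L (h : IsClassSystem A L) (χ : AddChar Γ ℂ) {s : ℂ} (hs : 1 < s.re) :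
    LSeriesSummable (twist L χ) s :=
  (lseriesHasSum_twist (fun c => h.lseriesSummable_L c hs) χ).LSeriesSummable

lemma coe_twist_mul_twist_zero (h : IsClassSystem A L) :
    ⇑(twist L 0 * twist A 0) = fun n => (((∑ c, A c n) * Real.log n : ℝ) : ℂ) := by
  ext n
  rw [← h.twist_log, twist_zero_apply, Complex.ofReal_mul]

lemma summable_sum_mul_log_div_rpow (h : IsClassSystem A L) {s : ℝ} (hs : 1 < s) :
    Summable fun n : ℕ => (∑ c, A c n) * Real.log n / (n : ℝ) ^ s := by
  have hs' : 1 < (s : ℂ).re := hs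
  have hmul := LSeriesSummable_mul (h.lseriesSummable_twist_L 0 hs')
    (h.lseriesSummable_twist_A 0 hs')
  rw [h.coe_twist_mul_twist_zero] at hmul
  simpa only [Complex.ofReal_re] using (lseriesSummable_ofReal_iff (by simp)).1 hmul

lemma LSeries_twist_zero_mul_tsum (h : IsClassSystem A L) {s : ℝ} (hs : 1 < s) :
    LSeries (twist L 0) s * ((∑' n : ℕ, (∑ c, A c n) / (n : ℝ) ^ s : ℝ) : ℂ) =
      ((∑' n : ℕ, (∑ c, A c n) * Real.log n / (n : ℝ) ^ s : ℝ) : ℂ) := by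
  have hs' : 1 < (s : ℂ).re := hs
  have hA : ⇑(twist A 0) = fun n => ((∑ c, A c n : ℝ) : ℂ) := funext (twist_zero_apply A)
  rw [← LSeries_ofReal (by simp), ← LSeries_ofReal (by simp), ← hA, ← h.coe_twist_mul_twist_zero,
    LSeries_mul' (h.lseriesSummable_twist_L 0 hs') (h.lseriesSummable_twist_A 0 hs')]

lemma not_bounded_LSeries_twist_zero (h : IsClassSystem A L) (hg : IsWeight g R)
    (hA : ∀ c, HasExpDecay (fun X => ∑' n, A c n * g (Real.log n - X) - κ * Real.exp X) 1)
    (hκ : κ ≠ 0) : ¬ ∃ K : ℝ, ∀ᶠ s : ℝ in 𝓝[>] 1, ‖LSeries (twist L 0) s‖ ≤ K := by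
  rintro ⟨K, hK⟩
  obtain ⟨_, hs₀⟩ := hK.exists
  have hK0 : 0 ≤ K := (norm_nonneg _).trans hs₀
  obtain ⟨N, hN⟩ := exists_nat_ge (Real.exp (K + 1))
  set a : ℕ → ℝ := fun n => ∑ c, A c n
  have ha (n : ℕ) : 0 ≤ a n := Finset.sum_nonneg fun c _ => h.A_nonneg c n
  have ha0 : a 0 = 0 := by simp [a]
  have hsum (s : ℝ) (hs : 1 < s) : Summable fun n : ℕ => a n / (n : ℝ) ^ s := by
    simpa only [a, Finset.sum_div] using summable_sum fun c _ => h.summable c s hs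
  have hbound : ∀ᶠ s : ℝ in 𝓝[>] 1,
      ∑' n : ℕ, a n / (n : ℝ) ^ s ≤ (K + 1) * ∑ n ∈ Finset.range N, a n := by
    filter_upwards [hK, self_mem_nhdsWithin] with s hs hs1
    have hr : 0 ≤ ∑' n : ℕ, a n / (n : ℝ) ^ s :=
      tsum_nonneg fun n => div_nonneg (ha n) (by positivity)
    refine tsum_div_rpow_le_sum_of_tsum_log_le ha ha0 hs1 hK0 (hsum s hs1)
      (h.summable_sum_mul_log_div_rpow hs1) ?_ hN
    refine (le_abs_self _).trans ?_
    rw [← Real.norm_eq_abs, ← Complex.norm_real, ← h.LSeries_twist_zero_mul_tsum hs1, norm_mul,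
      Complex.norm_real, Real.norm_of_nonneg hr]
    exact mul_le_mul_of_nonneg_right hs hr
  refine not_summable_div_of_hasExpDecay hg (h.A_nonneg 0) hκ (hA 0)
    (Summable.of_nonneg_of_le (fun n => div_nonneg (h.A_nonneg 0 n) (Nat.cast_nonneg n))
      (fun n => ?_) (summable_div_of_eventually_tsum_le ha hsum hbound))
  gcongr
  exact Finset.single_le_sum (f := fun c => A c n) (fun c _ => h.A_nonneg c n) (Finset.mem_univ 0)

lemma norm_LSeries_L_le (h : IsClassSystem A L) {c : Γ} (hc : Summable fun n : ℕ => L c n / n)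
    {s : ℝ} (hs : 1 < s) : ‖LSeries (fun n => (L c n : ℂ)) s‖ ≤ ∑' n : ℕ, L c n / n := by
  have hL0 : L c 0 = 0 := ArithmeticFunction.map_zero
  have hs' : 1 < (s : ℂ).re := hs
  rw [LSeries_ofReal hL0, Complex.norm_real, Real.norm_of_nonneg
    (tsum_nonneg fun n => div_nonneg (h.L_nonneg c n) (by positivity))]
  have hsum : Summable fun n : ℕ => L c n / (n : ℝ) ^ s := by
    simpa only [Complex.ofReal_re] using
      (lseriesSummable_ofReal_iff hL0).1 (h.lseriesSummable_L c hs')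
  refine hsum.tsum_le_tsum (fun n => ?_) hc
  rcases Nat.eq_zero_or_pos n with rfl | hn
  · simp
  have hn1 : (1 : ℝ) ≤ n := by exact_mod_cast hn
  exact div_le_div_of_nonneg_left (h.L_nonneg c n) (by linarith)
    (Real.self_le_rpow_of_one_le hn1 hs.le)

theorem not_summable (h : IsClassSystem A L) (hg : IsWeight g R)
    (hA : ∀ c, HasExpDecay (fun X => ∑' n, A c n * g (Real.log n - X) - κ * Real.exp X) 1)
    (hκ : κ ≠ 0) {q : ℕ} (hq : 2 ≤ q) {δ : ℝ} (hδ : 0 < δ)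
    (hL : ∀ i : ℕ, 1 ≤ i → δ ≤ L 0 (q ^ i)) (c : Γ) : ¬ Summable fun n : ℕ => L c n / n := by
  classical
  intro hc
  have hbound (χ : AddChar Γ ℂ) (hχ : χ ≠ 0) :
      ∃ K : ℝ, ∀ᶠ s : ℝ in 𝓝[>] 1, ‖LSeries (twist L χ) s‖ ≤ K := by
    obtain ⟨F, hF, hF1, hFA⟩ := exists_analyticAt_eq_LSeries hg
      (hasExpDecay_smoothSum_twist_of_ne_zero hg hA hχ)
      (h.integral_smoothSum_twist_ne_zero hg hA hq hδ hL hχ)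
      fun _ hs => h.lseriesSummable_twist_A χ hs
    exact exists_norm_LSeries_le_of_mul_log (fun _ hs => h.lseriesSummable_twist_A χ hs)
      (fun _ hs => h.lseriesSummable_twist_L χ hs) (h.twist_log χ) hF hF1 hFA
  choose! K hK using hbound
  refine h.not_bounded_LSeries_twist_zero hg hA hκ
    ⟨Fintype.card Γ * (∑' n : ℕ, L c n / n) + ∑ χ ∈ Finset.univ.erase 0, K χ, ?_⟩
  have hK' : ∀ᶠ s : ℝ in 𝓝[>] 1, ∀ χ ∈ Finset.univ.erase (0 : AddChar Γ ℂ),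
      ‖LSeries (twist L χ) s‖ ≤ K χ :=
    (eventually_all_finset _).2 fun χ hχ => hK χ (Finset.ne_of_mem_erase hχ)
  filter_upwards [hK', self_mem_nhdsWithin] with s hs hs1
  have horth := sum_mul_LSeries_twist (s := (s : ℂ)) (fun c => h.lseriesSummable_L c hs1) c
  rw [← Finset.add_sum_erase _ _ (Finset.mem_univ 0), AddChar.zero_apply, one_mul] at horth
  rw [eq_sub_of_add_eq horth]
  refine (norm_sub_le _ _).trans (add_le_add ?_ (norm_sum_le_of_le _ fun χ hχ => ?_))
  · rw [norm_mul, Complex.norm_natCast]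
    exact mul_le_mul_of_nonneg_left (h.norm_LSeries_L_le hc hs1) (Nat.cast_nonneg _)
  · rw [norm_mul, AddChar.norm_apply, one_mul]
    exact hs χ hχ

end IsClassSystem

end Dirichlet

section MixedWeight

open Module
open scoped Classical
open NumberField.mixedEmbedding NumberField.InfinitePlace
open NumberField.Units.dirichletUnitTheorem

variable {K : Type*} [Field K]

/-- The points of the mixed space all of whose real coordinates are positive and whose complex
coordinates do not vanish. -/
def posCone (K : Type*) [Field K] : Set (mixedSpace K) :=
  {y | (∀ w, 0 < y.1 w) ∧ ∀ w, y.2 w ≠ 0}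

lemma one_mem_posCone : (1 : mixedSpace K) ∈ posCone K :=
  ⟨fun _ => zero_lt_one, fun _ => one_ne_zero⟩

lemma normAtPlace_pos_of_mem_posCone {y : mixedSpace K} (hy : y ∈ posCone K)
    (w : InfinitePlace K) : 0 < normAtPlace w y := by
  rcases w.isReal_or_isComplex with hw | hw
  · rw [normAtPlace_apply_of_isReal hw]
    exact norm_pos_iff.2 (hy.1 ⟨w, hw⟩).ne'
  · rw [normAtPlace_apply_of_isComplex hw]
    exact norm_pos_iff.2 (hy.2 ⟨w, hw⟩)

variable [NumberField K]

lemma isOpen_posCone : IsOpen (posCone K) := by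
  refine IsOpen.inter (s := {y : mixedSpace K | ∀ w, 0 < y.1 w})
    (t := {y : mixedSpace K | ∀ w, y.2 w ≠ 0}) ?_ ?_
  · simp only [Set.ofPred_forall]
    exact isOpen_iInter_of_finite fun w => isOpen_lt continuous_const (by fun_prop)
  · simp only [Set.ofPred_forall]
    exact isOpen_iInter_of_finite fun w => isOpen_ne_fun (by fun_prop) continuous_const

lemma norm_ne_zero_of_mem_posCone {y : mixedSpace K} (hy : y ∈ posCone K) :
    mixedEmbedding.norm y ≠ 0 :=
  mixedEmbedding.norm_ne_zero_iff.2 fun w => (normAtPlace_pos_of_mem_posCone hy w).ne'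

lemma contDiffAt_normAtPlace {y : mixedSpace K} (hy : y ∈ posCone K) (w : InfinitePlace K) :
    ContDiffAt ℝ (⊤ : ℕ∞) (fun z : mixedSpace K => normAtPlace w z) y := by
  rcases w.isReal_or_isComplex with hw | hw
  · simp only [normAtPlace_apply_of_isReal hw]
    refine ContDiffAt.norm ℝ ?_ (hy.1 ⟨w, hw⟩).ne'
    exact (contDiff_apply ℝ ℝ (⟨w, hw⟩ : {w : InfinitePlace K // IsReal w})).contDiffAt.comp y
      contDiffAt_fst
  · simp only [normAtPlace_apply_of_isComplex hw]
    refine ContDiffAt.norm ℝ ?_ (hy.2 ⟨w, hw⟩)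
    exact (contDiff_apply ℝ ℂ (⟨w, hw⟩ : {w : InfinitePlace K // IsComplex w})).contDiffAt.comp y
      contDiffAt_snd

lemma contDiffAt_log_norm {y : mixedSpace K} (hy : y ∈ posCone K) :
    ContDiffAt ℝ (⊤ : ℕ∞) (fun z : mixedSpace K => Real.log (mixedEmbedding.norm z)) y := by
  refine ContDiffAt.log ?_ (norm_ne_zero_of_mem_posCone hy)
  change ContDiffAt ℝ _ (fun z : mixedSpace K => ∏ w, normAtPlace w z ^ mult w) y
  exact contDiffAt_prod fun w _ => (contDiffAt_normAtPlace hy w).pow _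

lemma contDiffAt_logMap {y : mixedSpace K} (hy : y ∈ posCone K) :
    ContDiffAt ℝ (⊤ : ℕ∞) (fun z : mixedSpace K => logMap z) y := by
  refine contDiffAt_pi.2 fun w => ?_
  simp only [logMap_apply]
  exact contDiffAt_const.mul <| ((contDiffAt_normAtPlace hy w.1).log
    (normAtPlace_pos_of_mem_posCone hy w.1).ne').sub ((contDiffAt_log_norm hy).mul contDiffAt_const)

lemma log_norm_eq_sum {y : mixedSpace K} (hy : mixedEmbedding.norm y ≠ 0) :
    Real.log (mixedEmbedding.norm y) =
      ∑ w : InfinitePlace K, mult w * Real.log (normAtPlace w y) := by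
  rw [mixedEmbedding.norm_apply,
    Real.log_prod fun w _ => pow_ne_zero _ (mixedEmbedding.norm_ne_zero_iff.1 hy w)]
  simp only [Real.log_pow]

lemma abs_log_normAtPlace_le_of_ne {y : mixedSpace K} {R ρ : ℝ}
    (hR : |Real.log (mixedEmbedding.norm y)| ≤ R) (hρ : ‖logMap y‖ ≤ ρ) {w : InfinitePlace K}
    (hw : w ≠ w₀) : |Real.log (normAtPlace w y)| ≤ ρ + R := by
  set d : ℝ := (finrank ℚ K : ℝ)
  have hd : |d⁻¹| ≤ 1 := by
    rw [abs_inv, Nat.abs_cast]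
    exact inv_le_one_of_one_le₀ (Nat.one_le_cast.2 finrank_pos)
  have hlogMap : mult w * |Real.log (normAtPlace w y) -
      Real.log (mixedEmbedding.norm y) * d⁻¹| ≤ ρ := by
    simpa only [logMap_apply, Real.norm_eq_abs, abs_mul, Nat.abs_cast] using
      (norm_le_pi_norm (logMap y) ⟨w, hw⟩).trans hρ
  have hnorm : |Real.log (mixedEmbedding.norm y) * d⁻¹| ≤ R := by
    rw [abs_mul]
    exact (mul_le_of_le_one_right (abs_nonneg _) hd).trans hR
  have hsub : |Real.log (normAtPlace w y) - Real.log (mixedEmbedding.norm y) * d⁻¹| ≤ ρ :=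
    (le_mul_of_one_le_left (abs_nonneg _) one_le_mult).trans hlogMap
  simpa only [sub_add_cancel] using (abs_add_le _ _).trans (add_le_add hsub hnorm)

lemma abs_log_normAtPlace_le {y : mixedSpace K} (hy : mixedEmbedding.norm y ≠ 0) {R ρ : ℝ}
    (hR : |Real.log (mixedEmbedding.norm y)| ≤ R) (hρ : ‖logMap y‖ ≤ ρ) (w : InfinitePlace K) :
    |Real.log (normAtPlace w y)| ≤ R + finrank ℚ K * (ρ + R) := by
  have hR0 : 0 ≤ R := (abs_nonneg _).trans hR
  have hρ0 : 0 ≤ ρ := (norm_nonneg _).trans hρ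
  rcases eq_or_ne w w₀ with rfl | hw
  · have hsum : |∑ w ∈ Finset.univ.erase (w₀ (K := K)), mult w * Real.log (normAtPlace w y)| ≤
        finrank ℚ K * (ρ + R) := by
      rw [← sum_mult_eq, Nat.cast_sum, Finset.sum_mul]
      refine (Finset.abs_sum_le_sum_abs _ _).trans ((Finset.sum_le_sum fun w hw => ?_).trans
        (Finset.sum_le_univ_sum_of_nonneg fun w => by positivity))
      rw [abs_mul, Nat.abs_cast]
      gcongr
      exact abs_log_normAtPlace_le_of_ne hR hρ (Finset.ne_of_mem_erase hw)
    have hw₀ : mult (w₀ (K := K)) * Real.log (normAtPlace w₀ y) =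
        Real.log (mixedEmbedding.norm y) -
          ∑ w ∈ Finset.univ.erase (w₀ (K := K)), mult w * Real.log (normAtPlace w y) := by
      rw [log_norm_eq_sum hy, ← Finset.add_sum_erase _ _ (Finset.mem_univ w₀), add_sub_cancel_right]
    calc |Real.log (normAtPlace w₀ y)|
        ≤ |mult (w₀ (K := K)) * Real.log (normAtPlace w₀ y)| := by
          rw [abs_mul, Nat.abs_cast]
          exact le_mul_of_one_le_left (abs_nonneg _) one_le_mult
      _ ≤ R + finrank ℚ K * (ρ + R) := by
          rw [hw₀]
          exact (abs_sub _ _).trans (add_le_add hR hsum)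
  · have hd : (1 : ℝ) ≤ finrank ℚ K := Nat.one_le_cast.2 finrank_pos
    exact (abs_log_normAtPlace_le_of_ne hR hρ hw).trans
      (le_add_of_nonneg_of_le hR0 (le_mul_of_one_le_left (by positivity) hd))

/-- The weight `G (log N(y)) * η (logMap y)` on the positive cone, extended by `0` to the mixed
space: `G` localizes the norm and `η` the direction of `y` up to units. -/
def mixedWeight (G : ℝ → ℝ) (η : logSpace K → ℝ) : mixedSpace K → ℝ :=
  (posCone K).indicator fun y => G (Real.log (mixedEmbedding.norm y)) * η (logMap y)

/-- The part of the positive cone on which all absolute values lie between `exp (-M)` and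
`exp M`; these compact sets exhaust the cone. -/
def boundedCone (K : Type*) [Field K] [NumberField K] (M : ℝ) : Set (mixedSpace K) :=
  {y | (∀ w, Real.exp (-M) ≤ y.1 w) ∧ (∀ w, Real.exp (-M) ≤ ‖y.2 w‖) ∧ ‖y‖ ≤ Real.exp M}

lemma isCompact_boundedCone (M : ℝ) : IsCompact (boundedCone K M) := by
  refine Metric.isCompact_of_isClosed_isBounded (IsClosed.inter ?_ (IsClosed.inter ?_
    (isClosed_le continuous_norm continuous_const)))
    (isBounded_iff_forall_norm_le.2 ⟨_, fun y hy => hy.2.2⟩)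
  · change IsClosed {y : mixedSpace K | ∀ w, Real.exp (-M) ≤ y.1 w}
    simp only [Set.ofPred_forall]
    exact isClosed_iInter fun w => isClosed_le continuous_const (by fun_prop)
  · change IsClosed {y : mixedSpace K | ∀ w, Real.exp (-M) ≤ ‖y.2 w‖}
    simp only [Set.ofPred_forall]
    exact isClosed_iInter fun w => isClosed_le continuous_const (by fun_prop)

lemma boundedCone_subset_posCone (M : ℝ) : boundedCone K M ⊆ posCone K := fun _ hy =>
  ⟨fun w => (Real.exp_pos _).trans_le (hy.1 w),
    fun w => norm_pos_iff.1 ((Real.exp_pos _).trans_le (hy.2.1 w))⟩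

lemma mem_boundedCone {y : mixedSpace K} (hy : y ∈ posCone K) {M : ℝ}
    (hM : ∀ w, |Real.log (normAtPlace w y)| ≤ M) : y ∈ boundedCone K M := by
  have hlow (w : InfinitePlace K) : Real.exp (-M) ≤ normAtPlace w y :=
    (Real.le_log_iff_exp_le (normAtPlace_pos_of_mem_posCone hy w)).1 (abs_le.1 (hM w)).1
  refine ⟨fun w => ?_, fun w => ?_, ?_⟩
  · simpa only [normAtPlace_apply_of_isReal w.2, Real.norm_of_nonneg (hy.1 w).le] using hlow w.1
  · simpa only [normAtPlace_apply_of_isComplex w.2] using hlow w.1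
  · rw [norm_eq_sup'_normAtPlace]
    exact Finset.sup'_le _ _ fun w _ =>
      (Real.log_le_iff_le_exp (normAtPlace_pos_of_mem_posCone hy w)).1 (abs_le.1 (hM w)).2

variable {G : ℝ → ℝ} {η : logSpace K → ℝ}

lemma exists_support_mixedWeight_subset (hG : HasCompactSupport G) (hη : HasCompactSupport η) :
    ∃ M : ℝ, Function.support (mixedWeight G η) ⊆ boundedCone K M := by
  obtain ⟨R, hR⟩ := hG.isCompact.isBounded.exists_norm_le
  obtain ⟨ρ, hρ⟩ := hη.isCompact.isBounded.exists_norm_le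
  refine ⟨R + finrank ℚ K * (ρ + R), fun y hy => ?_⟩
  have hyP : y ∈ posCone K := Set.mem_of_indicator_ne_zero hy
  rw [Function.mem_support, mixedWeight, Set.indicator_of_mem hyP] at hy
  exact mem_boundedCone hyP <| abs_log_normAtPlace_le (norm_ne_zero_of_mem_posCone hyP)
    (hR _ (subset_tsupport _ (left_ne_zero_of_mul hy)))
    (hρ _ (subset_tsupport _ (right_ne_zero_of_mul hy)))

lemma hasCompactSupport_mixedWeight (hG : HasCompactSupport G) (hη : HasCompactSupport η) :
    HasCompactSupport (mixedWeight G η) := by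
  obtain ⟨M, hM⟩ := exists_support_mixedWeight_subset hG hη
  exact HasCompactSupport.intro (isCompact_boundedCone M) fun y hy =>
    Function.notMem_support.1 fun h => hy (hM h)

lemma contDiff_mixedWeight (hG : HasCompactSupport G) (hη : HasCompactSupport η)
    (hGc : ContDiff ℝ (⊤ : ℕ∞) G) (hηc : ContDiff ℝ (⊤ : ℕ∞) η) :
    ContDiff ℝ (⊤ : ℕ∞) (mixedWeight G η) := by
  obtain ⟨M, hM⟩ := exists_support_mixedWeight_subset hG hη
  refine contDiff_iff_contDiffAt.2 fun y => ?_
  by_cases hy : y ∈ posCone K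
  · refine ((hGc.contDiffAt.comp y (contDiffAt_log_norm hy)).mul
      (hηc.contDiffAt.comp y (contDiffAt_logMap hy))).congr_of_eventuallyEq ?_
    filter_upwards [isOpen_posCone.mem_nhds hy] with z hz
    exact Set.indicator_of_mem hz _
  · refine (contDiffAt_const (c := 0)).congr_of_eventuallyEq ?_
    filter_upwards [(isCompact_boundedCone M).isClosed.isOpen_compl.mem_nhds
      fun h => hy (boundedCone_subset_posCone M h)] with z hz
    exact Function.notMem_support.1 fun h => hz (hM h)

lemma integral_mixedWeight_pos (hG : HasCompactSupport G) (hη : HasCompactSupport η)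
    (hGc : ContDiff ℝ (⊤ : ℕ∞) G) (hηc : ContDiff ℝ (⊤ : ℕ∞) η)
    (hG0 : ∀ u, 0 ≤ G u) (hη0 : ∀ u, 0 ≤ η u) (hG1 : 0 < G 0) (hη1 : 0 < η 0) :
    0 < ∫ y, mixedWeight G η y := by
  refine (contDiff_mixedWeight hG hη hGc hηc).continuous
    |>.integral_pos_of_hasCompactSupport_nonneg_nonzero (hasCompactSupport_mixedWeight hG hη)
      (Set.indicator_nonneg fun y _ => mul_nonneg (hG0 _) (hη0 _)) (x := 1) ?_
  rw [mixedWeight, Set.indicator_of_mem one_mem_posCone, map_one, Real.log_one, logMap_one]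
  exact (mul_pos hG1 hη1).ne'

end MixedWeight

section Partition

/-- A smooth bump supported in `[-1, 1]` whose integer translates sum to `1`. -/
def stepBump (t : ℝ) : ℝ := Real.smoothTransition (t + 1) - Real.smoothTransition t

lemma contDiff_stepBump : ContDiff ℝ (⊤ : ℕ∞) stepBump :=
  (Real.smoothTransition.contDiff.comp (contDiff_id.add contDiff_const)).sub
    Real.smoothTransition.contDiff

lemma stepBump_nonneg (t : ℝ) : 0 ≤ stepBump t :=
  sub_nonneg.2 (Real.smoothTransition.monotone (by linarith))

lemma stepBump_zero : stepBump 0 = 1 := by simp [stepBump]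

lemma stepBump_eq_zero {t : ℝ} (ht : 1 ≤ |t|) : stepBump t = 0 := by
  rcases le_abs.1 ht with h | h
  · rw [stepBump, Real.smoothTransition.one_of_one_le h,
      Real.smoothTransition.one_of_one_le (by linarith), sub_self]
  · rw [stepBump, Real.smoothTransition.zero_of_nonpos (by linarith),
      Real.smoothTransition.zero_of_nonpos (by linarith), sub_self]

lemma isWeight_stepBump : IsWeight stepBump 1 where
  cont := contDiff_stepBump.continuous
  nonneg := stepBump_nonneg
  supp _ hu := stepBump_eq_zero hu.le
  pos := stepBump_zero ▸ one_pos
  R_nonneg := zero_le_one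

lemma stepBump_add_eq_zero {t : ℝ} {m : ℤ} (hm : m ∉ ({-⌊t⌋, -⌊t⌋ - 1} : Finset ℤ)) :
    stepBump (t + m) = 0 := by
  apply stepBump_eq_zero
  simp only [Finset.mem_insert, Finset.mem_singleton, not_or] at hm
  have hfloor := Int.floor_le t
  have hlt := Int.lt_floor_add_one t
  have hm' : 1 ≤ m + ⌊t⌋ ∨ m + ⌊t⌋ ≤ -2 := by omega
  rw [le_abs]
  rcases hm' with h | h
  · have : (1 : ℝ) ≤ m + ⌊t⌋ := by exact_mod_cast h
    left; linarith
  · have : (m : ℝ) + ⌊t⌋ ≤ -2 := by exact_mod_cast h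
    right; linarith

lemma sum_stepBump (t : ℝ) : ∑ m ∈ ({-⌊t⌋, -⌊t⌋ - 1} : Finset ℤ), stepBump (t + m) = 1 := by
  rw [Finset.sum_pair (by omega)]
  have hfloor := Int.floor_le t
  have hlt := Int.lt_floor_add_one t
  push_cast
  rw [stepBump, stepBump, Real.smoothTransition.one_of_one_le (by linarith),
    Real.smoothTransition.zero_of_nonpos (x := t + (-⌊t⌋ - 1)) (by linarith),
    show t + (-(⌊t⌋ : ℝ) - 1) + 1 = t + -⌊t⌋ by ring]
  ring

section Pi

variable {ι : Type*} [Fintype ι]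

lemma hasCompactSupport_prod_stepBump :
    HasCompactSupport fun x : ι → ℝ => ∏ i, stepBump (x i) := by
  refine HasCompactSupport.intro (isCompact_closedBall 0 1) fun x hx => ?_
  rw [mem_closedBall_zero_iff, pi_norm_le_iff_of_nonneg zero_le_one, not_forall] at hx
  obtain ⟨i, hi⟩ := hx
  exact Finset.prod_eq_zero (Finset.mem_univ i) (stepBump_eq_zero (not_le.1 hi).le)

lemma tsum_prod_stepBump_add (x : ι → ℝ) :
    ∑' m : ι → ℤ, ∏ i, stepBump (x i + m i) = 1 := by
  classical
  rw [tsum_eq_sum (s := Fintype.piFinset fun i => ({-⌊x i⌋, -⌊x i⌋ - 1} : Finset ℤ)),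
    ← Finset.prod_univ_sum (fun i => ({-⌊x i⌋, -⌊x i⌋ - 1} : Finset ℤ))
      fun i m => stepBump (x i + m)]
  · exact Finset.prod_eq_one fun i _ => sum_stepBump _
  · intro m hm
    rw [Fintype.mem_piFinset, not_forall] at hm
    obtain ⟨i, hi⟩ := hm
    exact Finset.prod_eq_zero (Finset.mem_univ i) (stepBump_add_eq_zero hi)

end Pi

theorem exists_contDiff_tsum_lattice_add_eq_one {E : Type*} [NormedAddCommGroup E]
    [NormedSpace ℝ E] [FiniteDimensional ℝ E] (L : Submodule ℤ E) [DiscreteTopology L]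
    [IsZLattice ℝ L] :
    ∃ η : E → ℝ, ContDiff ℝ (⊤ : ℕ∞) η ∧ HasCompactSupport η ∧ (∀ x, 0 ≤ η x) ∧ 0 < η 0 ∧
      ∀ x, ∑' v : L, η (v + x) = 1 := by
  have : Module.Finite ℤ L := ZLattice.module_finite ℝ L
  have : Module.Free ℤ L := ZLattice.module_free ℝ L
  let B := Module.Free.chooseBasis ℤ L
  let coord : E ≃L[ℝ] (Module.Free.ChooseBasisIndex ℤ L → ℝ) :=
    (B.ofZLatticeBasis ℝ L).equivFunL
  refine ⟨fun x => ∏ i, stepBump (coord x i), ?_,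
    hasCompactSupport_prod_stepBump.comp_homeomorph coord.toHomeomorph,
    fun x => Finset.prod_nonneg fun i _ => stepBump_nonneg _, by simp [stepBump_zero],
    fun x => ?_⟩
  · exact contDiff_prod fun i _ =>
      contDiff_stepBump.comp ((contDiff_apply ℝ ℝ i).comp coord.contDiff)
  · have hcoord (v : L) (i) : coord (v + x) i = coord x i + (B.equivFun v i : ℤ) := by
      rw [map_add, Pi.add_apply, add_comm]
      congr 1
      exact B.ofZLatticeBasis_repr_apply ℝ L v i
    simp only [hcoord]
    rw [← tsum_prod_stepBump_add (coord x)]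
    exact B.equivFun.toEquiv.tsum_eq fun m => ∏ i, stepBump (coord x i + m i)

end Partition

section TsumHom

lemma tsum_comp_addMonoidHom {A B : Type*} [AddGroup A] [AddGroup B] (f : A →+ B)
    [Finite f.ker] {h : B → ℝ} (hh : Summable fun v : f.range => h v) :
    ∑' a, h (f a) = Nat.card f.ker * ∑' v : f.range, h v := by
  let e : A ≃ f.range × f.ker := AddSubgroup.addGroupEquivQuotientProdAddSubgroup.trans
    ((QuotientAddGroup.quotientKerEquivRange f).toEquiv.prodCongr (Equiv.refl _))
  have hone : Summable fun _ : f.ker => (1 : ℝ) := .of_finite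
  calc ∑' a, h (f a) = ∑' p : f.range × f.ker, h p.1 * 1 := by
        simp only [mul_one]
        exact e.tsum_eq fun p : f.range × f.ker => h p.1
    _ = (∑' v : f.range, h v) * ∑' _ : f.ker, 1 :=
        (tsum_mul_tsum_of_summable_norm hh.norm hone.norm).symm
    _ = Nat.card f.ker * ∑' v : f.range, h v := by
        rw [tsum_const, nsmul_one, mul_comm]

end TsumHom

section RayUnits

open scoped Classical
open NumberField.mixedEmbedding NumberField.InfinitePlace
open NumberField.Units NumberField.Units.dirichletUnitTheorem

variable {K : Type*} [Field K]

/-- Positivity at every real place. -/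
def IsTotallyPositive (α : 𝓞 K) : Prop :=
  ∀ w : {w : InfinitePlace K // IsReal w}, 0 < (mixedEmbedding K (α : K)).1 w

lemma IsTotallyPositive.one : IsTotallyPositive (1 : 𝓞 K) := fun w => by simp

lemma IsTotallyPositive.mul {α β : 𝓞 K} (hα : IsTotallyPositive α) (hβ : IsTotallyPositive β) :
    IsTotallyPositive (α * β) := fun w => by
  simpa only [map_mul, Prod.fst_mul, Pi.mul_apply] using mul_pos (hα w) (hβ w)

lemma IsTotallyPositive.of_mul {α β : 𝓞 K} (hα : IsTotallyPositive α)
    (h : IsTotallyPositive (α * β)) : IsTotallyPositive β := fun w => by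
  have hw := h w
  simp only [map_mul, Prod.fst_mul, Pi.mul_apply] at hw
  exact (pos_iff_pos_of_mul_pos hw).1 (hα w)

/-- The nonzero, totally positive integers congruent to `1` modulo `𝔪`; they generate the ideals
which are trivial in the narrow ray class group modulo `𝔪`. -/
structure InRay (𝔪 : Ideal (𝓞 K)) (α : 𝓞 K) : Prop where
  ne_zero : α ≠ 0
  sub_mem : α - 1 ∈ 𝔪
  pos : IsTotallyPositive α

variable {𝔪 : Ideal (𝓞 K)}

lemma InRay.one : InRay 𝔪 1 := ⟨one_ne_zero, by simp, .one⟩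

lemma InRay.mul {α β : 𝓞 K} (hα : InRay 𝔪 α) (hβ : InRay 𝔪 β) : InRay 𝔪 (α * β) where
  ne_zero := mul_ne_zero hα.ne_zero hβ.ne_zero
  sub_mem := by
    rw [show α * β - 1 = α * (β - 1) + (α - 1) by ring]
    exact 𝔪.add_mem (𝔪.mul_mem_left α hβ.sub_mem) hα.sub_mem
  pos := hα.pos.mul hβ.pos

lemma InRay.of_mul {α β : 𝓞 K} (hα : InRay 𝔪 α) (h : InRay 𝔪 (α * β)) : InRay 𝔪 β where
  ne_zero := right_ne_zero_of_mul h.ne_zero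
  sub_mem := by
    rw [show β - 1 = α * β - 1 - (α - 1) * β by ring]
    exact 𝔪.sub_mem h.sub_mem (𝔪.mul_mem_right β hα.sub_mem)
  pos := hα.pos.of_mul h.pos

lemma InRay.mem_posCone {α : 𝓞 K} (hα : InRay 𝔪 α) : mixedEmbedding K (α : K) ∈ posCone K := by
  refine ⟨hα.pos, fun w => ?_⟩
  rw [mixedEmbedding_apply_isComplex]
  exact (map_ne_zero _).2 (RingOfIntegers.coe_ne_zero_iff.2 hα.ne_zero)

lemma mixedEmbedding_fst_ne_zero {α : 𝓞 K} (hα : α ≠ 0)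
    (w : {w : InfinitePlace K // IsReal w}) : (mixedEmbedding K (α : K)).1 w ≠ 0 := by
  rw [mixedEmbedding_apply_isReal]
  exact (map_ne_zero _).2 (RingOfIntegers.coe_ne_zero_iff.2 hα)

lemma isTotallyPositive_sq {α : 𝓞 K} (hα : α ≠ 0) : IsTotallyPositive (α ^ 2) := fun w => by
  simp only [map_pow, Prod.pow_fst, Pi.pow_apply]
  exact sq_pos_of_ne_zero (mixedEmbedding_fst_ne_zero hα w)

variable [NumberField K]

lemma exists_inRay_pow (h𝔪 : 𝔪 ≠ ⊥) : ∃ N : ℕ, N ≠ 0 ∧ ∀ α : 𝓞 K, α ≠ 0 →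
    IsUnit (Ideal.Quotient.mk 𝔪 α) → InRay 𝔪 (α ^ N) := by
  have : Finite (𝓞 K ⧸ 𝔪) := Ideal.finiteQuotientOfFreeOfNeBot 𝔪 h𝔪
  set m := Nat.card (𝓞 K ⧸ 𝔪)ˣ
  refine ⟨m * 2, mul_ne_zero Nat.card_pos.ne' two_ne_zero, fun α hα ⟨u, hu⟩ =>
    ⟨pow_ne_zero _ hα, ?_, ?_⟩⟩
  · rw [← Ideal.Quotient.mk_eq_mk_iff_sub_mem, map_pow, ← hu, ← Units.val_pow_eq_pow_val, pow_mul,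
      pow_card_eq_one', one_pow, Units.val_one, map_one]
  · rw [pow_mul]
    exact isTotallyPositive_sq (pow_ne_zero _ hα)

/-- The units of the ray modulo `𝔪`. -/
def rayUnits (𝔪 : Ideal (𝓞 K)) : Subgroup (𝓞 K)ˣ where
  carrier := {u | InRay 𝔪 (u : 𝓞 K)}
  mul_mem' hu hv := InRay.mul hu hv
  one_mem' := InRay.one
  inv_mem' {u} hu := by
    have hu : InRay 𝔪 (u : 𝓞 K) := hu
    exact hu.of_mul (by rw [Units.mul_inv]; exact .one)

/-- The logarithmic embedding of the units of the ray modulo `𝔪`. -/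
def rayUnitsLog (𝔪 : Ideal (𝓞 K)) : Additive (rayUnits 𝔪) →+ logSpace K :=
  (logEmbedding K).comp (rayUnits 𝔪).subtype.toAdditive

/-- The lattice of logarithms of the units of the ray modulo `𝔪`. -/
def rayLattice (𝔪 : Ideal (𝓞 K)) : Submodule ℤ (logSpace K) :=
  (rayUnitsLog 𝔪).range.toIntSubmodule

instance discreteTopology_rayLattice : DiscreteTopology (rayLattice 𝔪) := by
  refine DiscreteTopology.of_subset (instDiscrete_unitLattice K) ?_
  rintro _ ⟨u, rfl⟩
  exact ⟨Additive.ofMul (u.toMul : (𝓞 K)ˣ), trivial, rfl⟩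

lemma isZLattice_rayLattice (h𝔪 : 𝔪 ≠ ⊥) : IsZLattice ℝ (rayLattice 𝔪) where
  span_top := by
    obtain ⟨N, hN, hpow⟩ := exists_inRay_pow h𝔪
    rw [eq_top_iff, ← unitLattice_span_eq_top K, Submodule.span_le]
    rintro _ ⟨u, -, rfl⟩
    have hu : u.toMul ^ N ∈ rayUnits 𝔪 :=
      hpow _ (Units.ne_zero u.toMul) ((Units.isUnit u.toMul).map (Ideal.Quotient.mk 𝔪))
    have hNu : (N : ℝ) • logEmbedding K u ∈ (rayLattice 𝔪 : Set (logSpace K)) := by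
      rw [Nat.cast_smul_eq_nsmul, ← map_nsmul]
      exact ⟨Additive.ofMul ⟨u.toMul ^ N, hu⟩, rfl⟩
    have hspan := Submodule.smul_mem _ ((N : ℝ)⁻¹) (Submodule.subset_span (R := ℝ) hNu)
    rwa [inv_smul_smul₀ (Nat.cast_ne_zero.2 hN)] at hspan

instance finite_ker_rayUnitsLog : Finite (rayUnitsLog 𝔪).ker := by
  refine Finite.of_injective (β := torsion K)
    (fun u => ⟨u.1.toMul, logEmbedding_eq_zero_iff.1 u.2⟩) fun u v h => ?_
  exact Subtype.ext (Subtype.ext (congrArg (Subtype.val : torsion K → (𝓞 K)ˣ) h))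

theorem exists_contDiff_tsum_rayUnits_add_eq (h𝔪 : 𝔪 ≠ ⊥) :
    ∃ η : logSpace K → ℝ, ∃ ω : ℝ, ContDiff ℝ (⊤ : ℕ∞) η ∧ HasCompactSupport η ∧
      (∀ x, 0 ≤ η x) ∧ 0 < η 0 ∧ 0 < ω ∧
      ∀ x, ∑' u : rayUnits 𝔪, η (logEmbedding K (Additive.ofMul (u : (𝓞 K)ˣ)) + x) = ω := by
  have := isZLattice_rayLattice h𝔪
  obtain ⟨η, hcd, hsupp, hnonneg, hpos, hsum⟩ :=
    exists_contDiff_tsum_lattice_add_eq_one (rayLattice 𝔪)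
  refine ⟨η, Nat.card (rayUnitsLog 𝔪).ker, hcd, hsupp, hnonneg, hpos,
    Nat.cast_pos.2 Nat.card_pos, fun x => ?_⟩
  have hsummable : Summable fun v : rayLattice 𝔪 => η (v + x) := by
    by_contra h
    exact zero_ne_one ((tsum_eq_zero_of_not_summable h).symm.trans (hsum x))
  calc ∑' u : rayUnits 𝔪, η (logEmbedding K (Additive.ofMul (u : (𝓞 K)ˣ)) + x)
      = ∑' u : Additive (rayUnits 𝔪), η (rayUnitsLog 𝔪 u + x) := rfl
    _ = Nat.card (rayUnitsLog 𝔪).ker * ∑' v : rayLattice 𝔪, η (v + x) :=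
      tsum_comp_addMonoidHom (rayUnitsLog 𝔪) (h := fun y => η (y + x)) hsummable
    _ = Nat.card (rayUnitsLog 𝔪).ker := by rw [hsum, mul_one]

end RayUnits

section RayClass

open Module
open NumberField.mixedEmbedding NumberField.InfinitePlace

variable {K : Type*} [Field K]

/-- The nonzero ideals prime to `𝔪`. -/
def coprimeIdeals (𝔪 : Ideal (𝓞 K)) : Submonoid (Ideal (𝓞 K)) where
  carrier := {𝔞 | 𝔞 ≠ ⊥ ∧ IsCoprime 𝔞 𝔪}
  mul_mem' ha hb := ⟨mul_ne_zero ha.1 hb.1, ha.2.mul_left hb.2⟩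
  one_mem' := ⟨one_ne_zero, isCoprime_one_left⟩

variable {𝔪 : Ideal (𝓞 K)}

lemma isCoprime_span_of_sub_mem {α : 𝓞 K} (h : α - 1 ∈ 𝔪) : IsCoprime (Ideal.span {α}) 𝔪 :=
  Ideal.isCoprime_iff_exists.2 ⟨α, Ideal.mem_span_singleton_self α, 1 - α,
    neg_sub α 1 ▸ 𝔪.neg_mem h, add_sub_cancel α 1⟩

lemma isUnit_mk_of_isCoprime_span {α : 𝓞 K} (h : IsCoprime (Ideal.span {α}) 𝔪) :
    IsUnit (Ideal.Quotient.mk 𝔪 α) := by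
  obtain ⟨x, hx, y, hy, hxy⟩ := Ideal.isCoprime_iff_exists.1 h
  obtain ⟨z, rfl⟩ := Ideal.mem_span_singleton.1 hx
  refine IsUnit.of_mul_eq_one (Ideal.Quotient.mk 𝔪 z) ?_
  rw [← map_mul, ← map_one (Ideal.Quotient.mk 𝔪), Ideal.Quotient.mk_eq_mk_iff_sub_mem, ← hxy,
    sub_add_cancel_left]
  exact 𝔪.neg_mem hy

lemma InRay.span_mem {α : 𝓞 K} (h : InRay 𝔪 α) : Ideal.span {α} ∈ coprimeIdeals 𝔪 :=
  ⟨mt Ideal.span_singleton_eq_bot.1 h.ne_zero, isCoprime_span_of_sub_mem h.sub_mem⟩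

lemma mem_coprimeIdeals_of_mul_left {𝔞 𝔟 : Ideal (𝓞 K)} (h : 𝔞 * 𝔟 ∈ coprimeIdeals 𝔪) :
    𝔟 ∈ coprimeIdeals 𝔪 :=
  ⟨right_ne_zero_of_mul h.1, h.2.of_mul_left_right⟩

/-- Narrow ray equivalence: two ideals are equivalent when their quotient is generated by a
quotient of elements of the ray modulo `𝔪`. -/
def rayCon (𝔪 : Ideal (𝓞 K)) : Con (coprimeIdeals 𝔪) where
  r 𝔞 𝔟 := ∃ α β : 𝓞 K, InRay 𝔪 α ∧ InRay 𝔪 β ∧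
    Ideal.span {α} * (𝔞 : Ideal (𝓞 K)) = Ideal.span {β} * (𝔟 : Ideal (𝓞 K))
  iseqv :=
    { refl := fun 𝔞 => ⟨1, 1, .one, .one, rfl⟩
      symm := fun ⟨α, β, hα, hβ, h⟩ => ⟨β, α, hβ, hα, h.symm⟩
      trans := by
        rintro 𝔞 𝔟 𝔠 ⟨α, β, hα, hβ, h⟩ ⟨α', β', hα', hβ', h'⟩
        refine ⟨α * α', β * β', hα.mul hα', hβ.mul hβ', ?_⟩
        rw [← Ideal.span_singleton_mul_span_singleton, ← Ideal.span_singleton_mul_span_singleton,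
          mul_right_comm, h, mul_right_comm, mul_assoc, h', mul_assoc] }
  mul' := by
    rintro 𝔞 𝔟 𝔠 𝔡 ⟨α, β, hα, hβ, h⟩ ⟨α', β', hα', hβ', h'⟩
    refine ⟨α * α', β * β', hα.mul hα', hβ.mul hβ', ?_⟩
    rw [← Ideal.span_singleton_mul_span_singleton, ← Ideal.span_singleton_mul_span_singleton,
      Submonoid.coe_mul, Submonoid.coe_mul, mul_mul_mul_comm, h, h', mul_mul_mul_comm]

/-- The narrow ray class group modulo `𝔪`. -/
def RayClassGroup (𝔪 : Ideal (𝓞 K)) : Type _ := (rayCon 𝔪).Quotient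

instance : CommMonoid (RayClassGroup 𝔪) := inferInstanceAs (CommMonoid (rayCon 𝔪).Quotient)

/-- The narrow ray class of an ideal. -/
def rayClass (𝔪 : Ideal (𝓞 K)) : coprimeIdeals 𝔪 →* RayClassGroup 𝔪 := (rayCon 𝔪).mk'

lemma rayClass_surjective : Function.Surjective (rayClass 𝔪) := Con.mk'_surjective

lemma rayClass_eq_iff {𝔞 𝔟 : coprimeIdeals 𝔪} : rayClass 𝔪 𝔞 = rayClass 𝔪 𝔟 ↔
    ∃ α β : 𝓞 K, InRay 𝔪 α ∧ InRay 𝔪 β ∧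
      Ideal.span {α} * (𝔞 : Ideal (𝓞 K)) = Ideal.span {β} * (𝔟 : Ideal (𝓞 K)) :=
  Con.eq (rayCon 𝔪)

lemma abs_mixedEmbedding_fst (x : K) (w : {w : InfinitePlace K // IsReal w}) :
    |(mixedEmbedding K x).1 w| = w.1 x := by
  rw [← normAtPlace_apply, normAtPlace_apply_of_isReal w.2, Real.norm_eq_abs]

variable [NumberField K]

lemma rayClass_eq_one_iff {𝔞 : coprimeIdeals 𝔪} : rayClass 𝔪 𝔞 = 1 ↔
    ∃ α : 𝓞 K, InRay 𝔪 α ∧ (𝔞 : Ideal (𝓞 K)) = Ideal.span {α} := by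
  rw [← map_one (rayClass 𝔪), rayClass_eq_iff]
  constructor
  · rintro ⟨α, β, hα, hβ, h⟩
    rw [Submonoid.coe_one, mul_one] at h
    have hβα : β ∈ Ideal.span {α} :=
      Ideal.mul_le_left (J := (𝔞 : Ideal (𝓞 K))) (h ▸ Ideal.mem_span_singleton_self β)
    obtain ⟨γ, rfl⟩ := Ideal.mem_span_singleton.1 hβα
    rw [← Ideal.span_singleton_mul_span_singleton] at h
    exact ⟨γ, hα.of_mul hβ, mul_left_cancel₀ hα.span_mem.1 h⟩
  · rintro ⟨α, hα, h⟩
    exact ⟨1, α, .one, hα, by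
      rw [h, Submonoid.coe_one, mul_one, Ideal.span_singleton_one, ← Ideal.one_eq_top, one_mul]⟩

lemma exists_forall_infinitePlace_lt (a : 𝓞 K) {θ : 𝓞 K} (hθ : θ ≠ 0) :
    ∃ k : ℕ, ∀ w : InfinitePlace K, w (a : K) < w ((k * θ : 𝓞 K) : K) := by
  have hθw (w : InfinitePlace K) : 0 < w (θ : K) :=
    InfinitePlace.pos_iff.2 (RingOfIntegers.coe_ne_zero_iff.2 hθ)
  obtain ⟨k, hk⟩ := (Filter.eventually_all.2 fun w : InfinitePlace K =>
    (tendsto_natCast_atTop_atTop.atTop_mul_const (hθw w)).eventually_gt_atTop (w (a : K))).exists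
  refine ⟨k, fun w => ?_⟩
  simpa only [map_mul, map_natCast, InfinitePlace.map_natCast] using hk w

lemma add_mul_pos_of_abs_lt_abs {x y : ℝ} (h : |x| < |y|) : 0 < (x + y) * y := by
  have hxy : |x * y| < y * y := by
    rw [abs_mul, ← abs_mul_abs_self y]
    exact mul_lt_mul_of_pos_right h ((abs_nonneg x).trans_lt h)
  linarith [(abs_lt.1 hxy).1]

/-- Weak approximation: congruence conditions modulo `𝔞` and `𝔪` and sign conditions at the real
places can be met simultaneously; the signs are prescribed as those of a given `θ`. -/
lemma exists_mem_sign [NeZero 𝔪] {𝔞 : Ideal (𝓞 K)} (h𝔞 : 𝔞 ∈ coprimeIdeals 𝔪) {θ : 𝓞 K}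
    (hθ : θ ≠ 0) : ∃ β ∈ 𝔞, β ≠ 0 ∧ β - 1 ∈ 𝔪 ∧ ∀ w : {w : InfinitePlace K // IsReal w},
      0 < (mixedEmbedding K (β : K)).1 w * (mixedEmbedding K (θ : K)).1 w := by
  obtain ⟨a, ha, m, hm, ham⟩ := Ideal.isCoprime_iff_exists.1 h𝔞.2
  set N := Ideal.absNorm (𝔞 * 𝔪)
  have hN : N ≠ 0 := Ideal.absNorm_ne_zero_iff_mem_nonZeroDivisors.2
    (mem_nonZeroDivisors_of_ne_zero (mul_ne_zero h𝔞.1 (NeZero.ne 𝔪)))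
  obtain ⟨k, hk⟩ := exists_forall_infinitePlace_lt a (mul_ne_zero (Nat.cast_ne_zero.2 hN) hθ)
  have hmem : (k * (N * θ) : 𝓞 K) ∈ 𝔞 * 𝔪 :=
    Ideal.mul_mem_left _ _ (Ideal.mul_mem_right _ _ (Ideal.absNorm_mem _))
  refine ⟨a + k * (N * θ), 𝔞.add_mem ha (Ideal.mul_le_left hmem), fun h => ?_, ?_, fun w => ?_⟩
  · obtain ⟨w⟩ : Nonempty (InfinitePlace K) := inferInstance
    refine (hk w).ne ?_
    simp only [eq_neg_of_add_eq_zero_left h, map_neg]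
    exact AbsoluteValue.map_neg w.1 _
  · rw [show a + k * (N * θ) - 1 = k * (N * θ) - m by rw [← ham]; ring]
    exact 𝔪.sub_mem (Ideal.mul_le_right hmem) hm
  · have hlt := hk w.1
    rw [← abs_mixedEmbedding_fst, ← abs_mixedEmbedding_fst] at hlt
    refine pos_of_mul_pos_right (a := (k : ℝ) * N) ?_ (by positivity)
    have h := add_mul_pos_of_abs_lt_abs hlt
    simp only [map_add, map_mul, map_natCast, Prod.fst_add, Prod.fst_mul, Prod.fst_natCast,
      Pi.add_apply, Pi.mul_apply, Pi.natCast_apply] at h ⊢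
    linarith

lemma exists_inRay_mem [NeZero 𝔪] {𝔞 : Ideal (𝓞 K)} (h𝔞 : 𝔞 ∈ coprimeIdeals 𝔪) :
    ∃ α ∈ 𝔞, InRay 𝔪 α := by
  obtain ⟨β, hβ, hβ0, hβ1, hpos⟩ := exists_mem_sign h𝔞 (one_ne_zero (α := 𝓞 K))
  exact ⟨β, hβ, hβ0, hβ1, fun w => by simpa using hpos w⟩

instance [NeZero 𝔪] : CommGroup (RayClassGroup 𝔪) :=
  commGroupOfIsUnit fun c => by
    obtain ⟨𝔞, rfl⟩ := rayClass_surjective c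
    obtain ⟨α, hα𝔞, hα⟩ := exists_inRay_mem 𝔞.2
    obtain ⟨𝔟, h𝔟⟩ := Ideal.dvd_iff_le.2 ((Ideal.span_singleton_le_iff_mem _).2 hα𝔞)
    refine IsUnit.of_mul_eq_one
      (rayClass 𝔪 ⟨𝔟, mem_coprimeIdeals_of_mul_left (h𝔟 ▸ hα.span_mem)⟩) ?_
    rw [← map_mul]
    exact rayClass_eq_one_iff.2 ⟨α, hα, h𝔟.symm⟩

lemma exists_inRay_mul_eq [NeZero 𝔪] {δ δ' : 𝓞 K} (hδ : δ ≠ 0) (hδ' : δ' ≠ 0)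
    (hu : IsUnit (Ideal.Quotient.mk 𝔪 δ))
    (hm : Ideal.Quotient.mk 𝔪 δ = Ideal.Quotient.mk 𝔪 δ')
    (hs : ∀ w : {w : InfinitePlace K // IsReal w},
      0 < (mixedEmbedding K (δ : K)).1 w ↔ 0 < (mixedEmbedding K (δ' : K)).1 w) :
    ∃ α β : 𝓞 K, InRay 𝔪 α ∧ InRay 𝔪 β ∧ α * δ = β * δ' := by
  obtain ⟨N, hN, hpow⟩ := exists_inRay_pow (NeZero.ne 𝔪)
  obtain ⟨n, rfl⟩ := Nat.exists_eq_succ_of_ne_zero hN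
  have hray := hpow δ hδ hu
  refine ⟨δ ^ n * δ', δ ^ (n + 1), ⟨mul_ne_zero (pow_ne_zero _ hδ) hδ', ?_, fun w => ?_⟩, hray,
    by ring⟩
  · rw [← Ideal.Quotient.mk_eq_mk_iff_sub_mem, map_mul, ← hm, ← map_mul, ← pow_succ,
      Ideal.Quotient.mk_eq_mk_iff_sub_mem]
    exact hray.sub_mem
  · have hpos := hray.pos w
    simp only [map_pow, map_mul, Prod.pow_fst, Prod.fst_mul, Pi.mul_apply, Pi.pow_apply,
      Nat.succ_eq_add_one, pow_succ] at hpos ⊢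
    rcases lt_or_gt_of_ne (mixedEmbedding_fst_ne_zero hδ w) with h | h
    · have hneg : (mixedEmbedding K (δ' : K)).1 w < 0 :=
        (mixedEmbedding_fst_ne_zero hδ' w).lt_of_le (not_lt.1 fun h' => h.not_gt ((hs w).2 h'))
      exact mul_pos_of_neg_of_neg ((neg_iff_neg_of_mul_pos hpos).2 h) hneg
    · exact mul_pos ((pos_iff_pos_of_mul_pos hpos).2 h) ((hs w).1 h)

/-- The natural map from the narrow ray class group to the class group. -/
def rayClassToClassGroup (𝔪 : Ideal (𝓞 K)) : RayClassGroup 𝔪 →* ClassGroup (𝓞 K) :=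
  (rayCon 𝔪).lift (ClassGroup.mk0.comp
    (Submonoid.inclusion fun _ h𝔞 => mem_nonZeroDivisors_of_ne_zero h𝔞.1))
    fun _ _ ⟨α, β, hα, hβ, h⟩ =>
      ClassGroup.mk0_eq_mk0_iff.2 ⟨α, β, hα.ne_zero, hβ.ne_zero, h⟩

lemma exists_span_of_rayClassToClassGroup_eq_one {c : RayClassGroup 𝔪}
    (hc : rayClassToClassGroup 𝔪 c = 1) : ∃ (𝔞 : coprimeIdeals 𝔪) (δ : 𝓞 K),
      rayClass 𝔪 𝔞 = c ∧ (𝔞 : Ideal (𝓞 K)) = Ideal.span {δ} := by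
  obtain ⟨𝔞, rfl⟩ := rayClass_surjective c
  obtain ⟨δ, hδ⟩ := (ClassGroup.mk0_eq_one_iff _).1 hc
  exact ⟨𝔞, δ, rfl, hδ⟩

lemma finite_ker_rayClassToClassGroup [NeZero 𝔪] : Finite (rayClassToClassGroup 𝔪).ker := by
  have : Finite (𝓞 K ⧸ 𝔪) := Ideal.finiteQuotientOfFreeOfNeBot 𝔪 (NeZero.ne 𝔪)
  choose 𝔞 δ h𝔞 hδ using fun c : (rayClassToClassGroup 𝔪).ker =>
    exists_span_of_rayClassToClassGroup_eq_one c.2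
  have hδ0 (c) : δ c ≠ 0 := mt Ideal.span_singleton_eq_bot.2 (hδ c ▸ (𝔞 c).2.1)
  refine Finite.of_injective (β := (𝓞 K ⧸ 𝔪) × ({w : InfinitePlace K // IsReal w} → Prop))
    (fun c => (Ideal.Quotient.mk 𝔪 (δ c), fun w => 0 < (mixedEmbedding K (δ c : K)).1 w))
    fun c c' hcc => ?_
  obtain ⟨hmk, hsign⟩ := Prod.mk.inj hcc
  obtain ⟨α, β, hα, hβ, hαβ⟩ := exists_inRay_mul_eq (hδ0 c) (hδ0 c')
    (isUnit_mk_of_isCoprime_span (hδ c ▸ (𝔞 c).2.2)) hmk fun w => iff_of_eq (congrFun hsign w)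
  rw [Subtype.ext_iff, ← h𝔞 c, ← h𝔞 c', rayClass_eq_iff]
  refine ⟨α, β, hα, hβ, ?_⟩
  rw [hδ, hδ, Ideal.span_singleton_mul_span_singleton, Ideal.span_singleton_mul_span_singleton, hαβ]

instance [NeZero 𝔪] : Finite (RayClassGroup 𝔪) := by
  have := finite_ker_rayClassToClassGroup (𝔪 := 𝔪)
  have : Finite (RayClassGroup 𝔪 ⧸ (rayClassToClassGroup 𝔪).ker) :=
    Finite.of_injective _ (QuotientGroup.kerLift_injective (rayClassToClassGroup 𝔪))
  exact Finite.of_equiv _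
    (Subgroup.groupEquivQuotientProdSubgroup (s := (rayClassToClassGroup 𝔪).ker)).symm

instance [NeZero 𝔪] : Fintype (RayClassGroup 𝔪) := Fintype.ofFinite _

lemma inRay_natCast (k : ℕ) : InRay 𝔪 ((1 + k * Ideal.absNorm 𝔪 : ℕ) : 𝓞 K) where
  ne_zero := Nat.cast_ne_zero.2 (by omega)
  sub_mem := by
    push_cast
    rw [add_sub_cancel_left]
    exact 𝔪.mul_mem_left _ (Ideal.absNorm_mem 𝔪)
  pos w := by
    simp only [map_natCast, Prod.fst_natCast, Pi.natCast_apply]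
    positivity

lemma exists_rayClass_eq_norm_ge [NeZero 𝔪] (c : RayClassGroup 𝔪) :
    ∃ 𝔟 : coprimeIdeals 𝔪, rayClass 𝔪 𝔟 = c ∧ 3 ≤ Ideal.absNorm (𝔟 : Ideal (𝓞 K)) := by
  obtain ⟨𝔞, rfl⟩ := rayClass_surjective c
  have hν := inRay_natCast (𝔪 := 𝔪) 2
  set n := 1 + 2 * Ideal.absNorm 𝔪
  refine ⟨𝔞 * ⟨Ideal.span {(n : 𝓞 K)}, hν.span_mem⟩, ?_, ?_⟩
  · rw [map_mul, rayClass_eq_one_iff.2 ⟨_, hν, Subtype.coe_mk _ _⟩, mul_one]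
  · have h𝔞 : 0 < Ideal.absNorm (𝔞 : Ideal (𝓞 K)) :=
      Ideal.absNorm_pos_iff_mem_nonZeroDivisors.2 (mem_nonZeroDivisors_of_ne_zero 𝔞.2.1)
    have h𝔪 : 0 < Ideal.absNorm 𝔪 :=
      Ideal.absNorm_pos_iff_mem_nonZeroDivisors.2 (mem_nonZeroDivisors_of_ne_zero (NeZero.ne 𝔪))
    calc 3 ≤ n := by omega
      _ ≤ n ^ finrank ℤ (𝓞 K) := Nat.le_self_pow (RingOfIntegers.rank K ▸ finrank_pos.ne') _
      _ = Ideal.absNorm (Ideal.span {(n : 𝓞 K)}) := (Ideal.absNorm_span_natCast n).symm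
      _ ≤ Ideal.absNorm (𝔞 : Ideal (𝓞 K)) * Ideal.absNorm (Ideal.span {(n : 𝓞 K)}) :=
        Nat.le_mul_of_pos_left _ h𝔞
      _ = _ := (map_mul Ideal.absNorm _ _).symm

end RayClass

section RayCount

open MeasureTheory Module
open scoped Classical
open NumberField.mixedEmbedding
open NumberField.Units NumberField.Units.dirichletUnitTheorem

variable {K : Type*} [Field K] {𝔪 : Ideal (𝓞 K)}

lemma smul_mem_posCone_iff {T : ℝ} (hT : 0 < T) {y : mixedSpace K} :
    T • y ∈ posCone K ↔ y ∈ posCone K := by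
  simp [posCone, mul_pos_iff_of_pos_left hT, hT.ne']

lemma InRay.exists_rayUnits_mul_eq {α α' : 𝓞 K} (hα : InRay 𝔪 α) (hα' : InRay 𝔪 α')
    (h : Ideal.span {α} = Ideal.span {α'}) :
    ∃ u : rayUnits 𝔪, ((u : (𝓞 K)ˣ) : 𝓞 K) * α = α' := by
  obtain ⟨u, rfl⟩ := Ideal.span_singleton_eq_span_singleton.1 h
  exact ⟨⟨u, hα.of_mul hα'⟩, mul_comm _ _⟩

variable [NumberField K]

lemma norm_mixedEmbedding_coe (α : 𝓞 K) :
    mixedEmbedding.norm (mixedEmbedding K (α : K)) = Ideal.absNorm (Ideal.span {α}) := by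
  rw [norm_eq_norm, Ideal.absNorm_span_singleton, ← Algebra.coe_norm_int, Nat.cast_natAbs]
  norm_cast

lemma InRay.mixedWeight_smul {α : 𝓞 K} (hα : InRay 𝔪 α) (G : ℝ → ℝ) (η : logSpace K → ℝ) {T : ℝ}
    (hT : 0 < T) : mixedWeight G η (T⁻¹ • mixedEmbedding K (α : K)) =
      G (Real.log (Ideal.absNorm (Ideal.span {α})) - finrank ℚ K * Real.log T) *
        η (logMap (mixedEmbedding K (α : K))) := by
  have hnorm := norm_ne_zero_of_mem_posCone hα.mem_posCone
  rw [mixedWeight,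
    Set.indicator_of_mem ((smul_mem_posCone_iff (inv_pos.2 hT)).2 hα.mem_posCone),
    logMap_real_smul hnorm (inv_ne_zero hT.ne'), mixedEmbedding.norm_smul,
    abs_of_pos (inv_pos.2 hT), Real.log_mul (pow_ne_zero _ (inv_ne_zero hT.ne')) hnorm,
    Real.log_pow, Real.log_inv, norm_mixedEmbedding_coe]
  congr 2
  ring

lemma InRay.logMap_unit_mul {α : 𝓞 K} (hα : InRay 𝔪 α) (u : (𝓞 K)ˣ) :
    logMap (mixedEmbedding K ((u * α : 𝓞 K) : K)) =
      logEmbedding K (Additive.ofMul u) + logMap (mixedEmbedding K (α : K)) := by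
  have hmul : ((u * α : 𝓞 K) : K) = ((u : 𝓞 K) : K) * (α : K) := by simp
  rw [hmul, map_mul, logMap_mul (norm_unit u ▸ one_ne_zero)
    (norm_ne_zero_of_mem_posCone hα.mem_posCone), logMap_eq_logEmbedding]

lemma absNorm_pos_of_mem_coprimeIdeals (𝔞 : coprimeIdeals 𝔪) :
    0 < Ideal.absNorm (𝔞 : Ideal (𝓞 K)) :=
  Ideal.absNorm_pos_iff_mem_nonZeroDivisors.2 (mem_nonZeroDivisors_of_ne_zero 𝔞.2.1)

lemma mem_span_fractionalIdealLatticeBasis_iff {J : (FractionalIdeal (𝓞 K)⁰ K)ˣ} {𝔠 : Ideal (𝓞 K)}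
    (hJ : (J : FractionalIdeal (𝓞 K)⁰ K) = 𝔠) {x : mixedSpace K} :
    x ∈ Submodule.span ℤ (Set.range (fractionalIdealLatticeBasis K J)) ↔
      ∃ β ∈ 𝔠, mixedEmbedding K (β : K) = x := by
  rw [mem_span_fractionalIdealLatticeBasis, hJ]
  constructor
  · rintro ⟨z, hz, rfl⟩
    obtain ⟨β, hβ, rfl⟩ := (FractionalIdeal.mem_coeIdeal _).1 hz
    exact ⟨β, hβ, rfl⟩
  · rintro ⟨β, hβ, rfl⟩
    exact ⟨_, (FractionalIdeal.mem_coeIdeal _).2 ⟨β, hβ, rfl⟩, rfl⟩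

/-- The elements of `𝔟` in the ray modulo `𝔪`. -/
def rayElements (𝔪 𝔟 : Ideal (𝓞 K)) : Set (𝓞 K) := {α | InRay 𝔪 α ∧ α ∈ 𝔟}

/-- By the Chinese remainder theorem the elements of `𝔟` in the ray are the points of a translate
of the lattice `𝔟𝔪` that lie in the positive cone. -/
lemma exists_injective_rayElements {𝔟 : coprimeIdeals 𝔪} {J : (FractionalIdeal (𝓞 K)⁰ K)ˣ}
    (hJ : (J : FractionalIdeal (𝓞 K)⁰ K) = ((𝔟 * 𝔪 : Ideal (𝓞 K)) : FractionalIdeal (𝓞 K)⁰ K))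
    {α₀ : 𝓞 K} (hα₀ : α₀ ∈ rayElements 𝔪 𝔟) :
    ∃ i : rayElements 𝔪 (𝔟 : Ideal (𝓞 K)) →
        Submodule.span ℤ (Set.range (fractionalIdealLatticeBasis K J)),
      Function.Injective i ∧
      (∀ α, (i α : mixedSpace K) + mixedEmbedding K (α₀ : K) = mixedEmbedding K ((α : 𝓞 K) : K)) ∧
      ∀ v : Submodule.span ℤ (Set.range (fractionalIdealLatticeBasis K J)),
        (v : mixedSpace K) + mixedEmbedding K (α₀ : K) ∈ posCone K → v ∈ Set.range i := by
  have hmem (β : 𝓞 K) : β ∈ (𝔟 * 𝔪 : Ideal (𝓞 K)) ↔ β ∈ (𝔟 : Ideal (𝓞 K)) ∧ β ∈ 𝔪 := by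
    rw [Ideal.mul_eq_inf_of_isCoprime 𝔟.2.2, Ideal.mem_inf]
  have hdiff (α : rayElements 𝔪 (𝔟 : Ideal (𝓞 K))) : (α - α₀ : 𝓞 K) ∈ (𝔟 * 𝔪 : Ideal (𝓞 K)) :=
    (hmem _).2 ⟨Ideal.sub_mem _ α.2.2 hα₀.2,
      sub_sub_sub_cancel_right (α : 𝓞 K) α₀ 1 ▸ 𝔪.sub_mem α.2.1.sub_mem hα₀.1.sub_mem⟩
  have hval (α : 𝓞 K) : mixedEmbedding K ((α - α₀ : 𝓞 K) : K) + mixedEmbedding K (α₀ : K) =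
      mixedEmbedding K (α : K) := by
    rw [← map_add]
    congr 1
    simp
  refine ⟨fun α => ⟨_, (mem_span_fractionalIdealLatticeBasis_iff hJ).2 ⟨_, hdiff α, rfl⟩⟩,
    fun α α' h => ?_, fun α => hval α, fun v hv => ?_⟩
  · exact Subtype.ext (sub_left_injective (RingOfIntegers.coe_injective
      (mixedEmbedding_injective K (Subtype.ext_iff.1 h))))
  · obtain ⟨β, hβ, hβv⟩ := (mem_span_fractionalIdealLatticeBasis_iff hJ).1 v.2
    have hadd : mixedEmbedding K ((β + α₀ : 𝓞 K) : K) =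
        mixedEmbedding K (β : K) + mixedEmbedding K (α₀ : K) := by simp
    rw [← hβv, ← hadd] at hv
    refine ⟨⟨β + α₀, ⟨fun h => ?_, ?_, hv.1⟩, Ideal.add_mem _ ((hmem β).1 hβ).1 hα₀.2⟩,
      Subtype.ext ?_⟩
    · exact norm_ne_zero_of_mem_posCone hv (by rw [h]; simp)
    · rw [add_sub_assoc]
      exact 𝔪.add_mem ((hmem β).1 hβ).2 hα₀.1.sub_mem
    · simp only [add_sub_cancel_right, hβv]

section

variable {𝔟 : coprimeIdeals 𝔪} {c : RayClassGroup 𝔪}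

lemma exists_rayClass_eq_mul_eq_span [NeZero 𝔪] (hc : c * rayClass 𝔪 𝔟 = 1) {α : 𝓞 K}
    (hα : α ∈ rayElements 𝔪 𝔟) : ∃ 𝔞 : {𝔞 : coprimeIdeals 𝔪 // rayClass 𝔪 𝔞 = c},
      (𝔞 : Ideal (𝓞 K)) * 𝔟 = Ideal.span {α} := by
  obtain ⟨𝔞, h𝔞⟩ := Ideal.dvd_iff_le.2 ((Ideal.span_singleton_le_iff_mem _).2 hα.2)
  let 𝔞' : coprimeIdeals 𝔪 := ⟨𝔞, mem_coprimeIdeals_of_mul_left (h𝔞 ▸ hα.1.span_mem)⟩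
  have hprod : (𝔞' * 𝔟 : Ideal (𝓞 K)) = Ideal.span {α} := (mul_comm _ _).trans h𝔞.symm
  refine ⟨⟨𝔞', mul_right_cancel (b := rayClass 𝔪 𝔟) ?_⟩, hprod⟩
  rw [hc, ← map_mul]
  exact rayClass_eq_one_iff.2 ⟨α, hα.1, hprod⟩

lemma exists_equiv_rayElements [NeZero 𝔪] (hc : c * rayClass 𝔪 𝔟 = 1) :
    ∃ (a : {𝔞 : coprimeIdeals 𝔪 // rayClass 𝔪 𝔞 = c} → 𝓞 K)
      (e : {𝔞 : coprimeIdeals 𝔪 // rayClass 𝔪 𝔞 = c} × rayUnits 𝔪 ≃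
        rayElements 𝔪 (𝔟 : Ideal (𝓞 K))),
      (∀ 𝔞, InRay 𝔪 (a 𝔞)) ∧ (∀ 𝔞, Ideal.span {a 𝔞} = (𝔞 : Ideal (𝓞 K)) * 𝔟) ∧
        ∀ p, (e p : 𝓞 K) = ((p.2 : (𝓞 K)ˣ) : 𝓞 K) * a p.1 := by
  choose a ha hspan using fun 𝔞 : {𝔞 : coprimeIdeals 𝔪 // rayClass 𝔪 𝔞 = c} =>
    rayClass_eq_one_iff.1 (show rayClass 𝔪 (𝔞.1 * 𝔟) = 1 by rw [map_mul, 𝔞.2, hc])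
  have hmem (𝔞) : a 𝔞 ∈ (𝔟 : Ideal (𝓞 K)) := by
    rw [← Ideal.span_singleton_le_iff_mem, ← hspan]
    exact Ideal.mul_le_right
  let f (p : {𝔞 : coprimeIdeals 𝔪 // rayClass 𝔪 𝔞 = c} × rayUnits 𝔪) :
      rayElements 𝔪 (𝔟 : Ideal (𝓞 K)) :=
    ⟨((p.2 : (𝓞 K)ˣ) : 𝓞 K) * a p.1, InRay.mul p.2.2 (ha p.1), Ideal.mul_mem_left _ _ (hmem p.1)⟩
  have hf : Function.Bijective f := by
    refine ⟨fun ⟨𝔞, u⟩ ⟨𝔞', u'⟩ h => ?_, fun α => ?_⟩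
    · have hval : ((u : (𝓞 K)ˣ) : 𝓞 K) * a 𝔞 = ((u' : (𝓞 K)ˣ) : 𝓞 K) * a 𝔞' :=
        congrArg Subtype.val h
      have hideal : Ideal.span {a 𝔞} = Ideal.span {a 𝔞'} := by
        rw [← Ideal.span_singleton_mul_left_unit (Units.isUnit (u : (𝓞 K)ˣ)), hval,
          Ideal.span_singleton_mul_left_unit (Units.isUnit _)]
      obtain rfl : 𝔞 = 𝔞' := by
        rw [← hspan, ← hspan] at hideal
        exact Subtype.ext (Subtype.ext (mul_right_cancel₀ 𝔟.2.1 hideal))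
      exact Prod.ext rfl (Subtype.ext (Units.ext (mul_right_cancel₀ (ha 𝔞).ne_zero hval)))
    · obtain ⟨𝔞, h𝔞⟩ := exists_rayClass_eq_mul_eq_span hc α.2
      obtain ⟨u, hu⟩ := (ha 𝔞).exists_rayUnits_mul_eq α.2.1 ((hspan 𝔞).symm.trans h𝔞)
      exact ⟨(𝔞, u), Subtype.ext hu⟩
  exact ⟨a, Equiv.ofBijective f hf, ha, fun 𝔞 => (hspan 𝔞).symm, fun p => rfl⟩

/-- The number of ideals of norm about `exp X` in a narrow ray class, smoothed by `G`. -/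
def rayCount (G : ℝ → ℝ) (c : RayClassGroup 𝔪) (X : ℝ) : ℝ :=
  ∑' 𝔞 : {𝔞 : coprimeIdeals 𝔪 // rayClass 𝔪 𝔞 = c},
    G (Real.log (Ideal.absNorm (𝔞 : Ideal (𝓞 K))) - X)

variable {η : logSpace K → ℝ} {ω : ℝ} {G : ℝ → ℝ}

lemma tsum_rayElements_mixedWeight [NeZero 𝔪]
    (hω : ∀ x, ∑' u : rayUnits 𝔪, η (logEmbedding K (Additive.ofMul (u : (𝓞 K)ˣ)) + x) = ω)
    (hc : c * rayClass 𝔪 𝔟 = 1) {T : ℝ} (hT : 0 < T)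
    (hs : Summable fun α : rayElements 𝔪 (𝔟 : Ideal (𝓞 K)) =>
      mixedWeight G η (T⁻¹ • mixedEmbedding K ((α : 𝓞 K) : K))) :
    ∑' α : rayElements 𝔪 (𝔟 : Ideal (𝓞 K)),
        mixedWeight G η (T⁻¹ • mixedEmbedding K ((α : 𝓞 K) : K)) =
      ω * rayCount G c
        (finrank ℚ K * Real.log T - Real.log (Ideal.absNorm (𝔟 : Ideal (𝓞 K)))) := by
  obtain ⟨a, e, ha, hspan, he⟩ := exists_equiv_rayElements hc
  have hval (p) : mixedWeight G η (T⁻¹ • mixedEmbedding K ((e p : 𝓞 K) : K)) =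
      G (Real.log (Ideal.absNorm (p.1 : Ideal (𝓞 K))) -
          (finrank ℚ K * Real.log T - Real.log (Ideal.absNorm (𝔟 : Ideal (𝓞 K))))) *
        η (logEmbedding K (Additive.ofMul (p.2 : (𝓞 K)ˣ)) +
          logMap (mixedEmbedding K (a p.1 : K))) := by
    have hN (𝔡 : coprimeIdeals 𝔪) : (Ideal.absNorm (𝔡 : Ideal (𝓞 K)) : ℝ) ≠ 0 :=
      Nat.cast_ne_zero.2 (absNorm_pos_of_mem_coprimeIdeals 𝔡).ne'
    rw [(e p).2.1.mixedWeight_smul G η hT, he, (ha p.1).logMap_unit_mul,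
      Ideal.span_singleton_mul_left_unit (Units.isUnit _), hspan, map_mul, Nat.cast_mul,
      Real.log_mul (hN _) (hN _)]
    congr 2
    ring
  rw [← e.tsum_eq]
  refine (e.summable_iff.2 hs).tsum_prod.trans ?_
  rw [rayCount, ← tsum_mul_left]
  refine tsum_congr fun 𝔞 => ?_
  simp only [Function.comp_apply, hval]
  rw [tsum_mul_left, hω, mul_comm]

/-- Summing over the units of the ray turns the lattice sum over elements of `𝔟` into a sum over
the ideals in the class inverse to that of `𝔟`. -/
lemma latticeSum_eq_rayCount [NeZero 𝔪] (hG : HasCompactSupport G) (hη : HasCompactSupport η)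
    (hω : ∀ x, ∑' u : rayUnits 𝔪, η (logEmbedding K (Additive.ofMul (u : (𝓞 K)ˣ)) + x) = ω)
    (hc : c * rayClass 𝔪 𝔟 = 1) {J : (FractionalIdeal (𝓞 K)⁰ K)ˣ}
    (hJ : (J : FractionalIdeal (𝓞 K)⁰ K) = ((𝔟 * 𝔪 : Ideal (𝓞 K)) : FractionalIdeal (𝓞 K)⁰ K))
    {α₀ : 𝓞 K} (hα₀ : α₀ ∈ rayElements 𝔪 𝔟) {T : ℝ} (hT : 0 < T) :
    latticeSum (fractionalIdealLatticeBasis K J) (mixedWeight G η) T (mixedEmbedding K (α₀ : K)) =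
      ω * rayCount G c
        (finrank ℚ K * Real.log T - Real.log (Ideal.absNorm (𝔟 : Ideal (𝓞 K)))) := by
  obtain ⟨i, hi, hval, hrange⟩ := exists_injective_rayElements hJ hα₀
  obtain ⟨s, hs⟩ := exists_finset_of_lattice (fractionalIdealLatticeBasis K J)
    (hasCompactSupport_mixedWeight hG hη) hT (mixedEmbedding K (α₀ : K)) 0
  have hsum : Summable fun v : Submodule.span ℤ (Set.range (fractionalIdealLatticeBasis K J)) =>
      mixedWeight G η (T⁻¹ • ((v : mixedSpace K) + mixedEmbedding K (α₀ : K))) :=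
    summable_of_ne_finset_zero fun v hv => hs _ (by simp) v hv
  rw [latticeSum, ← hi.tsum_eq, ← tsum_rayElements_mixedWeight hω hc hT]
  · simp only [hval]
  · simpa only [Function.comp_def, hval] using hsum.comp_injective hi
  · exact fun v hv => hrange v ((smul_mem_posCone_iff (inv_pos.2 hT)).1
      (Set.mem_of_indicator_ne_zero hv))

lemma volume_real_fundamentalDomain_fractionalIdealLatticeBasis {J : (FractionalIdeal (𝓞 K)⁰ K)ˣ}
    {𝔠 : Ideal (𝓞 K)} (hJ : (J : FractionalIdeal (𝓞 K)⁰ K) = 𝔠) :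
    volume.real (ZSpan.fundamentalDomain (fractionalIdealLatticeBasis K J)) =
      Ideal.absNorm 𝔠 * volume.real (ZSpan.fundamentalDomain (latticeBasis K)) := by
  rw [measureReal_def, volume_fundamentalDomain_fractionalIdealLatticeBasis, hJ,
    FractionalIdeal.coeIdeal_absNorm, ENNReal.toReal_mul, ← measureReal_def,
    ENNReal.toReal_ofReal (by positivity), Rat.cast_natCast]

/-- The leading coefficient of `rayCount`; it does not depend on the class. -/
def rayDensity (𝔪 : Ideal (𝓞 K)) (G : ℝ → ℝ) (η : logSpace K → ℝ) (ω : ℝ) : ℝ :=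
  (∫ y, mixedWeight G η y) /
    (ω * Ideal.absNorm 𝔪 * volume.real (ZSpan.fundamentalDomain (latticeBasis K)))

lemma exists_rayCount_sub_le [NeZero 𝔪] (hG : HasCompactSupport G) (hη : HasCompactSupport η)
    (hGc : ContDiff ℝ (⊤ : ℕ∞) G) (hηc : ContDiff ℝ (⊤ : ℕ∞) η) (hω0 : 0 < ω)
    (hω : ∀ x, ∑' u : rayUnits 𝔪, η (logEmbedding K (Additive.ofMul (u : (𝓞 K)ˣ)) + x) = ω)
    (hc : c * rayClass 𝔪 𝔟 = 1) :
    ∃ C : ℝ, ∀ X, 0 ≤ X + Real.log (Ideal.absNorm (𝔟 : Ideal (𝓞 K))) →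
      |rayCount G c X - rayDensity 𝔪 G η ω * Real.exp X| ≤ C * Real.exp (-X) := by
  obtain ⟨α₀, hα₀, hray⟩ := exists_inRay_mem 𝔟.2
  let J := FractionalIdeal.mk0 K (⟨(𝔟 * 𝔪 : Ideal (𝓞 K)),
    mem_nonZeroDivisors_of_ne_zero (mul_ne_zero 𝔟.2.1 (NeZero.ne 𝔪))⟩ : (Ideal (𝓞 K))⁰)
  have hJ : (J : FractionalIdeal (𝓞 K)⁰ K) =
      ((𝔟 * 𝔪 : Ideal (𝓞 K)) : FractionalIdeal (𝓞 K)⁰ K) := FractionalIdeal.coe_mk0 K _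
  obtain ⟨C, hC⟩ := exists_latticeSum_sub_integral_le (fractionalIdealLatticeBasis K J) volume
    (finrank ℚ K) (contDiff_mixedWeight hG hη hGc hηc) (hasCompactSupport_mixedWeight hG hη)
  rw [mixedEmbedding.finrank, volume_real_fundamentalDomain_fractionalIdealLatticeBasis hJ, map_mul,
    Nat.cast_mul] at hC
  set B : ℝ := (Ideal.absNorm (𝔟 : Ideal (𝓞 K)) : ℝ) with hB
  have hB0 : 0 < B := Nat.cast_pos.2 (absNorm_pos_of_mem_coprimeIdeals 𝔟)
  have hn : (0 : ℝ) < finrank ℚ K := Nat.cast_pos.2 finrank_pos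
  refine ⟨ω⁻¹ * C * B⁻¹, fun X hX => ?_⟩
  set T : ℝ := Real.exp ((X + Real.log B) / finrank ℚ K) with hT
  have hT0 : 0 < T := Real.exp_pos _
  have hlogT : finrank ℚ K * Real.log T - Real.log B = X := by
    rw [hT, Real.log_exp, mul_div_cancel₀ _ hn.ne', add_sub_cancel_right]
  have hTn : T ^ finrank ℚ K = B * Real.exp X := by
    rw [hT, ← Real.exp_nat_mul, mul_div_cancel₀ _ hn.ne', Real.exp_add, Real.exp_log hB0, mul_comm]
  have hCT := hC T (Real.one_le_exp (div_nonneg hX hn.le)) (mixedEmbedding K (α₀ : K))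
  rw [latticeSum_eq_rayCount hG hη hω hc hJ ⟨hray, hα₀⟩ hT0, ← hB, hlogT, inv_pow, hTn] at hCT
  calc |rayCount G c X - rayDensity 𝔪 G η ω * Real.exp X|
      = ω⁻¹ * |ω * rayCount G c X - B * Real.exp X * (∫ y, mixedWeight G η y) /
          (B * Ideal.absNorm 𝔪 * volume.real (ZSpan.fundamentalDomain (latticeBasis K)))| := by
        rw [← abs_of_pos (inv_pos.2 hω0), ← abs_mul, rayDensity]
        congr 1
        field_simp
    _ ≤ ω⁻¹ * (C * (B * Real.exp X)⁻¹) := by gcongr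
    _ = ω⁻¹ * C * B⁻¹ * Real.exp (-X) := by rw [mul_inv, Real.exp_neg]; ring

end

lemma rayDensity_pos [NeZero 𝔪] {η : logSpace K → ℝ} {ω : ℝ} {G : ℝ → ℝ}
    (hω : 0 < ω) (hI : 0 < ∫ y, mixedWeight G η y) : 0 < rayDensity 𝔪 G η ω := by
  have hV : 0 < volume.real (ZSpan.fundamentalDomain (latticeBasis K)) :=
    ENNReal.toReal_pos (ZSpan.measure_fundamentalDomain_ne_zero _)
      (ZSpan.fundamentalDomain_isBounded _).measure_lt_top.ne
  have hN𝔪 : 0 < Ideal.absNorm 𝔪 :=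
    Ideal.absNorm_pos_iff_mem_nonZeroDivisors.2 (mem_nonZeroDivisors_of_ne_zero (NeZero.ne 𝔪))
  rw [rayDensity]
  positivity

lemma rayCount_stepBump_eq_zero {c : RayClassGroup 𝔪} {X : ℝ} (hX : X < -1) :
    rayCount stepBump c X = 0 := by
  refine (tsum_congr fun 𝔞 => isWeight_stepBump.supp _ ?_).trans tsum_zero
  have hlog : 0 ≤ Real.log (Ideal.absNorm (𝔞 : Ideal (𝓞 K))) := Real.log_natCast_nonneg _
  rw [abs_of_pos (by linarith)]
  linarith

theorem exists_hasExpDecay_rayCount (𝔪 : Ideal (𝓞 K)) [NeZero 𝔪] : ∃ κ : ℝ, 0 < κ ∧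
    ∀ c : RayClassGroup 𝔪,
      HasExpDecay (fun X => rayCount stepBump c X - κ * Real.exp X) 1 := by
  obtain ⟨η, ω, hηc, hη, hη0, hη1, hω0, hω⟩ := exists_contDiff_tsum_rayUnits_add_eq (NeZero.ne 𝔪)
  have hG := isWeight_stepBump.hasCompactSupport
  have hκ : 0 < rayDensity 𝔪 stepBump η ω := rayDensity_pos hω0
    (integral_mixedWeight_pos hG hη contDiff_stepBump hηc stepBump_nonneg hη0
      (stepBump_zero ▸ one_pos) hη1)
  refine ⟨_, hκ, fun c => ?_⟩
  obtain ⟨𝔟, h𝔟, hN𝔟⟩ := exists_rayClass_eq_norm_ge c⁻¹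
  obtain ⟨C, hC⟩ := exists_rayCount_sub_le hG hη contDiff_stepBump hηc hω0 hω
    (show c * rayClass 𝔪 𝔟 = 1 by rw [h𝔟, mul_inv_cancel])
  have hlog : 1 ≤ Real.log (Ideal.absNorm (𝔟 : Ideal (𝓞 K))) := by
    have hN : (3 : ℝ) ≤ Ideal.absNorm (𝔟 : Ideal (𝓞 K)) := by exact_mod_cast hN𝔟
    rw [Real.le_log_iff_exp_le (by linarith)]
    linarith [Real.exp_one_lt_d9]
  refine ⟨|C| * Real.exp 2 + rayDensity 𝔪 stepBump η ω, fun X => ?_⟩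
  change |rayCount stepBump c X - _ * Real.exp X| ≤ _
  rcases lt_or_ge X (-1) with hX | hX
  · rw [rayCount_stepBump_eq_zero hX, zero_sub, abs_neg,
      abs_of_pos (mul_pos hκ (Real.exp_pos X)), abs_of_neg (a := X) (by linarith), neg_one_mul,
      neg_neg]
    gcongr
    exact le_add_of_nonneg_left (by positivity)
  · calc |rayCount stepBump c X - rayDensity 𝔪 stepBump η ω * Real.exp X|
        ≤ |C| * Real.exp (-X) :=
          (hC X (by linarith)).trans (mul_le_mul_of_nonneg_right (le_abs_self C) (by positivity))
      _ ≤ |C| * Real.exp (2 + -1 * |X|) := by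
          gcongr
          rcases abs_cases X with ⟨h, -⟩ | ⟨h, -⟩ <;> linarith
      _ ≤ _ := by
          rw [Real.exp_add, ← mul_assoc]
          gcongr
          exact le_add_of_nonneg_right hκ.le

end RayCount

section ClassSums

open scoped Classical
open UniqueFactorizationMonoid

section VonMangoldt

variable {K : Type*} [Field K] [NumberField K]

/-- The von Mangoldt function on ideals: `log N𝔭` at the powers of a prime `𝔭`, zero elsewhere. -/
def idealVonMangoldt (𝔡 : Ideal (𝓞 K)) : ℝ :=
  if IsPrimePow 𝔡 then ∑ 𝔭 ∈ (normalizedFactors 𝔡).toFinset, Real.log (Ideal.absNorm 𝔭) else 0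

lemma idealVonMangoldt_nonneg (𝔡 : Ideal (𝓞 K)) : 0 ≤ idealVonMangoldt 𝔡 := by
  rw [idealVonMangoldt]
  split_ifs
  exacts [Finset.sum_nonneg fun _ _ => Real.log_natCast_nonneg _, le_rfl]

lemma idealVonMangoldt_prime_pow {𝔭 : Ideal (𝓞 K)} (h𝔭 : Prime 𝔭) {k : ℕ} (hk : k ≠ 0) :
    idealVonMangoldt (𝔭 ^ k) = Real.log (Ideal.absNorm 𝔭) := by
  rw [idealVonMangoldt, if_pos (h𝔭.isPrimePow.pow hk), normalizedFactors_pow,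
    normalizedFactors_irreducible h𝔭.irreducible, normalize_eq, Multiset.nsmul_singleton,
    Multiset.toFinset_replicate, if_neg hk, Finset.sum_singleton]

lemma prime_pow_injective {𝔭 𝔮 : Ideal (𝓞 K)} (h𝔭 : Prime 𝔭) (h𝔮 : Prime 𝔮) {k l : ℕ}
    (hk : k ≠ 0) (h : 𝔭 ^ k = 𝔮 ^ l) : 𝔭 = 𝔮 ∧ k = l := by
  obtain rfl := eq_of_prime_pow_eq h𝔭 h𝔮 (Nat.pos_of_ne_zero hk) h
  exact ⟨rfl, (Ideal.pow_right_strictAnti 𝔭 h𝔭.ne_zero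
    fun htop => h𝔭.not_isUnit (Ideal.isUnit_iff.2 htop)).injective h⟩

lemma prime_pow_dvd_iff_le_count {𝔭 𝔞 : Ideal (𝓞 K)} (h𝔭 : Prime 𝔭) (h𝔞 : 𝔞 ≠ 0) (k : ℕ) :
    𝔭 ^ k ∣ 𝔞 ↔ k ≤ (normalizedFactors 𝔞).count 𝔭 := by
  rw [pow_dvd_iff_le_emultiplicity, emultiplicity_eq_count_normalizedFactors h𝔭.irreducible h𝔞,
    normalize_eq, Nat.cast_le]

lemma log_absNorm_eq_sum_count {𝔞 : Ideal (𝓞 K)} (h𝔞 : 𝔞 ≠ 0) :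
    Real.log (Ideal.absNorm 𝔞) = ∑ 𝔭 ∈ (normalizedFactors 𝔞).toFinset,
      (normalizedFactors 𝔞).count 𝔭 * Real.log (Ideal.absNorm 𝔭) := by
  conv_lhs => rw [← Ideal.prod_normalizedFactors_eq_self h𝔞, Finset.prod_multiset_count, map_prod]
  rw [Nat.cast_prod, Real.log_prod]
  · simp only [map_pow, Nat.cast_pow, Real.log_pow]
  · intro 𝔭 h𝔭
    have hprime := prime_of_normalized_factor 𝔭 (Multiset.mem_toFinset.1 h𝔭)
    exact Nat.cast_ne_zero.2 (Ideal.absNorm_ne_zero_iff_mem_nonZeroDivisors.2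
      (mem_nonZeroDivisors_of_ne_zero (pow_ne_zero _ hprime.ne_zero)))

lemma sum_idealVonMangoldt {𝔞 : Ideal (𝓞 K)} (h𝔞 : 𝔞 ≠ 0) {D : Finset (Ideal (𝓞 K))}
    (hD : ∀ 𝔡, 𝔡 ∈ D ↔ 𝔡 ∣ 𝔞) : ∑ 𝔡 ∈ D, idealVonMangoldt 𝔡 = Real.log (Ideal.absNorm 𝔞) := by
  set m := normalizedFactors 𝔞
  have hmem (x : (_ : Ideal (𝓞 K)) × ℕ) : x ∈ m.toFinset.sigma (fun 𝔭 => Finset.Icc 1 (m.count 𝔭)) ↔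
      Prime x.1 ∧ x.2 ≠ 0 ∧ x.1 ^ x.2 ∣ 𝔞 := by
    rw [Finset.mem_sigma, Multiset.mem_toFinset, Finset.mem_Icc, Nat.one_le_iff_ne_zero]
    constructor
    · rintro ⟨h𝔭, hk, hle⟩
      have hprime := prime_of_normalized_factor _ h𝔭
      exact ⟨hprime, hk, (prime_pow_dvd_iff_le_count hprime h𝔞 _).2 hle⟩
    · rintro ⟨hprime, hk, hdvd⟩
      have hle := (prime_pow_dvd_iff_le_count hprime h𝔞 _).1 hdvd
      exact ⟨Multiset.count_pos.1 ((Nat.pos_of_ne_zero hk).trans_le hle), hk, hle⟩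
  calc ∑ 𝔡 ∈ D, idealVonMangoldt 𝔡
      = ∑ x ∈ m.toFinset.sigma (fun 𝔭 => Finset.Icc 1 (m.count 𝔭)),
          Real.log (Ideal.absNorm x.1) := by
        symm
        refine Finset.sum_of_injOn (fun x => x.1 ^ x.2) ?_ ?_ ?_ ?_
        · rintro ⟨𝔭, k⟩ hx ⟨𝔮, l⟩ hy heq
          obtain ⟨rfl, rfl⟩ := prime_pow_injective ((hmem _).1 hx).1 ((hmem _).1 hy).1
            ((hmem _).1 hx).2.1 heq
          rfl
        · exact fun x hx => (hD _).2 ((hmem x).1 hx).2.2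
        · refine fun 𝔡 h𝔡 hrange => if_neg ?_
          rintro ⟨𝔭, k, h𝔭, hk, rfl⟩
          exact hrange ⟨⟨𝔭, k⟩, (hmem _).2 ⟨h𝔭, hk.ne', (hD _).1 h𝔡⟩, rfl⟩
        · exact fun x hx => (idealVonMangoldt_prime_pow ((hmem x).1 hx).1 ((hmem x).1 hx).2.1).symm
    _ = Real.log (Ideal.absNorm 𝔞) := by
        rw [Finset.sum_sigma, log_absNorm_eq_sum_count h𝔞]
        simp only [Finset.sum_const, Nat.card_Icc, nsmul_eq_mul, Nat.add_sub_cancel, m]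

end VonMangoldt

variable {K : Type*} [Field K] [NumberField K] {𝔪 : Ideal (𝓞 K)}

/-- The ideals of norm `n` prime to `𝔪`. -/
def normFiber (𝔪 : Ideal (𝓞 K)) (n : ℕ) : Finset (coprimeIdeals 𝔪) :=
  ((Ideal.finite_setOfPred_absNorm_eq n).preimage Subtype.val_injective.injOn).toFinset

lemma mem_normFiber {n : ℕ} {𝔞 : coprimeIdeals 𝔪} :
    𝔞 ∈ normFiber 𝔪 n ↔ Ideal.absNorm (𝔞 : Ideal (𝓞 K)) = n := by
  simp [normFiber]

lemma normFiber_one : normFiber 𝔪 1 = {1} := by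
  ext 𝔞
  rw [mem_normFiber, Ideal.absNorm_eq_one_iff, Finset.mem_singleton, ← Ideal.one_eq_top]
  exact ⟨fun h => Subtype.ext h, fun h => by rw [h]; rfl⟩

lemma summable_iff_summable_sum_normFiber {f : coprimeIdeals 𝔪 → ℝ} (hf : 0 ≤ f) :
    Summable f ↔ Summable fun n => ∑ 𝔞 ∈ normFiber 𝔪 n, f 𝔞 := by
  rw [summable_partition hf (s := fun n => (normFiber 𝔪 n : Set (coprimeIdeals 𝔪))) fun 𝔞 =>
    ⟨_, mem_normFiber.2 rfl, fun n h => (mem_normFiber.1 h).symm⟩]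
  exact (and_iff_right fun n => (normFiber 𝔪 n).summable f).trans
    (summable_congr fun n => Finset.tsum_subtype' _ f)

lemma tsum_eq_tsum_sum_normFiber {f : coprimeIdeals 𝔪 → ℝ} (hf : Summable f) :
    ∑' 𝔞, f 𝔞 = ∑' n, ∑ 𝔞 ∈ normFiber 𝔪 n, f 𝔞 := by
  rw [← (hf.hasSum.tsum_fiberwise
    fun 𝔞 : coprimeIdeals 𝔪 => Ideal.absNorm (𝔞 : Ideal (𝓞 K))).tsum_eq]
  refine tsum_congr fun n => ?_
  have hcoe : (normFiber 𝔪 n : Set (coprimeIdeals 𝔪)) =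
      (fun 𝔞 : coprimeIdeals 𝔪 => Ideal.absNorm (𝔞 : Ideal (𝓞 K))) ⁻¹' {n} :=
    Set.ext fun _ => mem_normFiber
  rw [← Finset.tsum_subtype', hcoe]

/-- An `LSeries` that does not converge absolutely is zero by convention, whereas the Dedekind zeta
function has a pole at `1`. -/
lemma lseriesSummable_card_absNorm_eq (K : Type*) [Field K] [NumberField K] {s : ℝ} (hs : 1 < s) :
    LSeriesSummable (fun n => Nat.card {I : Ideal (𝓞 K) // Ideal.absNorm I = n}) (s : ℂ) := by
  have hne := (tendsto_sub_one_mul_dedekindZeta_nhdsGT K).eventually_ne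
    (Complex.ofReal_ne_zero.2 (dedekindZeta_residue_ne_zero K))
  obtain ⟨t, ht, hts⟩ := (hne.and (Ioo_mem_nhdsGT hs)).exists
  refine LSeriesSummable.of_re_le_re (s := (t : ℂ)) (by simpa using hts.2.le) ?_
  by_contra hns
  exact ht (by rw [dedekindZeta, LSeries, tsum_eq_zero_of_not_summable hns, mul_zero])

lemma card_normFiber_le (𝔪 : Ideal (𝓞 K)) (n : ℕ) :
    (normFiber 𝔪 n).card ≤ Nat.card {I : Ideal (𝓞 K) // Ideal.absNorm I = n} := by
  have hfin : Finite {I : Ideal (𝓞 K) // Ideal.absNorm I = n} :=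
    Ideal.finite_setOfPred_absNorm_eq n
  rw [← Nat.card_eq_finsetCard]
  exact Nat.card_le_card_of_injective
    (fun 𝔞 : normFiber 𝔪 n => (⟨𝔞.1.1, mem_normFiber.1 𝔞.2⟩ : {I // Ideal.absNorm I = n}))
    fun 𝔞 𝔟 h => Subtype.ext (Subtype.ext (Subtype.mk.inj h))

lemma summable_absNorm_rpow_inv (𝔪 : Ideal (𝓞 K)) {s : ℝ} (hs : 1 < s) :
    Summable fun 𝔞 : coprimeIdeals 𝔪 => ((Ideal.absNorm (𝔞 : Ideal (𝓞 K)) : ℝ) ^ s)⁻¹ := by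
  rw [summable_iff_summable_sum_normFiber fun 𝔞 => by positivity]
  refine (lseriesSummable_card_absNorm_eq K hs).norm.of_nonneg_of_le
    (fun n => Finset.sum_nonneg fun _ _ => by positivity) fun n => ?_
  rw [Finset.sum_congr rfl fun 𝔞 h𝔞 => by rw [mem_normFiber.1 h𝔞], Finset.sum_const, nsmul_eq_mul,
    LSeries.norm_term_eq]
  split_ifs with hn
  · rw [hn, Nat.cast_zero, Real.zero_rpow (zero_lt_one.trans hs).ne', inv_zero, mul_zero]
  · rw [Complex.norm_natCast, Complex.ofReal_re, div_eq_mul_inv]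
    gcongr
    exact card_normFiber_le 𝔪 n

/-- The sum of `f` over the ideals of norm `n` in the class `c`, as an arithmetic function. The
class group is written additively to match `IsClassSystem`. -/
def classSum (f : coprimeIdeals 𝔪 → ℝ) (c : Additive (RayClassGroup 𝔪)) : ArithmeticFunction ℝ :=
  ⟨fun n => ∑ 𝔞 ∈ normFiber 𝔪 n, if Additive.ofMul (rayClass 𝔪 𝔞) = c then f 𝔞 else 0,
    Finset.sum_eq_zero fun 𝔞 h =>
      absurd (mem_normFiber.1 h) (absNorm_pos_of_mem_coprimeIdeals 𝔞).ne'⟩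

section ClassSum

variable (f g : coprimeIdeals 𝔪 → ℝ) (c : Additive (RayClassGroup 𝔪)) (n : ℕ)

lemma classSum_apply : classSum f c n =
    ∑ 𝔞 ∈ normFiber 𝔪 n, if Additive.ofMul (rayClass 𝔪 𝔞) = c then f 𝔞 else 0 := rfl

lemma classSum_nonneg {f : coprimeIdeals 𝔪 → ℝ} (hf : ∀ 𝔞, 0 ≤ f 𝔞) : 0 ≤ classSum f c n :=
  Finset.sum_nonneg fun 𝔞 _ => ite_nonneg (hf 𝔞) le_rfl

lemma classSum_one_apply : classSum f c 1 = if c = 0 then f 1 else 0 := by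
  rw [classSum_apply, normFiber_one, Finset.sum_singleton, map_one, ofMul_one]
  simp only [eq_comm]

lemma classSum_mul_eq (h : ℕ → ℝ) : classSum f c n * h n =
    classSum (fun 𝔞 => f 𝔞 * h (Ideal.absNorm (𝔞 : Ideal (𝓞 K)))) c n := by
  rw [classSum_apply, classSum_apply, Finset.sum_mul]
  refine Finset.sum_congr rfl fun 𝔞 h𝔞 => ?_
  rw [mem_normFiber.1 h𝔞, ite_mul, zero_mul]

lemma tsum_classSum_mul {f : coprimeIdeals 𝔪 → ℝ} {h : ℕ → ℝ}
    (hf : Summable fun 𝔞 => f 𝔞 * h (Ideal.absNorm (𝔞 : Ideal (𝓞 K)))) :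
    ∑' n, classSum f c n * h n = ∑' 𝔞 : {𝔞 : coprimeIdeals 𝔪 // rayClass 𝔪 𝔞 = c.toMul},
      f 𝔞 * h (Ideal.absNorm (𝔞 : Ideal (𝓞 K))) := by
  refine Eq.trans ?_ (tsum_subtype {𝔞 | rayClass 𝔪 𝔞 = c.toMul}
    fun 𝔞 => f 𝔞 * h (Ideal.absNorm (𝔞 : Ideal (𝓞 K)))).symm
  rw [tsum_eq_tsum_sum_normFiber (hf.indicator _)]
  exact tsum_congr fun n => classSum_mul_eq f c n h

lemma summable_classSum_mul {f : coprimeIdeals 𝔪 → ℝ} {h : ℕ → ℝ}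
    (hf : 0 ≤ fun 𝔞 => f 𝔞 * h (Ideal.absNorm (𝔞 : Ideal (𝓞 K)))) :
    (Summable fun n => classSum f c n * h n) ↔ Summable ({𝔞 | rayClass 𝔪 𝔞 = c.toMul}.indicator
      fun 𝔞 => f 𝔞 * h (Ideal.absNorm (𝔞 : Ideal (𝓞 K)))) := by
  rw [summable_iff_summable_sum_normFiber fun 𝔞 => Set.indicator_nonneg (fun 𝔟 _ => hf 𝔟) 𝔞]
  exact summable_congr fun n => classSum_mul_eq f c n h

end ClassSum

section Convolution

lemma bijOn_fst_factorizations (𝔞 : coprimeIdeals 𝔪) :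
    Set.BijOn (fun p : coprimeIdeals 𝔪 × coprimeIdeals 𝔪 => (p.1 : Ideal (𝓞 K)))
      {p | p.1 * p.2 = 𝔞} {𝔡 | 𝔡 ∣ 𝔞} := by
  refine ⟨?_, ?_, ?_⟩
  · rintro p rfl
    exact ⟨p.2, rfl⟩
  · rintro ⟨𝔡, 𝔢⟩ h ⟨𝔡', 𝔢'⟩ h' heq
    obtain rfl : 𝔡 = 𝔡' := Subtype.ext heq
    have hprod : (𝔡 * 𝔢 : Ideal (𝓞 K)) = 𝔡 * 𝔢' := congrArg Subtype.val (h.trans h'.symm)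
    rw [Subtype.ext (mul_left_cancel₀ 𝔡.2.1 hprod)]
  · rintro 𝔡 ⟨𝔢, h𝔢⟩
    have h𝔡𝔢 : 𝔡 * 𝔢 ∈ coprimeIdeals 𝔪 := h𝔢 ▸ 𝔞.2
    exact ⟨(⟨𝔡, mem_coprimeIdeals_of_mul_left (mul_comm 𝔡 𝔢 ▸ h𝔡𝔢)⟩,
      ⟨𝔢, mem_coprimeIdeals_of_mul_left h𝔡𝔢⟩), Subtype.ext h𝔢.symm, rfl⟩

lemma finite_factorizations (𝔞 : coprimeIdeals 𝔪) :
    {p : coprimeIdeals 𝔪 × coprimeIdeals 𝔪 | p.1 * p.2 = 𝔞}.Finite := by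
  have := fintypeSubtypeDvd (𝔞 : Ideal (𝓞 K)) 𝔞.2.1
  exact (bijOn_fst_factorizations 𝔞).finite_iff_finite.2 (Finite.of_fintype {𝔡 // 𝔡 ∣ _})

/-- The factorizations of `𝔞` into two factors. -/
def factorizations (𝔞 : coprimeIdeals 𝔪) : Finset (coprimeIdeals 𝔪 × coprimeIdeals 𝔪) :=
  (finite_factorizations 𝔞).toFinset

lemma mem_factorizations {𝔞 : coprimeIdeals 𝔪} {p : coprimeIdeals 𝔪 × coprimeIdeals 𝔪} :
    p ∈ factorizations 𝔞 ↔ p.1 * p.2 = 𝔞 := Set.Finite.mem_toFinset _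

lemma sum_factorizations_idealVonMangoldt (𝔞 : coprimeIdeals 𝔪) :
    ∑ p ∈ factorizations 𝔞, idealVonMangoldt (p.1 : Ideal (𝓞 K)) =
      Real.log (Ideal.absNorm (𝔞 : Ideal (𝓞 K))) := by
  have hbij := bijOn_fst_factorizations 𝔞
  rw [← sum_idealVonMangoldt 𝔞.2.1
    (D := (factorizations 𝔞).image fun p => (p.1 : Ideal (𝓞 K))) fun 𝔡 => ?_, Finset.sum_image]
  · exact fun p hp q hq => hbij.injOn (mem_factorizations.1 hp) (mem_factorizations.1 hq)
  · simp only [Finset.mem_image, mem_factorizations]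
    exact Set.ext_iff.1 hbij.image_eq 𝔡

variable [NeZero 𝔪] (f g : coprimeIdeals 𝔪 → ℝ) (c : Additive (RayClassGroup 𝔪))

lemma sum_classSum_apply_mul (a b : ℕ) : ∑ c', classSum f c' a * classSum g (c - c') b =
    ∑ p ∈ normFiber 𝔪 a ×ˢ normFiber 𝔪 b,
      if Additive.ofMul (rayClass 𝔪 (p.1 * p.2)) = c then f p.1 * g p.2 else 0 := by
  simp only [classSum_apply, Finset.sum_mul_sum, Finset.sum_product]
  rw [Finset.sum_comm]
  refine Finset.sum_congr rfl fun 𝔡 _ => ?_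
  rw [Finset.sum_comm]
  refine Finset.sum_congr rfl fun 𝔢 _ => ?_
  simp only [ite_mul, zero_mul]
  rw [Finset.sum_ite_eq, if_pos (Finset.mem_univ _), mul_ite, mul_zero, map_mul, ofMul_mul]
  simp only [eq_sub_iff_add_eq']

lemma sum_classSum_mul (n : ℕ) : ∑ c', (classSum f c' * classSum g (c - c')) n =
    classSum (fun 𝔞 => ∑ p ∈ factorizations 𝔞, f p.1 * g p.2) c n := by
  have hne (p : coprimeIdeals 𝔪 × coprimeIdeals 𝔪) :
      Ideal.absNorm (p.1 : Ideal (𝓞 K)) * Ideal.absNorm (p.2 : Ideal (𝓞 K)) ≠ 0 :=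
    (Nat.mul_pos (absNorm_pos_of_mem_coprimeIdeals _) (absNorm_pos_of_mem_coprimeIdeals _)).ne'
  have hF (𝔞 : coprimeIdeals 𝔪) : (if Additive.ofMul (rayClass 𝔪 𝔞) = c then
      ∑ p ∈ factorizations 𝔞, f p.1 * g p.2 else 0) = ∑ p ∈ factorizations 𝔞,
        if Additive.ofMul (rayClass 𝔪 (p.1 * p.2)) = c then f p.1 * g p.2 else 0 := by
    rw [← Finset.sum_congr rfl fun p hp =>
      congrArg (fun 𝔟 => if Additive.ofMul (rayClass 𝔪 𝔟) = c then f p.1 * g p.2 else 0)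
        (mem_factorizations.1 hp).symm]
    split_ifs
    exacts [rfl, Finset.sum_const_zero.symm]
  simp only [ArithmeticFunction.mul_apply]
  rw [Finset.sum_comm]
  simp only [sum_classSum_apply_mul]
  simp only [classSum_apply, hF, Finset.sum_sigma']
  refine Finset.sum_nbij'
    (fun x => ⟨x.2.1 * x.2.2, x.2⟩)
    (fun y => ⟨(Ideal.absNorm (y.2.1 : Ideal (𝓞 K)), Ideal.absNorm (y.2.2 : Ideal (𝓞 K))), y.2⟩)
    ?_ ?_ ?_ ?_ fun _ _ => rfl
  · rintro ⟨⟨a, b⟩, p⟩ hx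
    simp only [Finset.mem_sigma, Nat.mem_divisorsAntidiagonal, Finset.mem_product, mem_normFiber,
      mem_factorizations, Submonoid.coe_mul, map_mul] at hx ⊢
    exact ⟨by rw [hx.2.1, hx.2.2, hx.1.1], trivial⟩
  · rintro ⟨𝔞, p⟩ hy
    simp only [Finset.mem_sigma, Nat.mem_divisorsAntidiagonal, Finset.mem_product, mem_normFiber,
      mem_factorizations] at hy ⊢
    obtain ⟨hn, rfl⟩ := hy
    rw [Submonoid.coe_mul, map_mul] at hn
    exact ⟨⟨hn, hn ▸ hne p⟩, trivial, trivial⟩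
  · rintro ⟨⟨a, b⟩, p⟩ hx
    simp only [Finset.mem_sigma, Finset.mem_product, mem_normFiber] at hx
    obtain ⟨-, rfl, rfl⟩ := hx
    rfl
  · rintro ⟨𝔞, p⟩ hy
    obtain rfl : p.1 * p.2 = 𝔞 := mem_factorizations.1 (Finset.mem_sigma.1 hy).2
    rfl

end Convolution

end ClassSums

section PrimesInClasses

open scoped Classical

variable {K : Type*} [Field K] {𝔪 : Ideal (𝓞 K)}

/-- The powers `𝔭 ^ k` with `k ≥ 2` of the primes `𝔭` not dividing `𝔪`. -/
def higherPrimePowers (𝔪 : Ideal (𝓞 K)) : Set (coprimeIdeals 𝔪) :=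
  Set.range fun x : {𝔭 : coprimeIdeals 𝔪 // Prime (𝔭 : Ideal (𝓞 K))} × ℕ => x.1.1 ^ (x.2 + 2)

lemma prime_or_mem_higherPrimePowers {𝔡 : coprimeIdeals 𝔪} (h : IsPrimePow (𝔡 : Ideal (𝓞 K))) :
    Prime (𝔡 : Ideal (𝓞 K)) ∨ 𝔡 ∈ higherPrimePowers 𝔪 := by
  obtain ⟨𝔭, k, h𝔭, hk, h𝔡⟩ := h
  obtain ⟨k, rfl⟩ := Nat.exists_eq_add_one.2 hk
  have hmem : 𝔭 ∈ coprimeIdeals 𝔪 :=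
    mem_coprimeIdeals_of_mul_left (𝔞 := 𝔭 ^ k) (pow_succ 𝔭 k ▸ h𝔡 ▸ 𝔡.2)
  cases k with
  | zero => exact .inl (h𝔡 ▸ (pow_one 𝔭).symm ▸ h𝔭)
  | succ k => exact .inr ⟨(⟨⟨𝔭, hmem⟩, h𝔭⟩, k), Subtype.ext h𝔡⟩

variable [NumberField K]

lemma two_le_absNorm_of_prime {𝔭 : coprimeIdeals 𝔪} (h𝔭 : Prime (𝔭 : Ideal (𝓞 K))) :
    2 ≤ Ideal.absNorm (𝔭 : Ideal (𝓞 K)) :=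
  (Nat.two_le_iff _).2 ⟨(absNorm_pos_of_mem_coprimeIdeals 𝔭).ne',
    fun h => h𝔭.not_isUnit (Ideal.isUnit_iff.2 (Ideal.absNorm_eq_one_iff.1 h))⟩

lemma exists_prime_mem_coprimeIdeals (𝔪 : Ideal (𝓞 K)) [NeZero 𝔪] :
    ∃ 𝔭 : coprimeIdeals 𝔪, Prime (𝔭 : Ideal (𝓞 K)) := by
  obtain ⟨𝔟, -, h𝔟⟩ := exists_rayClass_eq_norm_ge (1 : RayClassGroup 𝔪)
  have hne : (𝔟 : Ideal (𝓞 K)) ≠ ⊤ := fun h => by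
    rw [h, Ideal.absNorm_top] at h𝔟
    omega
  obtain ⟨𝔭, h𝔭, hle⟩ := Ideal.exists_le_maximal _ hne
  obtain ⟨𝔠, h𝔠⟩ := Ideal.dvd_iff_le.2 hle
  have hmem : 𝔭 ∈ coprimeIdeals 𝔪 :=
    mem_coprimeIdeals_of_mul_left (𝔞 := 𝔠) (mul_comm 𝔭 𝔠 ▸ h𝔠 ▸ 𝔟.2)
  exact ⟨⟨𝔭, hmem⟩, Ideal.prime_of_isPrime hmem.1 h𝔭.isPrime⟩

lemma summable_stepBump_log_absNorm (𝔪 : Ideal (𝓞 K)) (X : ℝ) :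
    Summable fun 𝔞 : coprimeIdeals 𝔪 =>
      stepBump (Real.log (Ideal.absNorm (𝔞 : Ideal (𝓞 K))) - X) := by
  refine summable_of_ne_finset_zero
    (s := (Finset.range (⌊Real.exp (X + 1)⌋₊ + 1)).biUnion (normFiber 𝔪)) fun 𝔞 h𝔞 => ?_
  have hpos : (0 : ℝ) < Ideal.absNorm (𝔞 : Ideal (𝓞 K)) :=
    Nat.cast_pos.2 (absNorm_pos_of_mem_coprimeIdeals 𝔞)
  have hlt : ⌊Real.exp (X + 1)⌋₊ < Ideal.absNorm (𝔞 : Ideal (𝓞 K)) := by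
    by_contra! hle
    exact h𝔞 (Finset.mem_biUnion.2
      ⟨_, Finset.mem_range.2 (Nat.lt_succ_of_le hle), mem_normFiber.2 rfl⟩)
  have hlog := (Real.lt_log_iff_exp_lt hpos).2 ((Nat.floor_lt (Real.exp_pos _).le).1 hlt)
  exact isWeight_stepBump.supp _ (lt_of_lt_of_le (by linarith) (le_abs_self _))

lemma tsum_classSum_one_mul_stepBump (c : Additive (RayClassGroup 𝔪)) (X : ℝ) :
    ∑' n : ℕ, classSum (fun _ => 1) c n * stepBump (Real.log n - X) =
      rayCount stepBump c.toMul X := by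
  have hsum := (summable_stepBump_log_absNorm 𝔪 X).mul_left 1
  rw [tsum_classSum_mul c (h := fun n => stepBump (Real.log n - X)) hsum]
  simp only [one_mul, rayCount]

variable (𝔪) in
lemma isClassSystem_classSum [NeZero 𝔪] :
    IsClassSystem (classSum (𝔪 := 𝔪) fun _ => 1)
      (classSum (𝔪 := 𝔪) fun 𝔡 => idealVonMangoldt (𝔡 : Ideal (𝓞 K))) where
  A_nonneg c n := classSum_nonneg c n fun _ => zero_le_one
  L_nonneg c n := classSum_nonneg c n fun _ => idealVonMangoldt_nonneg _
  A_zero_one := by rw [classSum_one_apply, if_pos rfl]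
  A_one c hc := by rw [classSum_one_apply, if_neg hc]
  log_eq c n := by
    rw [sum_classSum_mul, classSum_mul_eq _ c n fun n => Real.log n]
    simp only [one_mul, mul_one, sum_factorizations_idealVonMangoldt]
  summable c s hs := by
    simp only [div_eq_mul_inv]
    refine (summable_classSum_mul c (h := fun n => ((n : ℝ) ^ s)⁻¹) fun 𝔞 => ?_).2 ?_
    · positivity
    · simp only [one_mul]
      exact (summable_absNorm_rpow_inv 𝔪 hs).indicator _

lemma log_absNorm_le_classSum_idealVonMangoldt [NeZero 𝔪] {𝔭 : coprimeIdeals 𝔪}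
    (h𝔭 : Prime (𝔭 : Ideal (𝓞 K))) {i : ℕ} (hi : 1 ≤ i) :
    Real.log (Ideal.absNorm (𝔭 : Ideal (𝓞 K))) ≤
      classSum (𝔪 := 𝔪) (fun 𝔡 => idealVonMangoldt (𝔡 : Ideal (𝓞 K))) 0
        ((Ideal.absNorm (𝔭 : Ideal (𝓞 K)) ^ orderOf (rayClass 𝔪 𝔭)) ^ i) := by
  set k := orderOf (rayClass 𝔪 𝔭)
  have hki : k * i ≠ 0 := (Nat.mul_pos (orderOf_pos _) hi).ne'
  have hmem : 𝔭 ^ (k * i) ∈ normFiber 𝔪 ((Ideal.absNorm (𝔭 : Ideal (𝓞 K)) ^ k) ^ i) := by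
    rw [mem_normFiber, SubmonoidClass.coe_pow, map_pow, pow_mul]
  have hclass : Additive.ofMul (rayClass 𝔪 (𝔭 ^ (k * i))) = 0 := by
    rw [map_pow, pow_mul, pow_orderOf_eq_one, one_pow, ofMul_one]
  calc Real.log (Ideal.absNorm (𝔭 : Ideal (𝓞 K)))
      = if Additive.ofMul (rayClass 𝔪 (𝔭 ^ (k * i))) = 0 then
          idealVonMangoldt ((𝔭 ^ (k * i) : coprimeIdeals 𝔪) : Ideal (𝓞 K)) else 0 := by
        rw [if_pos hclass, SubmonoidClass.coe_pow, idealVonMangoldt_prime_pow h𝔭 hki]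
    _ ≤ _ := Finset.single_le_sum
        (f := fun 𝔡 => if Additive.ofMul (rayClass 𝔪 𝔡) = 0 then
          idealVonMangoldt (𝔡 : Ideal (𝓞 K)) else 0)
        (fun 𝔡 _ => ite_nonneg (idealVonMangoldt_nonneg _) le_rfl) hmem

lemma not_summable_classSum_idealVonMangoldt_div [NeZero 𝔪] (c : Additive (RayClassGroup 𝔪)) :
    ¬ Summable fun n : ℕ =>
      classSum (𝔪 := 𝔪) (fun 𝔡 => idealVonMangoldt (𝔡 : Ideal (𝓞 K))) c n / n := by
  obtain ⟨κ, hκ, hcount⟩ := exists_hasExpDecay_rayCount 𝔪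
  obtain ⟨𝔭, h𝔭⟩ := exists_prime_mem_coprimeIdeals 𝔪
  have htwo := two_le_absNorm_of_prime h𝔭
  refine (isClassSystem_classSum 𝔪).not_summable isWeight_stepBump (fun c => ?_) hκ.ne'
    (htwo.trans (Nat.le_self_pow (orderOf_pos (rayClass 𝔪 𝔭)).ne' _))
    (Real.log_pos (Nat.one_lt_cast.2 htwo))
    (fun i hi => log_absNorm_le_classSum_idealVonMangoldt h𝔭 hi) c
  simp only [tsum_classSum_one_mul_stepBump]
  exact hcount c.toMul

lemma log_div_pow_le {x : ℝ} (hx : 2 ≤ x) (k : ℕ) :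
    Real.log x / x ^ (k + 2) ≤ 2 * ((x ^ (3 / 2 : ℝ))⁻¹ * (1 / 2) ^ k) := by
  have hx₀ : 0 < x := two_pos.trans_le hx
  have hlog : Real.log x ≤ 2 * x ^ (1 / 2 : ℝ) := by
    have := Real.log_le_rpow_div hx₀.le (one_half_pos (α := ℝ))
    linarith
  have hsq : x ^ 2 = x ^ (1 / 2 : ℝ) * x ^ (3 / 2 : ℝ) := by
    rw [← Real.rpow_add hx₀]
    norm_num
  calc Real.log x / x ^ (k + 2) ≤ 2 * x ^ (1 / 2 : ℝ) / x ^ (k + 2) := by gcongr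
    _ = 2 * ((x ^ (3 / 2 : ℝ))⁻¹ * x⁻¹ ^ k) := by
      rw [pow_add, hsq, inv_pow]
      field_simp
    _ ≤ 2 * ((x ^ (3 / 2 : ℝ))⁻¹ * (1 / 2) ^ k) := by
      rw [one_div]
      gcongr

variable (𝔪) in
lemma summable_indicator_higherPrimePowers : Summable ((higherPrimePowers 𝔪).indicator
    fun 𝔡 => idealVonMangoldt (𝔡 : Ideal (𝓞 K)) / Ideal.absNorm (𝔡 : Ideal (𝓞 K))) := by
  have hinj : Function.Injective
      fun x : {𝔭 : coprimeIdeals 𝔪 // Prime (𝔭 : Ideal (𝓞 K))} × ℕ => x.1.1 ^ (x.2 + 2) := by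
    rintro ⟨𝔭, k⟩ ⟨𝔮, l⟩ h
    obtain ⟨h𝔭𝔮, hkl⟩ := prime_pow_injective 𝔭.2 𝔮.2 (Nat.succ_ne_zero _) (congrArg Subtype.val h)
    exact Prod.ext (Subtype.ext (Subtype.ext h𝔭𝔮)) (Nat.add_right_cancel (m := 2) hkl)
  rw [higherPrimePowers, ← hinj.summable_iff fun 𝔡 h𝔡 => Set.indicator_of_notMem h𝔡 _]
  have hmajorant : Summable fun x : {𝔭 : coprimeIdeals 𝔪 // Prime (𝔭 : Ideal (𝓞 K))} × ℕ =>
      2 * (((Ideal.absNorm (x.1.1 : Ideal (𝓞 K)) : ℝ) ^ (3 / 2 : ℝ))⁻¹ * (1 / 2 : ℝ) ^ x.2) :=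
    (((summable_absNorm_rpow_inv 𝔪 (by norm_num)).comp_injective
      Subtype.val_injective).mul_of_nonneg summable_geometric_two
      (fun 𝔭 => inv_nonneg.2 (Real.rpow_nonneg (Nat.cast_nonneg _) _))
      fun k => pow_nonneg one_half_pos.le k).mul_left 2
  refine hmajorant.of_nonneg_of_le
    (fun x => Set.indicator_nonneg
      (fun 𝔡 _ => div_nonneg (idealVonMangoldt_nonneg _) (Nat.cast_nonneg _)) _) fun ⟨𝔭, k⟩ => ?_
  have hvM := idealVonMangoldt_prime_pow 𝔭.2 (Nat.succ_ne_zero (k + 1))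
  rw [Function.comp_apply, Set.indicator_of_mem (Set.mem_range_self _)]
  simp only [SubmonoidClass.coe_pow, map_pow, Nat.cast_pow]
  exact hvM ▸ log_div_pow_le (Nat.ofNat_le_cast.2 (two_le_absNorm_of_prime 𝔭.2)) k

/-- The prime powers of exponent at least two contribute a finite amount to the divergent von
Mangoldt sum of the class. -/
theorem infinite_primes_rayClass [NeZero 𝔪] (c : RayClassGroup 𝔪) :
    {𝔭 : coprimeIdeals 𝔪 | Prime (𝔭 : Ideal (𝓞 K)) ∧ rayClass 𝔪 𝔭 = c}.Infinite := by
  intro hfin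
  set P := {𝔭 : coprimeIdeals 𝔪 | Prime (𝔭 : Ideal (𝓞 K)) ∧ rayClass 𝔪 𝔭 = c}
  set f : coprimeIdeals 𝔪 → ℝ := fun 𝔡 =>
    idealVonMangoldt (𝔡 : Ideal (𝓞 K)) / Ideal.absNorm (𝔡 : Ideal (𝓞 K))
  have hf (𝔡) : 0 ≤ f 𝔡 := div_nonneg (idealVonMangoldt_nonneg _) (Nat.cast_nonneg _)
  have hsum : Summable fun 𝔡 => P.indicator f 𝔡 + (higherPrimePowers 𝔪).indicator f 𝔡 :=
    (summable_subtype_iff_indicator.1 (hfin.summable f)).add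
      (summable_indicator_higherPrimePowers 𝔪)
  apply not_summable_classSum_idealVonMangoldt_div (Additive.ofMul c)
  simp only [div_eq_mul_inv]
  refine (summable_classSum_mul _ (h := fun n => (n : ℝ)⁻¹) fun 𝔡 => hf 𝔡).2
    (hsum.of_nonneg_of_le (Set.indicator_nonneg fun 𝔡 _ => hf 𝔡) (Set.indicator_le' ?_ ?_))
  · intro 𝔡 h𝔡
    have hP : 0 ≤ P.indicator f 𝔡 := Set.indicator_nonneg (fun 𝔡 _ => hf 𝔡) _
    have hhigher : 0 ≤ (higherPrimePowers 𝔪).indicator f 𝔡 :=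
      Set.indicator_nonneg (fun 𝔡 _ => hf 𝔡) _
    change f 𝔡 ≤ _
    by_cases hpow : IsPrimePow (𝔡 : Ideal (𝓞 K))
    · obtain hprime | hmem := prime_or_mem_higherPrimePowers hpow
      · rw [Set.indicator_of_mem (show 𝔡 ∈ P from ⟨hprime, h𝔡⟩)]
        exact le_add_of_nonneg_right hhigher
      · rw [Set.indicator_of_mem hmem]
        exact le_add_of_nonneg_left hP
    · rw [show f 𝔡 = 0 by simp only [f, idealVonMangoldt, if_neg hpow, zero_div]]
      exact add_nonneg hP hhigher
  · exact fun 𝔡 _ => add_nonneg (Set.indicator_nonneg (fun 𝔡 _ => hf 𝔡) _)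
      (Set.indicator_nonneg (fun 𝔡 _ => hf 𝔡) _)

end PrimesInClasses

section Hensel

open Metric

/-- Hensel's lemma for the polynomial `x + x ^ 2 - a`, by contraction. -/
lemma exists_add_sq_eq {L : Type*} [NormedField L] [IsUltrametricDist L] [CompleteSpace L]
    {a : L} (ha : ‖a‖ < 1) : ∃ x : L, ‖x‖ ≤ ‖a‖ ∧ x + x ^ 2 = a := by
  have hmaps : Set.MapsTo (fun x : L => a - x ^ 2) (closedBall 0 ‖a‖) (closedBall 0 ‖a‖) := by
    intro x hx
    rw [mem_closedBall_zero_iff] at hx ⊢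
    have hmax := IsUltrametricDist.norm_add_le_max a (-(x ^ 2))
    rw [← sub_eq_add_neg, norm_neg, norm_pow] at hmax
    exact hmax.trans (max_le le_rfl (by nlinarith [norm_nonneg x, norm_nonneg a]))
  have hcontr : ContractingWith ‖a‖₊ (hmaps.restrict _ _ _) := by
    refine ⟨by exact_mod_cast ha, LipschitzWith.of_dist_le_mul ?_⟩
    rintro ⟨x, hx⟩ ⟨y, hy⟩
    rw [mem_closedBall_zero_iff] at hx hy
    rw [Subtype.dist_eq, Subtype.dist_eq, dist_eq_norm, dist_eq_norm]
    simp only [Set.MapsTo.val_restrict_apply, coe_nnnorm]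
    rw [show (a - x ^ 2) - (a - y ^ 2) = -(x + y) * (x - y) by ring, norm_mul, norm_neg]
    gcongr
    exact (IsUltrametricDist.norm_add_le_max x y).trans (max_le hx hy)
  obtain ⟨x, hx, hfix, -⟩ := ContractingWith.exists_fixedPoint'
    isClosed_closedBall.isComplete hmaps hcontr (x := 0)
    (mem_closedBall_self (norm_nonneg a)) (edist_ne_top _ _)
  exact ⟨x, mem_closedBall_zero_iff.1 hx, eq_sub_iff_add_eq.1 hfix.eq.symm⟩

variable {K : Type*} [Field K] [NumberField K] {𝔭 : HeightOneSpectrum (𝓞 K)}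

lemma valued_algebraMap_coe (𝔭 : HeightOneSpectrum (𝓞 K)) (r : 𝓞 K) :
    Valued.v (algebraMap K (𝔭.adicCompletion K) (r : K)) = 𝔭.intValuation r := by
  rw [HeightOneSpectrum.algebraMap_adicCompletion, Function.comp_apply, Algebra.algebraMap_self,
    RingHom.id_apply, HeightOneSpectrum.valuedAdicCompletion_eq_valuation',
    HeightOneSpectrum.valuation_of_algebraMap]

/-- If `x + x ^ 2 = a` then `(1 + 2 * x) ^ 2 = 1 + 4 * a`. -/
lemma isUnitSquareAt_of_eq_one_add_four_mul {α : K} {a : 𝔭.adicCompletion K}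
    (ha : Valued.v a < 1) (h : algebraMap K (𝔭.adicCompletion K) α = 1 + 4 * a) :
    IsUnitSquareAt K α 𝔭 := by
  have hultra : IsUltrametricDist (𝔭.adicCompletion K) := by
    open scoped Valued in exact inferInstance
  have hnorm : ‖a‖ < 1 := Valued.toNormedField.norm_lt_one_iff.2 ha
  obtain ⟨x, hx, hxa⟩ := exists_add_sq_eq hnorm
  have hvx : Valued.v x < 1 := Valued.toNormedField.norm_lt_one_iff.1 (hx.trans_lt hnorm)
  have hv2x : Valued.v (2 * x) < 1 := by
    rw [two_mul]
    exact Valuation.map_add_lt _ hvx hvx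
  have hunit : Valued.v (1 + 2 * x) = 1 := Valuation.map_one_add_of_lt _ hv2x
  refine ⟨(HeightOneSpectrum.adicCompletionIntegers.isUnit_iff_valued_eq_one
    (a := ⟨1 + 2 * x, hunit.le⟩).2 hunit).unit, ?_⟩
  rw [h, ← hxa]
  change (1 + 2 * x) ^ 2 = 1 + 4 * (x + x ^ 2)
  ring

lemma isUnitSquareAt_of_sub_mem {α : 𝓞 K} {e : ℕ} (hα : α - 1 ∈ 𝔭.asIdeal ^ e)
    (hfour : (4 : 𝓞 K) ∉ 𝔭.asIdeal ^ e) : IsUnitSquareAt K (α : K) 𝔭 := by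
  have hcharZero : CharZero (𝔭.adicCompletion K) :=
    charZero_of_injective_algebraMap (algebraMap K (𝔭.adicCompletion K)).injective
  have hlt : Valued.v (algebraMap K (𝔭.adicCompletion K) α - 1) <
      Valued.v (4 : 𝔭.adicCompletion K) := by
    rw [← HeightOneSpectrum.intValuation_le_pow_iff_mem] at hα hfour
    have hlt := hα.trans_lt (not_le.1 hfour)
    simpa only [← valued_algebraMap_coe, map_sub, map_one, map_ofNat] using hlt
  refine isUnitSquareAt_of_eq_one_add_four_mul
    (a := (algebraMap K (𝔭.adicCompletion K) α - 1) / 4) ?_ (by field_simp; ring)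
  rw [map_div₀]
  exact (div_lt_one₀ ((Valuation.pos_iff _).2 (OfNat.ofNat_ne_zero 4))).2 hlt

lemma IsUnitSquareAt.mul {α β : K} (hα : IsUnitSquareAt K α 𝔭) (hβ : IsUnitSquareAt K β 𝔭) :
    IsUnitSquareAt K (α * β) 𝔭 := by
  obtain ⟨y, hy⟩ := hα
  obtain ⟨z, hz⟩ := hβ
  exact ⟨y * z, by rw [map_mul, ← hy, ← hz, ← mul_pow]; rfl⟩

lemma IsUnitSquareAt.inv {α : K} (hα : IsUnitSquareAt K α 𝔭) : IsUnitSquareAt K α⁻¹ 𝔭 := by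
  obtain ⟨y, hy⟩ := hα
  refine ⟨y⁻¹, ?_⟩
  rw [map_inv₀, ← hy, ← inv_pow]
  exact congrArg (· ^ 2) (eq_inv_of_mul_eq_one_left (congrArg Subtype.val y.inv_mul))

end Hensel

section SquareModulus

variable {K : Type*} [Field K] [NumberField K]

variable (K) in
lemma absNorm_span_four_ne_zero : Ideal.absNorm (Ideal.span {(4 : 𝓞 K)}) ≠ 0 := by
  rw [Ne, Ideal.absNorm_eq_zero_iff, Ideal.span_singleton_eq_bot]
  exact OfNat.ofNat_ne_zero 4

/-- With `e = N(4)`, membership would give `2 ^ e ≤ N𝔭 ^ e ≤ e`. -/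
lemma four_notMem_pow (𝔭 : HeightOneSpectrum (𝓞 K)) :
    (4 : 𝓞 K) ∉ 𝔭.asIdeal ^ Ideal.absNorm (Ideal.span {(4 : 𝓞 K)}) := by
  intro hmem
  have hdvd := Ideal.absNorm_dvd_absNorm_of_le ((Ideal.span_singleton_le_iff_mem _).2 hmem)
  rw [map_pow] at hdvd
  refine (Nat.le_of_dvd (Nat.pos_of_ne_zero (absNorm_span_four_ne_zero K)) hdvd).not_gt
    (Nat.lt_two_pow_self.trans_le ?_)
  exact Nat.pow_le_pow_left (NumberField.HeightOneSpectrum.one_lt_absNorm 𝔭) _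

variable {Ξ : Finset (HeightOneSpectrum (𝓞 K))}

/-- A modulus supported on `Ξ` with `α ≡ 1` modulo it forcing `α` to be a square of a unit at every
`𝔭 ∈ Ξ`. The exponent `N(4)` exceeds the order of `4` at every prime. -/
def squareModulus (Ξ : Finset (HeightOneSpectrum (𝓞 K))) : Ideal (𝓞 K) :=
  ∏ 𝔭 ∈ Ξ, 𝔭.asIdeal ^ Ideal.absNorm (Ideal.span {(4 : 𝓞 K)})

instance : NeZero (squareModulus Ξ) :=
  ⟨Finset.prod_ne_zero_iff.2 fun 𝔭 _ => pow_ne_zero _ 𝔭.ne_bot⟩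

lemma squareModulus_le_pow {𝔭 : HeightOneSpectrum (𝓞 K)} (h𝔭 : 𝔭 ∈ Ξ) :
    squareModulus Ξ ≤ 𝔭.asIdeal ^ Ideal.absNorm (Ideal.span {(4 : 𝓞 K)}) :=
  Ideal.le_of_dvd (Finset.dvd_prod_of_mem _ h𝔭)

lemma isUnitSquareAt_of_sub_mem_squareModulus {α : 𝓞 K} (hα : α - 1 ∈ squareModulus Ξ)
    {𝔭 : HeightOneSpectrum (𝓞 K)} (h𝔭 : 𝔭 ∈ Ξ) : IsUnitSquareAt K (α : K) 𝔭 :=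
  isUnitSquareAt_of_sub_mem (squareModulus_le_pow h𝔭 hα) (four_notMem_pow 𝔭)

lemma mem_coprimeIdeals_squareModulus {𝔞 : Ideal (𝓞 K)} (h𝔞 : 𝔞 ≠ 0) :
    𝔞 ∈ coprimeIdeals (squareModulus Ξ) ↔ ∀ 𝔭 ∈ Ξ, ¬ 𝔞 ≤ 𝔭.asIdeal := by
  constructor
  · intro hmem 𝔭 h𝔭 hle
    refine 𝔭.isPrime.ne_top (top_le_iff.1 ((hmem.2.sup_eq).ge.trans (sup_le hle ?_)))
    exact (squareModulus_le_pow h𝔭).trans (Ideal.pow_le_self (absNorm_span_four_ne_zero K))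
  · refine fun h => ⟨h𝔞, IsCoprime.prod_right fun 𝔭 h𝔭 => IsCoprime.pow_right ?_⟩
    rw [Ideal.isCoprime_iff_sup_eq, sup_comm]
    exact 𝔭.isMaximal.1.2 _ (left_lt_sup.2 (h 𝔭 h𝔭))

end SquareModulus

section Signs

open InfinitePlace

variable {K : Type*} [Field K]

lemma isReal_ofRealHom_comp (σ : K →+* ℝ) :
    ComplexEmbedding.IsReal (Complex.ofRealHom.comp σ) := by
  rw [ComplexEmbedding.isReal_iff]
  ext x
  exact Complex.conj_ofReal (σ x)

/-- The real place of a real embedding. -/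
def realPlace (σ : K →+* ℝ) : {w : InfinitePlace K // IsReal w} :=
  ⟨InfinitePlace.mk (Complex.ofRealHom.comp σ), isReal_mk_iff.2 (isReal_ofRealHom_comp σ)⟩

lemma realPlace_apply (σ : K →+* ℝ) (x : K) : (realPlace σ).1 x = |σ x| :=
  Complex.norm_real (σ x)

lemma mixedEmbedding_fst_realPlace (σ : K →+* ℝ) (x : K) :
    (mixedEmbedding K x).1 (realPlace σ) = σ x := by
  apply Complex.ofReal_injective
  rw [mixedEmbedding.mixedEmbedding_apply_isReal, embedding_of_isReal_apply, realPlace,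
    embedding_mk_eq_of_isReal (isReal_ofRealHom_comp σ)]
  rfl

lemma realPlace_injective : Function.Injective (realPlace (K := K)) := fun σ τ h => by
  ext x
  rw [← mixedEmbedding_fst_realPlace, h, mixedEmbedding_fst_realPlace]

lemma InRay.pos_apply {𝔪 : Ideal (𝓞 K)} {α : 𝓞 K} (hα : InRay 𝔪 α) (σ : K →+* ℝ) :
    0 < σ (α : K) :=
  mixedEmbedding_fst_realPlace σ α ▸ hα.pos (realPlace σ)

variable [NumberField K]

lemma exists_forall_infinitePlace_sub_lt_one (t : InfinitePlace K → K) :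
    ∃ x : K, ∀ v : InfinitePlace K, v (x - t v) < 1 := by
  obtain ⟨x, hx⟩ := (InfinitePlace.denseRange_algebraMap_pi K).exists_dist_lt
    (fun v => (WithAbs.equiv v.1).symm (t v)) one_pos
  refine ⟨x, fun v => ?_⟩
  have hv := (dist_pi_lt_iff one_pos).1 hx v
  rwa [dist_comm, dist_eq_norm, WithAbs.norm_eq_apply_ofAbs] at hv

lemma exists_signs_field (T : Set (K →+* ℝ)) :
    ∃ x : K, x ≠ 0 ∧ (∀ σ ∈ T, σ x < 0) ∧ ∀ σ ∉ T, 0 < σ x := by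
  classical
  set t : InfinitePlace K → K := fun v => if ∃ σ ∈ T, (realPlace σ).1 = v then -1 else 1
  obtain ⟨x, hx⟩ := exists_forall_infinitePlace_sub_lt_one t
  have hσ (σ : K →+* ℝ) : |σ x - σ (t (realPlace σ).1)| < 1 := by
    rw [← map_sub, ← realPlace_apply]
    exact hx _
  refine ⟨x, ?_, fun σ hσT => ?_, fun σ hσT => ?_⟩
  · rintro rfl
    obtain ⟨v⟩ : Nonempty (InfinitePlace K) := inferInstance
    refine (hx v).ne ?_
    simp only [t, zero_sub]
    split_ifs
    · rw [neg_neg, map_one]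
    · rw [← InfinitePlace.norm_embedding_eq, map_neg, map_one, norm_neg, norm_one]
  · have habs := hσ σ
    rw [show t (realPlace σ).1 = -1 from if_pos ⟨σ, hσT, rfl⟩, map_neg, map_one] at habs
    linarith [(abs_lt.1 habs).2]
  · have hne : ¬ ∃ τ ∈ T, (realPlace τ).1 = (realPlace σ).1 := fun ⟨τ, hτ, h⟩ =>
      hσT (realPlace_injective (Subtype.ext h) ▸ hτ)
    have habs := hσ σ
    rw [show t (realPlace σ).1 = 1 from if_neg hne, map_one] at habs
    linarith [(abs_lt.1 habs).1]

/-- The denominator `b` of `x` is cleared by the totally positive factor `b ^ 2`. -/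
lemma exists_ringOfIntegers_mul_pos {x : K} (hx : x ≠ 0) :
    ∃ θ : 𝓞 K, θ ≠ 0 ∧ ∀ σ : K →+* ℝ, 0 < σ (θ : K) * σ x := by
  obtain ⟨a, b, hb, rfl⟩ := IsFractionRing.div_surjective (A := 𝓞 K) x
  obtain ⟨ha₀, hb₀⟩ := div_ne_zero_iff.1 hx
  refine ⟨a * b, mul_ne_zero (RingOfIntegers.coe_ne_zero_iff.1 ha₀) (nonZeroDivisors.ne_zero hb),
    fun σ => ?_⟩
  have hσb : σ b ≠ 0 := (map_ne_zero σ).2 hb₀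
  have hσa : 0 < σ a ^ 2 := sq_pos_of_ne_zero ((map_ne_zero σ).2 ha₀)
  simp only [map_mul, map_div₀]
  exact hσa.trans_eq (by field_simp)

lemma exists_mem_sub_one_mem_signs {𝔪 : Ideal (𝓞 K)} [NeZero 𝔪] {𝔞 : Ideal (𝓞 K)}
    (h𝔞 : 𝔞 ∈ coprimeIdeals 𝔪) (T : Set (K →+* ℝ)) : ∃ β ∈ 𝔞, β ≠ 0 ∧ β - 1 ∈ 𝔪 ∧
      (∀ σ ∈ T, σ (β : K) < 0) ∧ ∀ σ ∉ T, 0 < σ (β : K) := by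
  obtain ⟨x, hx, hneg, hpos⟩ := exists_signs_field T
  obtain ⟨θ, hθ, hθx⟩ := exists_ringOfIntegers_mul_pos hx
  obtain ⟨β, hβ𝔞, hβ, hβ𝔪, hβθ⟩ := exists_mem_sign h𝔞 hθ
  have hβx (σ : K →+* ℝ) : 0 < σ (β : K) * σ x := by
    have hσ := hβθ (realPlace σ)
    rw [mixedEmbedding_fst_realPlace, mixedEmbedding_fst_realPlace] at hσ
    have hθsq : 0 < σ (θ : K) ^ 2 :=
      sq_pos_of_ne_zero ((map_ne_zero σ).2 (RingOfIntegers.coe_ne_zero_iff.2 hθ))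
    refine pos_of_mul_pos_left (b := σ (θ : K) ^ 2) ?_ hθsq.le
    exact (mul_pos hσ (hθx σ)).trans_eq (by ring)
  exact ⟨β, hβ𝔞, hβ, hβ𝔪, fun σ hσ => neg_of_mul_pos_left (hβx σ) (hneg σ hσ).le,
    fun σ hσ => pos_of_mul_pos_left (hβx σ) (hpos σ hσ).le⟩

end Signs

section AuxiliaryPrime

variable {K : Type*} [Field K] [NumberField K]

lemma coeIdeal_eq_spanSingleton_div {α β : 𝓞 K} (hα : α ≠ 0) {𝔞 : Ideal (𝓞 K)}
    (h : Ideal.span {α} * 𝔞 = Ideal.span {β}) : (𝔞 : FractionalIdeal (𝓞 K)⁰ K) =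
      FractionalIdeal.spanSingleton (𝓞 K)⁰ ((β : K) / α) := by
  have hmk := (FractionalIdeal.mk'_mul_coeIdeal_eq_coeIdeal K (I := ⊤) (J := 𝔞) (x := β)
    (mem_nonZeroDivisors_of_ne_zero hα)).2 (by rw [Ideal.mul_top, h])
  rw [← hmk, IsFractionRing.mk'_eq_div, FractionalIdeal.coeIdeal_top, mul_one]

lemma exists_prime_notMem_mul_eq_span {𝔪 : Ideal (𝓞 K)} [NeZero 𝔪] {I : Ideal (𝓞 K)} {β : 𝓞 K}
    (hβI : β ∈ I) (hβ : β ≠ 0) (hβ𝔪 : β - 1 ∈ 𝔪) (S : Finset (HeightOneSpectrum (𝓞 K))) :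
    ∃ 𝔮 ∉ S, 𝔮.asIdeal ∈ coprimeIdeals 𝔪 ∧ ∃ α₁ β₁ : 𝓞 K, InRay 𝔪 α₁ ∧ InRay 𝔪 β₁ ∧
      Ideal.span {α₁} * (I * 𝔮.asIdeal) = Ideal.span {β * β₁} := by
  obtain ⟨𝔯, h𝔯⟩ := Ideal.dvd_iff_le.2 ((Ideal.span_singleton_le_iff_mem _).2 hβI)
  have h𝔯𝔪 : 𝔯 ∈ coprimeIdeals 𝔪 := mem_coprimeIdeals_of_mul_left (𝔞 := I) <| h𝔯 ▸
    ⟨mt Ideal.span_singleton_eq_bot.1 hβ, isCoprime_span_of_sub_mem hβ𝔪⟩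
  obtain ⟨⟨𝔮, h𝔮𝔪⟩, ⟨h𝔮, hclass⟩, h𝔮S⟩ :=
    (infinite_primes_rayClass (rayClass 𝔪 ⟨𝔯, h𝔯𝔪⟩)).exists_notMem_finite
      ((S.finite_toSet.image HeightOneSpectrum.asIdeal).preimage Subtype.val_injective.injOn)
  obtain ⟨α₁, β₁, hα₁, hβ₁, heq⟩ := rayClass_eq_iff.1 hclass
  refine ⟨⟨𝔮, Ideal.isPrime_of_prime h𝔮, h𝔮.ne_zero⟩, fun h => h𝔮S ⟨_, h, rfl⟩, h𝔮𝔪, α₁, β₁,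
    hα₁, hβ₁, ?_⟩
  calc Ideal.span {α₁} * (I * 𝔮) = I * (Ideal.span {α₁} * 𝔮) := mul_left_comm _ _ _
    _ = I * (Ideal.span {β₁} * 𝔯) := congrArg (I * ·) heq
    _ = I * 𝔯 * Ideal.span {β₁} := by rw [mul_comm (Ideal.span {β₁}), mul_assoc]
    _ = Ideal.span {β * β₁} := by rw [← h𝔯, Ideal.span_singleton_mul_span_singleton]

end AuxiliaryPrime

/-- Let `F` be a number field, `Ξf` a finite set of maximal ideals of `O_F`,
`Ξinf` a set of real embeddings of `F`, `S` a finite set of maximal ideals, and `I` a nonzero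
ideal of `O_F` not contained in any member of `Ξf`.  Then there exist a maximal ideal
`𝔮 ∉ S ∪ Ξf` and `α ∈ Fˣ` with `I·𝔮 = α·O_F`, `α` a square of a unit at every `𝔭 ∈ Ξf`,
`σ α < 0` for `σ ∈ Ξinf`, and `σ α > 0` for every real embedding `σ ∉ Ξinf`. -/
theorem exists_auxiliary_prime_and_generator
    (Ξf : Finset (HeightOneSpectrum (𝓞 F))) (Ξinf : Set (F →+* ℝ))
    (S : Finset (HeightOneSpectrum (𝓞 F)))
    (I : Ideal (𝓞 F)) (hI : I ≠ 0)
    (hIΞ : ∀ 𝔭 ∈ Ξf, ¬ I ≤ 𝔭.asIdeal) :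
    ∃ (𝔮 : HeightOneSpectrum (𝓞 F)) (α : F),
      𝔮 ∉ S ∧ 𝔮 ∉ Ξf ∧ α ≠ 0 ∧
      (↑(I * 𝔮.asIdeal) : FractionalIdeal (𝓞 F)⁰ F)
        = FractionalIdeal.spanSingleton (𝓞 F)⁰ α ∧
      (∀ 𝔭 ∈ Ξf, IsUnitSquareAt F α 𝔭) ∧
      (∀ σ : F →+* ℝ, σ ∈ Ξinf → σ α < 0) ∧
      (∀ σ : F →+* ℝ, σ ∉ Ξinf → 0 < σ α) := by
  obtain ⟨β, hβI, hβ, hβ𝔪, hneg, hpos⟩ :=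
    exists_mem_sub_one_mem_signs ((mem_coprimeIdeals_squareModulus hI).2 hIΞ) Ξinf
  obtain ⟨𝔮, h𝔮S, h𝔮𝔪, α₁, β₁, hα₁, hβ₁, heq⟩ := exists_prime_notMem_mul_eq_span hβI hβ hβ𝔪 S
  have hray (σ : F →+* ℝ) : 0 < σ ((β₁ : F) / α₁) :=
    (div_pos (hβ₁.pos_apply σ) (hα₁.pos_apply σ)).trans_eq (map_div₀ σ _ _).symm
  have hsq {γ : 𝓞 F} (hγ : γ - 1 ∈ squareModulus Ξf) {𝔭} (h𝔭 : 𝔭 ∈ Ξf) :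
      IsUnitSquareAt F (γ : F) 𝔭 := isUnitSquareAt_of_sub_mem_squareModulus hγ h𝔭
  refine ⟨𝔮, β * (β₁ / α₁), h𝔮S, fun h𝔮 => ?_, ?_, ?_, fun 𝔭 h𝔭 => ?_, fun σ hσ => ?_,
    fun σ hσ => ?_⟩
  · exact (mem_coprimeIdeals_squareModulus 𝔮.ne_bot).1 h𝔮𝔪 𝔮 h𝔮 le_rfl
  · simp [hβ, hα₁.ne_zero, hβ₁.ne_zero]
  · rw [← mul_div_assoc, ← map_mul]
    exact coeIdeal_eq_spanSingleton_div hα₁.ne_zero heq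
  · rw [div_eq_mul_inv]
    exact (hsq hβ𝔪 h𝔭).mul ((hsq hβ₁.sub_mem h𝔭).mul (hsq hα₁.sub_mem h𝔭).inv)
  · rw [map_mul]
    exact mul_neg_of_neg_of_pos (hneg σ hσ) (hray σ)
  · rw [map_mul]
    exact mul_pos (hpos σ hσ) (hray σ)

end PrincipalizationLemma
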